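/- arXiv:2102.00480 — 2 statements merged into one kernel-verified Lean document; each statement's English description precedes it below -/
import Mathlib

section
/- In the orthogonal case, SX^j is a single SG^j(E)-orbit if and only if either n = 1, or n = 2 and det j ∈ -F^{×2}. -/
open Matrix

namespace OrthPair

variable {E : Type} [Field E]

/-- `g ∈ G^j(E) = {g ∈ GL_n(E) : gᵀ j g = j}` (orthogonal case). -/
def Gj {n : ℕ} (j g : Matrix (Fin n) (Fin n) E) : Prop :=
  IsUnit g ∧ gᵀ * j * g = j

/-- `x ∈ X^j = {x ∈ G^j(E) : x·σ(x) = 1}`. -/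
def Xj {n : ℕ} (σ : E → E) (j x : Matrix (Fin n) (Fin n) E) : Prop :=
  Gj j x ∧ x * x.map σ = 1

/-- `x ∈ SX^j = X^j ∩ SL_n(E)`. -/
def SXj {n : ℕ} (σ : E → E) (j x : Matrix (Fin n) (Fin n) E) : Prop :=
  Xj σ j x ∧ x.det = 1

/-- `x'` lies in the `SG^j(E) = G^j(E) ∩ SL_n(E)`-orbit of `x` for twisted conjugation
`g·x = g x σ(g)⁻¹`. -/
def orbSG {n : ℕ} (σ : E → E) (j x x' : Matrix (Fin n) (Fin n) E) : Prop :=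
  ∃ g, Gj j g ∧ g.det = 1 ∧ x' = g * x * (g.map σ)⁻¹

end OrthPair

open OrthPair


theorem aux_relIndex_ne {L : Type*} [AddCommGroup L] [TopologicalSpace L] [IsTopologicalAddGroup L]
    (A B : AddSubgroup L) (hA : IsCompact (A : Set L)) (hB : IsOpen (B : Set L)) :
    B.relIndex A ≠ 0 := by
  have : CompactSpace A := isCompact_iff_compactSpace.mp hA
  have h2 : IsOpen ((B.addSubgroupOf A : AddSubgroup A) : Set A) :=
    hB.preimage continuous_subtype_val
  have := AddSubgroup.quotient_finite_of_isOpen _ h2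
  exact (AddSubgroup.finiteIndex_of_finite_quotient (H := B.addSubgroupOf A)).index_ne_zero

theorem aux_comm1 {L : Type*} [AddCommGroup L] 
    (m : L →+ L) (hm : Function.Injective m) (A C : AddSubgroup L) (hCA : C ≤ A)
    (h0 : C.relIndex A ≠ 0)
    (hA' : A.map m ≤ A) (hC' : C.map m ≤ C) :
    (A.map m).relIndex A = (C.map m).relIndex C := by
  have h1 := AddSubgroup.relIndex_mul_relIndex (C.map m) C A hC' hCA
  have h2 := AddSubgroup.relIndex_mul_relIndex (C.map m) (A.map m) A (AddSubgroup.map_mono hCA) hA'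
  rw [AddSubgroup.relIndex_map_map_of_injective _ _ hm] at h2
  have : C.relIndex A * (A.map m).relIndex A = C.relIndex A * (C.map m).relIndex C := by
    rw [h2, ← h1, mul_comm]
  exact Nat.eq_of_mul_eq_mul_left (Nat.pos_of_ne_zero h0) this

theorem aux_comm {L : Type*} [AddCommGroup L] [TopologicalSpace L] [IsTopologicalAddGroup L] 
    (m : L →+ L) (hm : Function.Injective m) (A B : AddSubgroup L)
    (hA : IsCompact (A : Set L)) (hAo : IsOpen (A : Set L))
    (hB : IsCompact (B : Set L)) (hBo : IsOpen (B : Set L))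
    (hA' : A.map m ≤ A) (hB' : B.map m ≤ B) :
    (A.map m).relIndex A = (B.map m).relIndex B := by
  have hC : (A ⊓ B).map m ≤ A ⊓ B :=
    le_inf ((AddSubgroup.map_mono inf_le_left).trans hA') ((AddSubgroup.map_mono inf_le_right).trans hB')
  have ho : IsOpen ((A ⊓ B : AddSubgroup L) : Set L) := hAo.inter hBo
  rw [aux_comm1 m hm A (A ⊓ B) inf_le_left (aux_relIndex_ne _ _ hA ho) hA' hC,
    aux_comm1 m hm B (A ⊓ B) inf_le_right (aux_relIndex_ne _ _ hB ho) hB' hC]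

theorem aux_sqindex {A : Type*} [CommGroup A] (B : Subgroup A) (hB : B.index ≠ 0)
    (hT : B ⊓ (powMonoidHom 2 : A →* A).ker = ⊥) (hc : Nat.card (powMonoidHom 2 : A →* A).ker = 2) :
    (powMonoidHom 2 : A →* A).range.index = 2 * (B.map (powMonoidHom 2)).relIndex B := by
  set f : A →* A := powMonoidHom 2
  have hle : B.map f ≤ B := by
    rintro _ ⟨x, hx, rfl⟩
    exact B.pow_mem hx 2
  have h1 := Subgroup.index_map B f
  have h2 := Subgroup.relIndex_mul_index hle
  have h3 := Subgroup.relIndex_mul_index (le_sup_left : B ≤ B ⊔ f.ker)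
  rw [Subgroup.relIndex_sup_left, ← Subgroup.inf_relIndex_right, hT, Subgroup.relIndex_bot_left, hc] at h3
  rw [← h2, ← h3] at h1
  have h4 : (B ⊔ f.ker).index ≠ 0 := fun h => hB (by rw [← h3, h, mul_zero])
  apply Nat.eq_of_mul_eq_mul_left (Nat.pos_of_ne_zero h4)
  rw [← h1]; ring

noncomputable def c2 (p : ℕ) [Fact p.Prime] : ℕ := (nsmulAddMonoidHom 2 : ℤ_[p] →+ ℤ_[p]).range.index

theorem c2_ne (p : ℕ) [Fact p.Prime] : c2 p ≠ 0 := by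
  have ho : IsOpen (((nsmulAddMonoidHom 2 : ℤ_[p] →+ ℤ_[p]).range : AddSubgroup ℤ_[p]) : Set ℤ_[p]) := by
    apply AddSubgroup.isOpen_of_mem_nhds (g := 0)
    have h2 : (0:ℝ) < ‖(2 : ℚ_[p])‖ := by simp
    filter_upwards [Metric.closedBall_mem_nhds (0 : ℤ_[p]) h2] with x hx
    have hx' : ‖(x : ℚ_[p])‖ ≤ ‖(2 : ℚ_[p])‖ := by simpa using hx
    have hy : ‖(x : ℚ_[p]) / 2‖ ≤ 1 := by rw [norm_div]; exact div_le_one_of_le₀ hx' h2.le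
    obtain ⟨y, hy'⟩ : ∃ y : ℤ_[p], (y : ℚ_[p]) = (x : ℚ_[p]) / 2 := ⟨⟨_, hy⟩, rfl⟩
    refine ⟨y, ?_⟩
    apply Subtype.ext
    change ((2 • y : ℤ_[p]) : ℚ_[p]) = x
    rw [two_nsmul, PadicInt.coe_add, hy']
    ring
  have := aux_relIndex_ne (⊤ : AddSubgroup ℤ_[p]) _ isCompact_univ ho
  rwa [AddSubgroup.relIndex_top_right] at this

theorem aux_lattice (p : ℕ) [Fact p.Prime] {L : Type*} [NormedField L] [NormedAlgebra ℚ_[p] L]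
    [FiniteDimensional ℚ_[p] L] :
    ∃ A : AddSubgroup L, IsCompact (A : Set L) ∧ IsOpen (A : Set L) ∧
      A.map (nsmulAddMonoidHom 2) ≤ A ∧ (A.map (nsmulAddMonoidHom 2)).relIndex A =
        c2 p ^ Module.finrank ℚ_[p] L := by
  set d := Module.finrank ℚ_[p] L with hd
  have e : (Fin d → ℚ_[p]) ≃L[ℚ_[p]] L := ContinuousLinearEquiv.ofFinrankEq (by simp [hd])
  let co : (Fin d → ℤ_[p]) →+ (Fin d → ℚ_[p]) :=
    { toFun := fun x i => x i, map_zero' := by ext; simp, map_add' := by intros; ext; simp }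
  let ψ : (Fin d → ℤ_[p]) →+ L := (e.toLinearEquiv.toAddEquiv.toAddMonoidHom).comp co
  have hψ : Function.Injective ψ := by
    intro x y h
    have : co x = co y := e.injective h
    funext i
    exact Subtype.ext (congrFun this i)
  have hcc : Continuous ψ := by
    have : Continuous co := continuous_pi fun i => continuous_subtype_val.comp (continuous_apply i)
    exact e.continuous.comp this
  refine ⟨ψ.range, ?_, ?_, ?_, ?_⟩
  · exact isCompact_range hcc
  · have : ((ψ.range : AddSubgroup L) : Set L) = e.symm ⁻¹' (Set.pi Set.univ fun _ => Metric.closedBall 0 1) := by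
      ext x
      constructor
      · rintro ⟨y, rfl⟩ i _
        have : e.symm (ψ y) = co y := e.symm_apply_apply _
        rw [this]
        rw [mem_closedBall_zero_iff]
        exact (y i).2
      · intro h
        refine ⟨fun i => ⟨e.symm x i, by simpa using h i trivial⟩, ?_⟩
        exact e.apply_symm_apply x
    rw [this]
    refine IsOpen.preimage e.symm.continuous (isOpen_set_pi Set.finite_univ fun i _ => ?_)
    exact IsUltrametricDist.isOpen_closedBall _ one_ne_zero
  · rintro _ ⟨_, ⟨y, rfl⟩, rfl⟩
    exact ⟨2 • y, map_nsmul ψ 2 y⟩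
  · have h1 : ψ.range = (⊤ : AddSubgroup _).map ψ := AddMonoidHom.range_eq_map ψ
    have h2 : ψ.range.map (nsmulAddMonoidHom 2) = 
       (AddSubgroup.pi Set.univ (fun _ : Fin d => (nsmulAddMonoidHom 2 : ℤ_[p] →+ ℤ_[p]).range)).map ψ := by
      ext x
      constructor
      · rintro ⟨_, ⟨y, rfl⟩, rfl⟩
        exact ⟨2 • y, fun i _ => ⟨y i, rfl⟩, map_nsmul ψ 2 y⟩
      · rintro ⟨y, hy, rfl⟩
        choose z hz using fun i => hy i trivial
        refine ⟨ψ z, ⟨z, rfl⟩, ?_⟩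
        have : y = 2 • z := by ext i; rw [← hz i]; rfl
        rw [this]; exact (map_nsmul ψ 2 z).symm
    rw [h2, h1, AddSubgroup.relIndex_map_map_of_injective _ _ hψ, AddSubgroup.relIndex_top_right,
      AddSubgroup.index_pi]
    simp [c2]

section mult
variable {L : Type*} [NormedField L] [IsUltrametricDist L]

theorem norm_eq_one_of_near {r : ℝ} (hr : r < 1) {u : L} (h : ‖u - 1‖ ≤ r) : ‖u‖ = 1 := by
  have := IsUltrametricDist.norm_add_eq_max_of_norm_ne_norm (x := u - 1) (y := 1)
    (by rw [norm_one]; exact (h.trans_lt hr).ne)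
  rw [sub_add_cancel, norm_one, max_eq_right (h.trans hr.le)] at this
  exact this

def Vs (L : Type*) [NormedField L] [IsUltrametricDist L] (r : ℝ) (h0 : 0 < r) (hr : r < 1) : Subgroup Lˣ where
  carrier := {u | ‖(u : L) - 1‖ ≤ r}
  one_mem' := by simp [h0.le]
  mul_mem' := by
    intro a b ha hb
    have : ((a * b : Lˣ) : L) - 1 = a * (b - 1) + (a - 1) := by push_cast; ring
    simp only [Set.mem_ofPred_eq] at *
    rw [this]
    refine (IsUltrametricDist.norm_add_le_max _ _).trans (max_le ?_ ha)
    rw [norm_mul, norm_eq_one_of_near hr ha, one_mul]; exact hb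
  inv_mem' := by
    intro a ha
    simp only [Set.mem_ofPred_eq] at *
    have : ((a⁻¹ : Lˣ) : L) - 1 = - ((a : L)⁻¹ * (a - 1)) := by push_cast; field_simp; ring
    rw [this, norm_neg, norm_mul, norm_inv, norm_eq_one_of_near hr ha]; simpa using ha

theorem mem_Vs {r : ℝ} {h0 : 0 < r} {hr : r < 1} {u : Lˣ} : u ∈ Vs L r h0 hr ↔ ‖(u : L) - 1‖ ≤ r := Iff.rfl

def Os (L : Type*) [NormedField L] [IsUltrametricDist L] (r : ℝ) (h0 : 0 < r) : AddSubgroup L where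
  carrier := {u | ‖u‖ ≤ r}
  zero_mem' := by simp [h0.le]
  add_mem' := by
    intro a b ha hb
    exact (IsUltrametricDist.norm_add_le_max _ _).trans (max_le ha hb)
  neg_mem' := by
    intro a ha
    simpa using ha

theorem mem_Os {r : ℝ} {h0 : 0 < r} {u : L} : u ∈ Os L r h0 ↔ ‖u‖ ≤ r := Iff.rfl

theorem hensel_sq [CompleteSpace L] {r : ℝ} (h0 : 0 < r) (h2 : r < ‖(2 : L)‖) {s : L} (hs : ‖s‖ ≤ r) :
    ∃ t : L, ‖t‖ ≤ r ∧ t = s - t ^ 2 / 2 := by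
  have hp : 0 < ‖(2:L)‖ := h0.trans h2
  let f : L → L := fun t => s - t ^ 2 / 2
  have hm : Set.MapsTo f (Metric.closedBall 0 r) (Metric.closedBall 0 r) := by
    intro t ht
    simp only [Metric.mem_closedBall, dist_zero_right] at *
    simp only [f, sub_eq_add_neg]
    refine (IsUltrametricDist.norm_add_le_max _ _).trans (max_le hs ?_)
    rw [norm_neg, norm_div, norm_pow, div_le_iff₀ hp]
    nlinarith [norm_nonneg t]
  have hK : r / ‖(2:L)‖ < 1 := by rw [div_lt_one hp]; exact h2
  have hc : ContractingWith ⟨r / ‖(2:L)‖, by positivity⟩ (hm.restrict f _ _) := by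
    refine ⟨by exact_mod_cast hK, LipschitzWith.of_dist_le_mul ?_⟩
    rintro ⟨x, hx⟩ ⟨y, hy⟩
    simp only [Metric.mem_closedBall, dist_zero_right] at hx hy
    change dist (f x) (f y) ≤ r / ‖(2:L)‖ * dist x y
    rw [dist_eq_norm, dist_eq_norm]
    have : f x - f y = - ((x + y) * (x - y) / 2) := by simp only [f]; ring
    rw [this, norm_neg, norm_div, norm_mul, div_mul_eq_mul_div]
    gcongr
    exact (IsUltrametricDist.norm_add_le_max _ _).trans (max_le hx hy)
  obtain ⟨y, hy, hy2, -⟩ := ContractingWith.exists_fixedPoint' (Metric.isClosed_closedBall.isComplete) hm hc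
    (x := 0) (by simp [h0.le]) (edist_ne_top _ _)
  exact ⟨y, by simpa using hy, hy2.symm⟩

theorem Vs_map [CompleteSpace L] {r : ℝ} (h0 : 0 < r) (h2 : r < ‖(2 : L)‖) (hr : r < 1) (h0' : 0 < ‖(2:L)‖ * r)
    (hr' : ‖(2 : L)‖ * r < 1) :
    (Vs L r h0 hr).map (powMonoidHom 2) = Vs L (‖(2:L)‖ * r) h0' hr' := by
  have hp : 0 < ‖(2:L)‖ := h0.trans h2
  have hp2 : (2 : L) ≠ 0 := norm_pos_iff.mp hp
  ext z
  constructor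
  · rintro ⟨u, hu, rfl⟩
    have hu : ‖(u : L) - 1‖ ≤ r := hu
    rw [mem_Vs]
    have : (((powMonoidHom 2) u : Lˣ) : L) - 1 = 2 * ((u:L) - 1) + ((u:L) - 1) ^ 2 := by
      simp [powMonoidHom]; ring
    rw [this]
    refine (IsUltrametricDist.norm_add_le_max _ _).trans (max_le ?_ ?_)
    · rw [norm_mul]; gcongr
    · rw [norm_pow]; nlinarith [norm_nonneg ((u:L)-1)]
  · intro hz
    rw [mem_Vs] at hz
    obtain ⟨t, ht, hts⟩ := hensel_sq h0 h2 (s := ((z:L) - 1) / 2)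
      (by rw [norm_div, div_le_iff₀ hp, mul_comm]; exact hz)
    have h1 : ‖(1 + t) - 1‖ ≤ r := by simpa using ht
    have hne : (1 + t) ≠ 0 := by
      rw [← norm_pos_iff, norm_eq_one_of_near hr h1]; norm_num
    refine ⟨Units.mk0 (1 + t) hne, h1, ?_⟩
    ext
    have h3 : 2 * t = (z : L) - 1 - t ^ 2 := by
      have := congrArg (fun x => 2 * x) hts
      exact this.trans (by field_simp)
    simp [powMonoidHom]
    linear_combination h3

theorem Vs_relIndex {r : ℝ} (h0 : 0 < r) (h2 : (2 : L) ≠ 0) (hr : r < 1) (h0' : 0 < ‖(2:L)‖ * r)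
    (hr' : ‖(2 : L)‖ * r < 1) :
    (Vs L (‖(2:L)‖ * r) h0' hr').relIndex (Vs L r h0 hr) =
     ((Os L r h0).map (nsmulAddMonoidHom 2)).relIndex (Os L r h0) := by
  unfold Subgroup.relIndex AddSubgroup.relIndex Subgroup.index AddSubgroup.index
  let e : (Vs L r h0 hr) ≃ (Os L r h0) := 
    { toFun := fun u => ⟨(u : Lˣ) - 1, u.2⟩
      invFun := fun x => ⟨Units.mk0 (1 + (x : L)) (by
        rw [← norm_pos_iff, norm_eq_one_of_near (u := 1 + (x : L)) hr (by rw [add_sub_cancel_left]; exact x.2)]; norm_num), by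
          rw [mem_Vs, Units.val_mk0, add_sub_cancel_left]; exact x.2⟩
      left_inv := by intro u; ext; simp
      right_inv := by intro u; ext; simp }
  apply Nat.card_congr
  refine Quotient.congr e ?_
  intro a b
  rw [QuotientGroup.leftRel_apply, QuotientAddGroup.leftRel_apply, Subgroup.mem_subgroupOf,
    AddSubgroup.mem_addSubgroupOf]
  have ha : ‖((a : Lˣ) : L)‖ = 1 := norm_eq_one_of_near hr a.2
  have h1 : ((a⁻¹ * b : Vs L r h0 hr) : Lˣ) ∈ Vs L (‖(2:L)‖ * r) h0' hr' ↔ ‖((b : Lˣ) : L) - (a : Lˣ)‖ ≤ ‖(2:L)‖ * r := by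
    rw [mem_Vs]
    have : (((a⁻¹ * b : Vs L r h0 hr) : Lˣ) : L) - 1 = ((a : Lˣ) : L)⁻¹ * ((b : Lˣ) - (a : Lˣ)) := by
      push_cast; field_simp
    rw [this, norm_mul, norm_inv, ha]; simp
  rw [h1]
  have h3 : (((-e a + e b) : Os L r h0) : L) = ((b : Lˣ) : L) - (a : Lˣ) := by
    simp [e]
  rw [h3]
  constructor
  · intro h
    refine ⟨(((b : Lˣ) : L) - (a : Lˣ)) / 2, ?_, by simp [nsmulAddMonoidHom]; try field_simp⟩
    change ‖_‖ ≤ r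
    rw [norm_div, div_le_iff₀ (norm_pos_iff.mpr h2), mul_comm]; exact h
  · rintro ⟨x, hx, hx2⟩
    rw [← hx2]
    have hx : ‖x‖ ≤ r := hx
    simp [nsmulAddMonoidHom]
    gcongr

end mult

theorem card_sq_ker (L : Type*) [Field L] (h2 : (2 : L) ≠ 0) :
    Nat.card (powMonoidHom 2 : Lˣ →* Lˣ).ker = 2 := by
  have h : (((powMonoidHom 2 : Lˣ →* Lˣ).ker : Subgroup Lˣ) : Set Lˣ) = {1, -1} := by
    ext u
    simp only [SetLike.mem_coe, MonoidHom.mem_ker, powMonoidHom_apply, Set.mem_insert_iff,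
      Set.mem_singleton_iff]
    rw [← Units.val_inj, Units.val_pow_eq_pow_val, Units.val_one, sq_eq_one_iff, ← Units.val_inj, ← Units.val_inj]
    simp
  have h3 : Nat.card (powMonoidHom 2 : Lˣ →* Lˣ).ker = Set.ncard ({1, -1} : Set Lˣ) := by
    rw [← h]; rfl
  rw [h3, Set.ncard_pair]
  intro h
  have := congrArg Units.val h
  simp at this
  apply h2
  linear_combination this

theorem sq_index_normed (p : ℕ) [Fact p.Prime] {L : Type*} [NormedField L] [IsUltrametricDist L]
    [NormedAlgebra ℚ_[p] L] [FiniteDimensional ℚ_[p] L] :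
    (powMonoidHom 2 : Lˣ →* Lˣ).range.index = 4 * c2 p ^ Module.finrank ℚ_[p] L := by
  have hprop : ProperSpace L := FiniteDimensional.proper ℚ_[p] L
  have hp1 : (1 : ℝ) < p := by exact_mod_cast (Fact.out : p.Prime).one_lt
  have hp0 : (0 : ℝ) < p := by linarith
  have hnorm2 : ‖(2 : L)‖ = ‖(2 : ℚ_[p])‖ := by
    rw [← norm_algebraMap' L (2 : ℚ_[p]), map_ofNat]
  have hnormp : ‖(p : L)‖ = (p : ℝ)⁻¹ := by
    have := norm_algebraMap' L (p : ℚ_[p])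
    rw [Padic.norm_p] at this
    rw [← this]; simp
  have h2pos : 0 < ‖(2 : L)‖ := by rw [hnorm2]; simp
  have h2ne : (2 : L) ≠ 0 := norm_pos_iff.mp h2pos
  have h2le : ‖(2 : L)‖ ≤ 1 := by
    rw [hnorm2]; exact_mod_cast Padic.norm_int_le_one (p := p) 2
  have hpinv : (p : ℝ)⁻¹ < 1 := inv_lt_one_of_one_lt₀ hp1
  have hpinv0 : 0 < (p : ℝ)⁻¹ := by positivity
  obtain ⟨r, h0, h2, hr⟩ : ∃ r : ℝ, 0 < r ∧ r < ‖(2 : L)‖ ∧ r < 1 :=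
    ⟨‖(2 : L)‖ / 2, by positivity, by linarith, by linarith⟩
  have h0' : 0 < ‖(2 : L)‖ * r := by positivity
  have hr' : ‖(2 : L)‖ * r < 1 := by nlinarith
  have hpL : (p : L) ≠ 0 := by rw [← norm_pos_iff, hnormp]; exact hpinv0
  set P : Lˣ := Units.mk0 (p : L) hpL with hP
  have hPn : ∀ k : ℤ, ‖((P ^ k : Lˣ) : L)‖ = (p : ℝ) ^ (-k) := by
    intro k; rw [Units.val_zpow_eq_zpow_val, norm_zpow, hP, Units.val_mk0, hnormp, _root_.inv_zpow']
  have hPk : ∀ k : ℤ, ‖((P ^ k : Lˣ) : L)‖ = 1 → k = 0 := by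
    intro k hk
    rw [hPn, zpow_eq_one_iff_right₀ hp0.le hp1.ne'] at hk
    omega
  set V := Vs L r h0 hr with hV
  set V2 := Vs L (‖(2 : L)‖ * r) h0' hr' with hV2
  have hVn : ∀ v ∈ V, ‖(v : L)‖ = 1 := fun v hv => norm_eq_one_of_near hr hv
  have hVV : V2 ≤ V := by
    intro v hv
    rw [hV, mem_Vs]; rw [hV2, mem_Vs] at hv
    nlinarith
  set Z := Subgroup.zpowers P
  set Z2 := Subgroup.zpowers (P ^ 2)
  have hZZ : Z2 ≤ Z := by
    rw [Subgroup.zpowers_le]; exact Subgroup.pow_mem _ (Subgroup.mem_zpowers P) 2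
  have hmap : (V ⊔ Z).map (powMonoidHom 2) = V2 ⊔ Z2 := by
    rw [Subgroup.map_sup, hV, Vs_map h0 h2 hr h0' hr', MonoidHom.map_zpowers]; rfl
  have e1 : (V2 ⊔ Z2).relIndex (V ⊔ Z2) = V2.relIndex V := by
    have : V ⊔ Z2 = V ⊔ (V2 ⊔ Z2) := by rw [← sup_assoc, sup_eq_left.mpr hVV]
    rw [this, Subgroup.relIndex_sup_right, ← Subgroup.inf_relIndex_right]
    congr 1
    apply le_antisymm
    · rintro x ⟨hx, hxV⟩
      obtain ⟨v, hv, z, hz, rfl⟩ := Subgroup.mem_sup.mp hx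
      obtain ⟨k, rfl⟩ := Subgroup.mem_zpowers_iff.mp (hZZ hz)
      have h3 := hVn _ hxV
      rw [Units.val_mul, norm_mul, hVn v (hVV hv), one_mul] at h3
      have := hPk k h3
      subst this
      simpa using hv
    · exact le_inf le_sup_left hVV
  have hev : ∀ k : ℤ, P ^ k ∈ V ⊔ Z2 ↔ Even k := by
    intro k
    constructor
    · intro h
      obtain ⟨v, hv, z, hz, hvz⟩ := Subgroup.mem_sup.mp h
      obtain ⟨l, rfl⟩ := Subgroup.mem_zpowers_iff.mp hz
      have h4 : v = P ^ (k - 2 * l) := by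
        rw [_root_.zpow_sub, _root_.zpow_mul, ← hvz]; simp
      have := hPk _ (h4 ▸ hVn v hv)
      exact ⟨l, by omega⟩
    · rintro ⟨l, rfl⟩
      apply Subgroup.mem_sup_right
      refine ⟨l, ?_⟩
      simp only
      rw [← two_mul, _root_.zpow_mul]; rfl
  have e2 : (V ⊔ Z2).relIndex (V ⊔ Z) = 2 := by
    have : V ⊔ Z = Z ⊔ (V ⊔ Z2) := by
      rw [sup_comm V Z2, ← sup_assoc, sup_eq_left.mpr hZZ, sup_comm]
    rw [this, Subgroup.relIndex_sup_right, Subgroup.relIndex_eq_two_iff]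
    refine ⟨P, Subgroup.mem_zpowers P, ?_⟩
    rintro _ ⟨k, rfl⟩
    simp only
    rw [← _root_.zpow_add_one, hev, hev, Int.even_add_one]
    by_cases hk : Even k <;> simp [Xor, hk]
  have e3 : (V2 ⊔ Z2).relIndex (V ⊔ Z) = V2.relIndex V * 2 := by
    rw [← e1, ← e2, Subgroup.relIndex_mul_relIndex]
    · exact sup_le_sup_right hVV _
    · exact sup_le_sup_left hZZ _
  have e4 : V2.relIndex V = c2 p ^ Module.finrank ℚ_[p] L := by
    rw [hV, hV2, Vs_relIndex h0 h2ne hr h0' hr']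
    obtain ⟨A, hA1, hA2, hA3, hA4⟩ := aux_lattice p (L := L)
    rw [← hA4]
    apply aux_comm
    · intro x y hxy
      have : (2 : ℕ) • x = (2 : ℕ) • y := hxy
      simpa [two_nsmul, ← two_mul, h2ne] using this
    · convert isCompact_closedBall (0 : L) r using 1
      ext; simp [mem_Os]
    · convert IsUltrametricDist.isOpen_closedBall (0 : L) h0.ne' using 1
      ext; simp [mem_Os]
    · exact hA1
    · exact hA2
    · rintro _ ⟨x, hx, rfl⟩
      exact AddSubgroup.nsmul_mem _ hx 2
    · exact hA3
  have hfin : (V ⊔ Z).index ≠ 0 := by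
    have hK : IsCompact (Metric.closedBall (0 : L) 1 \ Metric.ball 0 (p : ℝ)⁻¹) :=
      (isCompact_closedBall 0 1).diff Metric.isOpen_ball
    have hK0 : ∀ x ∈ (Metric.closedBall (0 : L) 1 \ Metric.ball 0 (p : ℝ)⁻¹), 0 < ‖x‖ := by
      rintro x ⟨-, hx⟩
      simp at hx
      linarith
    obtain ⟨t, ht, hcov⟩ := hK.elim_nhds_subcover (fun x => Metric.closedBall x (‖x‖ * r))
      (fun x hx => Metric.closedBall_mem_nhds x (mul_pos (hK0 x hx) h0))
    let q : t → Lˣ ⧸ (V ⊔ Z) := fun x => 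
      QuotientGroup.mk (Units.mk0 (x : L) (norm_pos_iff.mp (hK0 _ (ht _ x.2))))
    have hq : Function.Surjective q := by
      intro y
      obtain ⟨u, rfl⟩ := QuotientGroup.mk_surjective y
      obtain ⟨n, hn1, hn2⟩ := exists_mem_Ioc_zpow (x := ‖(u : L)‖) (norm_pos_iff.mpr u.ne_zero) hp1
      set w : Lˣ := u * P ^ (n + 1) with hw
      have hwn : ‖(w : L)‖ = ‖(u : L)‖ * (p : ℝ) ^ (-(n + 1)) := by
        rw [hw, Units.val_mul, norm_mul, hPn]
      have hwK : (w : L) ∈ (Metric.closedBall (0 : L) 1 \ Metric.ball 0 (p : ℝ)⁻¹) := by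
        constructor
        · simp only [Metric.mem_closedBall, dist_zero_right]
          rw [hwn, _root_.zpow_neg, ← div_eq_mul_inv]
          exact div_le_one_of_le₀ hn2 (by positivity)
        · simp only [Metric.mem_ball, dist_zero_right, not_lt]
          rw [hwn, _root_.zpow_neg, ← div_eq_mul_inv, le_div_iff₀ (by positivity), zpow_add₀ hp0.ne', zpow_one]
          rw [mul_comm, mul_assoc, mul_inv_cancel₀ hp0.ne', mul_one]
          exact hn1.le
      have := hcov hwK
      simp only [Set.mem_iUnion] at this
      obtain ⟨x, hx, hxw⟩ := this
      have hx0 := hK0 _ (ht _ hx)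
      refine ⟨⟨x, hx⟩, ?_⟩
      simp only [q]
      rw [QuotientGroup.eq]
      have h5 : (Units.mk0 x (norm_pos_iff.mp hx0))⁻¹ * w ∈ V := by
        rw [hV, mem_Vs]
        have : (((Units.mk0 x (norm_pos_iff.mp hx0))⁻¹ * w : Lˣ) : L) - 1 = x⁻¹ * (w - x) := by
          have := norm_pos_iff.mp hx0
          push_cast
          rw [Units.val_mk0, mul_sub, inv_mul_cancel₀ this]
        rw [this, norm_mul, norm_inv, inv_mul_le_iff₀ hx0, ← dist_eq_norm]
        exact hxw
      have h6 : (Units.mk0 x (norm_pos_iff.mp hx0))⁻¹ * u = 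
          ((Units.mk0 x (norm_pos_iff.mp hx0))⁻¹ * w) * P ^ (-(n+1)) := by
        rw [hw, mul_assoc, mul_assoc, ← _root_.zpow_add]; simp
      rw [h6]
      exact Subgroup.mul_mem_sup h5 ⟨_, rfl⟩
    have : Finite (Lˣ ⧸ (V ⊔ Z)) := Finite.of_surjective q hq
    exact (Subgroup.finiteIndex_of_finite_quotient (H := V ⊔ Z)).index_ne_zero
  have htor : (V ⊔ Z) ⊓ (powMonoidHom 2 : Lˣ →* Lˣ).ker = ⊥ := by
    rw [eq_bot_iff]
    rintro x ⟨hx, hx2⟩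
    have hx2 : x ^ 2 = 1 := hx2
    obtain ⟨v, hv, z, hz, rfl⟩ := Subgroup.mem_sup.mp hx
    obtain ⟨k, rfl⟩ := Subgroup.mem_zpowers_iff.mp hz
    have h7 : (((v * P ^ k : Lˣ) : L)) ^ 2 = 1 := by
      rw [← Units.val_pow_eq_pow_val, hx2]; rfl
    have h8 : ‖((v * P ^ k : Lˣ) : L)‖ = 1 := by
      have := congrArg norm h7
      rw [norm_pow, norm_one] at this
      exact (pow_eq_one_iff_of_nonneg (norm_nonneg _) two_ne_zero).mp this
    rw [Units.val_mul, norm_mul, hVn v hv, one_mul] at h8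
    have := hPk k h8
    subst this
    rw [zpow_zero, mul_one] at h7 ⊢
    rcases sq_eq_one_iff.mp h7 with h | h
    · simpa [Subgroup.mem_bot] using h
    · exfalso
      have h9 : ‖(v : L) - 1‖ ≤ r := hv
      rw [h, show (-1 - 1 : L) = -2 by norm_num, norm_neg] at h9
      linarith
  rw [aux_sqindex (V ⊔ Z) hfin htor (card_sq_ker L h2ne), hmap, e3, e4]
  ring

theorem sq_index (p : ℕ) [Fact p.Prime] (L : Type*) [Field L] 
    [Algebra ℚ_[p] L] [FiniteDimensional ℚ_[p] L] :
    (powMonoidHom 2 : Lˣ →* Lˣ).range.index = 4 * c2 p ^ Module.finrank ℚ_[p] L := by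
  let _ : NormedField L := spectralNorm.normedField ℚ_[p] L
  let _ : NormedAlgebra ℚ_[p] L := spectralNorm.normedAlgebra ℚ_[p] L
  have : IsUltrametricDist L := IsUltrametricDist.isUltrametricDist_of_isNonarchimedean_norm
    (isNonarchimedean_spectralNorm (K := ℚ_[p]) (L := L))
  exact sq_index_normed p

theorem norm_index (p : ℕ) [Fact p.Prime] (F : Type*) [Field F] 
    [Algebra ℚ_[p] F] [FiniteDimensional ℚ_[p] F] (δ : F) (hδ : ¬ IsSquare δ) :
    (Units.map (QuadraticAlgebra.norm (R := F) (a := δ) (b := 0))).range.index = 2 := by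
  have hfact : Fact (∀ r : F, r ^ 2 ≠ δ + 0 * r) := ⟨fun r h => hδ ⟨r, by rw [← sq, h]; ring⟩⟩
  have hδ0 : δ ≠ 0 := fun h => hδ (h ▸ IsSquare.zero)
  have hchar : CharZero F := charZero_of_injective_algebraMap (algebraMap ℚ_[p] F).injective
  have hfd : FiniteDimensional ℚ_[p] (QuadraticAlgebra F δ 0) := FiniteDimensional.trans ℚ_[p] F (QuadraticAlgebra F δ 0)
  have hrk : Module.finrank ℚ_[p] (QuadraticAlgebra F δ 0) = Module.finrank ℚ_[p] F * 2 := by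
    rw [← Module.finrank_mul_finrank ℚ_[p] F (QuadraticAlgebra F δ 0), QuadraticAlgebra.finrank_eq_two]
  set N : (QuadraticAlgebra F δ 0)ˣ →* Fˣ := Units.map (QuadraticAlgebra.norm (R := F) (a := δ) (b := 0)) with hN
  let i : Fˣ →* (QuadraticAlgebra F δ 0)ˣ := Units.map (algebraMap F (QuadraticAlgebra F δ 0)).toMonoidHom
  set SK := (powMonoidHom 2 : (QuadraticAlgebra F δ 0)ˣ →* (QuadraticAlgebra F δ 0)ˣ).range with hSK
  set SF := (powMonoidHom 2 : Fˣ →* Fˣ).range with hSF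
  have hNi : ∀ a : Fˣ, N (i a) = a ^ 2 := by
    intro a
    ext
    exact QuadraticAlgebra.norm_algebraMap _
  have h1 : SF.comap N = SK ⊔ i.range := by
    apply le_antisymm
    · rintro z ⟨a, ha⟩
      have ha : a ^ 2 = N z := ha
      have ha' : (a : F) ^ 2 = (z : (QuadraticAlgebra F δ 0)).re ^ 2 - δ * (z : (QuadraticAlgebra F δ 0)).im ^ 2 := by
        have := congrArg Units.val ha
        rw [Units.val_pow_eq_pow_val] at this
        rw [this]
        change QuadraticAlgebra.norm (z : (QuadraticAlgebra F δ 0)) = _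
        rw [QuadraticAlgebra.norm_def]; ring
      by_cases hu : (z : (QuadraticAlgebra F δ 0)).re + a = 0
      · have hv : (z : (QuadraticAlgebra F δ 0)).im = 0 := by
          have h3 : δ * (z : (QuadraticAlgebra F δ 0)).im ^ 2 = 0 := by
            rw [eq_neg_of_add_eq_zero_left hu] at ha'
            linear_combination ha'
          simpa [hδ0] using h3
        apply Subgroup.mem_sup_right
        refine ⟨-a, ?_⟩
        ext
        · change (algebraMap F (QuadraticAlgebra F δ 0) ((-a : Fˣ) : F)).re = _
          simp [eq_neg_of_add_eq_zero_left hu]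
        · change (algebraMap F (QuadraticAlgebra F δ 0) ((-a : Fˣ) : F)).im = _
          simp [hv]
      · have h2u : 2 * ((z : (QuadraticAlgebra F δ 0)).re + a) ≠ 0 := mul_ne_zero two_ne_zero hu
        have hz : (algebraMap F (QuadraticAlgebra F δ 0) a + (z : (QuadraticAlgebra F δ 0))) ^ 2 = (z : (QuadraticAlgebra F δ 0)) * algebraMap F (QuadraticAlgebra F δ 0) (2 * ((z : (QuadraticAlgebra F δ 0)).re + a)) := by
          ext
          · simp [sq]
            linear_combination ha'
          · simp [sq]
            ring
        have hne : algebraMap F (QuadraticAlgebra F δ 0) a + (z : (QuadraticAlgebra F δ 0)) ≠ 0 := by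
          intro h
          rw [h] at hz
          have : (z : (QuadraticAlgebra F δ 0)) * algebraMap F (QuadraticAlgebra F δ 0) (2 * ((z : (QuadraticAlgebra F δ 0)).re + a)) ≠ 0 :=
            mul_ne_zero z.ne_zero ((map_ne_zero _).mpr h2u)
          apply this
          rw [← hz]; simp
        have : z = (Units.mk0 _ hne) ^ 2 * i ((Units.mk0 _ h2u)⁻¹) := by
          rw [map_inv, eq_mul_inv_iff_mul_eq]
          apply Units.ext
          exact hz.symm
        rw [this]
        exact Subgroup.mul_mem_sup ⟨_, rfl⟩ ⟨_, rfl⟩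
    · refine sup_le ?_ ?_
      · rintro _ ⟨z, rfl⟩
        exact ⟨N z, by simp⟩
      · rintro _ ⟨a, rfl⟩
        exact ⟨a, by rw [hNi]; rfl⟩
  have hSFN : SF ≤ N.range := by
    rintro _ ⟨a, rfl⟩
    exact ⟨i a, hNi a⟩
  have hSFi : SF ≤ SK.comap i := by
    rintro _ ⟨a, rfl⟩
    exact ⟨i a, by simp⟩
  have h2 : SF.relIndex (SK.comap i) = 2 := by
    rw [Subgroup.relIndex_eq_two_iff]
    refine ⟨Units.mk0 δ hδ0, ?_, ?_⟩
    · have hw : (⟨0, 1⟩ : (QuadraticAlgebra F δ 0)) ≠ 0 := by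
        intro h
        have := congrArg QuadraticAlgebra.im h
        simp at this
      refine ⟨Units.mk0 ⟨0, 1⟩ hw, ?_⟩
      apply Units.ext
      change (⟨0, 1⟩ : (QuadraticAlgebra F δ 0)) ^ 2 = algebraMap F (QuadraticAlgebra F δ 0) δ
      ext <;> simp [sq]
    · rintro b ⟨z, hz⟩
      have hz : (z : (QuadraticAlgebra F δ 0)) ^ 2 = algebraMap F (QuadraticAlgebra F δ 0) b := congrArg Units.val hz
      have hre := congrArg QuadraticAlgebra.re hz
      have him := congrArg QuadraticAlgebra.im hz
      simp [sq] at hre him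
      have him : (z : (QuadraticAlgebra F δ 0)).re * (z : (QuadraticAlgebra F δ 0)).im = 0 := by
        have : 2 * ((z : (QuadraticAlgebra F δ 0)).re * (z : (QuadraticAlgebra F δ 0)).im) = 0 := by linear_combination him
        simpa using this
      have hsq : ∀ c : Fˣ, c ∈ SF ↔ IsSquare (c : F) := by
        intro c
        constructor
        · rintro ⟨a, rfl⟩
          exact ⟨a, by simp [sq]⟩
        · rintro ⟨a, ha⟩
          have : a ≠ 0 := by rintro rfl; simp at ha
          exact ⟨Units.mk0 a this, by ext; simp [sq, ha]⟩
      have hnb : ¬ (b * Units.mk0 δ hδ0 ∈ SF ∧ b ∈ SF) := by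
        rintro ⟨ha, hb⟩
        have : Units.mk0 δ hδ0 ∈ SF := by
          have := SF.mul_mem (SF.inv_mem hb) ha
          simpa using this
        exact hδ ((hsq _).mp this)
      have hor : b * Units.mk0 δ hδ0 ∈ SF ∨ b ∈ SF := by
        rw [hsq, hsq]
        rcases mul_eq_zero.mp him with h | h
        · left
          refine ⟨δ * (z : (QuadraticAlgebra F δ 0)).im, ?_⟩
          rw [h] at hre
          simp
          linear_combination -δ * hre
        · right
          refine ⟨(z : (QuadraticAlgebra F δ 0)).re, ?_⟩
          rw [h] at hre
          linear_combination -hre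
      unfold Xor
      tauto
  have k1 := Subgroup.relIndex_mul_index (le_sup_left : SK ≤ SK ⊔ i.range)
  have k1a : SK.relIndex i.range = (SK.comap i).index := (Subgroup.index_comap SK i).symm
  have k1b : (SF.comap N).index = SF.relIndex N.range := Subgroup.index_comap SF N
  rw [Subgroup.relIndex_sup_left, k1a, ← h1, k1b] at k1
  have k2 := Subgroup.relIndex_mul_index hSFi
  have k3 := Subgroup.relIndex_mul_index hSFN
  rw [h2] at k2
  have s1 := sq_index p (QuadraticAlgebra F δ 0)
  have s2 := sq_index p F
  rw [hrk, pow_mul] at s1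
  set C := c2 p ^ Module.finrank ℚ_[p] F with hC
  have hC0 : 0 < C := Nat.pos_of_ne_zero (pow_ne_zero _ (c2_ne p))
  rw [← hSK, ← k1] at s1
  rw [← hSF] at s2
  rw [s2] at k2 k3
  have a1 : (SK.comap i).index = 2 * C := by omega
  rw [a1] at s1
  have a2 : SF.relIndex N.range = 2 * C := by
    have : (2 * C) * SF.relIndex N.range = (2 * C) * (2 * C) := by rw [s1]; ring
    exact Nat.eq_of_mul_eq_mul_left (by positivity) this
  rw [a2] at k3
  have : (2 * C) * N.range.index = (2 * C) * 2 := by rw [k3]; ring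
  exact Nat.eq_of_mul_eq_mul_left (by positivity) this

/-- `c = x² - a y²` is solvable. -/
def Sn {F : Type*} [Field F] (a c : F) : Prop := ∃ x y : F, c = x ^ 2 - a * y ^ 2

section Sn
variable {F : Type*} [Field F]

theorem Sn_mul {a c c' : F} (h : Sn a c) (h' : Sn a c') : Sn a (c * c') := by
  obtain ⟨x, y, rfl⟩ := h
  obtain ⟨z, w, rfl⟩ := h'
  exact ⟨x * z + a * y * w, x * w + y * z, by ring⟩

theorem Sn_sq (a c : F) : Sn a (c ^ 2) := ⟨c, 0, by ring⟩

theorem Sn_scale {a c k : F} (hk : k ≠ 0) (h : Sn a (c * k ^ 2)) : Sn a c := by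
  have := Sn_mul h (Sn_sq a k⁻¹)
  rwa [mul_assoc, ← mul_pow, mul_inv_cancel₀ hk, one_pow, mul_one] at this

theorem Sn_cancel {a c c' : F} (hc : c ≠ 0) (h : Sn a c) (h' : Sn a (c * c')) : Sn a c' := by
  have := Sn_mul h h'
  apply Sn_scale hc
  convert this using 1; ring

theorem Sn_of_isSquare (h2 : (2 : F) ≠ 0) {a : F} (ha : a ≠ 0) (h : IsSquare a) (c : F) : Sn a c := by
  obtain ⟨s, rfl⟩ := h
  have hs : s ≠ 0 := by rintro rfl; simp at ha
  exact ⟨(c + 1) / 2, (c - 1) / (2 * s), by field_simp; ring⟩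

theorem Sn_symm (h2 : (2 : F) ≠ 0) {a b : F} (hb : b ≠ 0) (h : Sn a b) : Sn b a := by
  obtain ⟨x, y, h⟩ := h
  by_cases hy : y = 0
  · subst hy
    exact Sn_of_isSquare h2 hb ⟨x, by rw [h]; ring⟩ _
  · exact ⟨x / y, 1 / y, by rw [h]; field_simp; ring⟩

end Sn

theorem Sn_index (p : ℕ) [Fact p.Prime] {F : Type*} [Field F] 
    [Algebra ℚ_[p] F] [FiniteDimensional ℚ_[p] F] {a : F} (ha : ¬ IsSquare a) :
    (∃ c : F, c ≠ 0 ∧ ¬ Sn a c) ∧ ∀ c c' : F, c ≠ 0 → c' ≠ 0 → ¬ Sn a c → ¬ Sn a c' → Sn a (c * c') := by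
  have h := norm_index p F a ha
  set H := (Units.map (QuadraticAlgebra.norm (R := F) (a := a) (b := 0))).range with hH
  have hfact : Fact (∀ r : F, r ^ 2 ≠ a + 0 * r) := ⟨fun r h => ha ⟨r, by rw [← sq, h]; ring⟩⟩
  have hmem : ∀ c : Fˣ, c ∈ H ↔ Sn a (c : F) := by
    intro c
    constructor
    · rintro ⟨z, rfl⟩
      refine ⟨(z : QuadraticAlgebra F a 0).re, (z : QuadraticAlgebra F a 0).im, ?_⟩
      change QuadraticAlgebra.norm (z : QuadraticAlgebra F a 0) = _
      rw [QuadraticAlgebra.norm_def]; ring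
    · rintro ⟨x, y, hc⟩
      have hz : (⟨x, y⟩ : QuadraticAlgebra F a 0) ≠ 0 := by
        intro h
        have h1 := congrArg QuadraticAlgebra.re h
        have h2 := congrArg QuadraticAlgebra.im h
        simp at h1 h2
        simp [h1, h2] at hc
      refine ⟨Units.mk0 _ hz, ?_⟩
      ext
      rw [hc]
      change QuadraticAlgebra.norm (⟨x, y⟩ : QuadraticAlgebra F a 0) = _
      rw [QuadraticAlgebra.norm_def]; ring
  constructor
  · by_contra hcon
    push Not at hcon
    have : H = ⊤ := by
      rw [eq_top_iff]
      intro c _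
      exact (hmem c).mpr (hcon c c.ne_zero)
    rw [this, Subgroup.index_top] at h
    norm_num at h
  · intro c c' hc hc' h1 h2
    have := Subgroup.mul_mem_iff_of_index_two h (a := Units.mk0 c hc) (b := Units.mk0 c' hc')
    rw [hmem, hmem, hmem] at this
    simp only [Units.val_mul, Units.val_mk0] at this
    tauto

theorem key_hilbert (p : ℕ) [Fact p.Prime] {F : Type*} [Field F] 
    [Algebra ℚ_[p] F] [FiniteDimensional ℚ_[p] F] {e δ : F} (he : ¬ IsSquare e) (hδ : ¬ IsSquare δ) :
    ∃ c : F, c ≠ 0 ∧ Sn (e * δ) c ∧ ¬ Sn δ c := by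
  have hchar : CharZero F := charZero_of_injective_algebraMap (algebraMap ℚ_[p] F).injective
  have h2 : (2 : F) ≠ 0 := two_ne_zero
  have he0 : e ≠ 0 := fun h => he (h ▸ IsSquare.zero)
  have hδ0 : δ ≠ 0 := fun h => hδ (h ▸ IsSquare.zero)
  by_contra hcon
  push Not at hcon
  have claim : ∀ c : F, c ≠ 0 → ¬ Sn δ c → Sn e c := by
    intro c hc hn
    have hn2 : ¬ Sn (e * δ) c := fun h => hn (hcon c hc h)
    have m1 : ¬ Sn c δ := fun h => hn (Sn_symm h2 hδ0 h)
    have m2 : ¬ Sn c (e * δ) := fun h => hn2 (Sn_symm h2 (mul_ne_zero he0 hδ0) h)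
    have hcs : ¬ IsSquare c := fun h => m1 (Sn_of_isSquare h2 hc h _)
    have := (Sn_index p hcs).2 _ _ (mul_ne_zero he0 hδ0) hδ0 m2 m1
    apply Sn_symm h2 he0
    apply Sn_scale hδ0
    convert this using 1; ring
  obtain ⟨c, hc, hcn⟩ := (Sn_index p hδ).1
  obtain ⟨d, hd, hdn⟩ := (Sn_index p he).1
  apply hdn
  by_cases h : Sn δ d
  · have h3 : ¬ Sn δ (c * d) := fun h' => hcn (Sn_cancel hd h (by rwa [mul_comm]))
    exact Sn_cancel hc (claim c hc hcn) (claim _ (mul_ne_zero hc hd) h3)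
  · exact claim d hd h

section witt
variable {F V ι : Type*} [Field F] [AddCommGroup V] [Module F V]

theorem refl_isom (B : V →ₗ[F] V →ₗ[F] F) (hB : ∀ x y, B x y = B y x) (z : V) (hz : B z z ≠ 0) :
    ∃ T : V → V, (∀ x y, B (T x) (T y) = B x y) ∧ (∀ x, T x = x - (2 * B x z / B z z) • z) := by
  refine ⟨fun x => x - (2 * B x z / B z z) • z, ?_, fun x => rfl⟩
  intro x y
  simp only [map_sub, map_smul, LinearMap.sub_apply, LinearMap.smul_apply, smul_eq_mul]
  rw [hB z y]
  field_simp
  ring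

theorem isom_move (h2 : (2 : F) ≠ 0) (B : V →ₗ[F] V →ₗ[F] F) (hB : ∀ x y, B x y = B y x) (u v : V)
    (huv : B u u = B v v) (hv : B v v ≠ 0) :
    ∃ T : V → V, (∀ x y, B (T x) (T y) = B x y) ∧ T u = v ∧
      ∀ x, B x u = 0 → B x v = 0 → T x = x := by
  by_cases h : B (u - v) (u - v) = 0
  · have e1 : B (u - v) (u - v) = 2 * (B v v - B u v) := by
      simp only [map_sub, LinearMap.sub_apply]
      rw [hB v u, huv]; ring
    have e2 : B u v = B v v := by
      rw [e1] at h
      rcases mul_eq_zero.mp h with h | h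
      · exact absurd h h2
      · linear_combination -h
    have e3 : B (u + v) (u + v) = 2 * (2 * B v v) := by
      simp only [map_add, LinearMap.add_apply]
      rw [hB v u, huv, e2]; ring
    have h4 : B (u + v) (u + v) ≠ 0 := by
      rw [e3]; exact mul_ne_zero h2 (mul_ne_zero h2 hv)
    obtain ⟨T, hT, hT'⟩ := refl_isom B hB (u + v) h4
    obtain ⟨T2, hT2, hT2'⟩ := refl_isom B hB v hv
    refine ⟨T2 ∘ T, fun x y => by simp [hT, hT2], ?_, ?_⟩
    · have : T u = -v := by
        rw [hT', e3, map_add, e2, huv]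
        have : 2 * (B v v + B v v) / (2 * (2 * B v v)) = 1 := by field_simp; ring
        rw [this, one_smul]; abel
      simp only [Function.comp, this, hT2']
      have : 2 * B (-v) v / B v v = -2 := by
        simp; field_simp
      rw [this, neg_smul, two_smul]; abel
    · intro x hx hy
      simp [hT', hT2', hx, hy]
  · obtain ⟨T, hT, hT'⟩ := refl_isom B hB (u - v) h
    refine ⟨T, hT, ?_, ?_⟩
    · have e1 : B (u - v) (u - v) = 2 * B u (u - v) := by
        simp only [map_sub, LinearMap.sub_apply]
        rw [hB v u, huv]; ring
      rw [hT', ← e1, div_self h, one_smul]; abel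
    · intro x hx hy
      simp [hT', hx, hy]

theorem witt_family [DecidableEq ι] (h2 : (2 : F) ≠ 0) (B : V →ₗ[F] V →ₗ[F] F) (hB : ∀ x y, B x y = B y x)
    (v : ι → V) (hv : ∀ a b, a ≠ b → B (v a) (v b) = 0) (hv0 : ∀ a, B (v a) (v a) ≠ 0)
    (f : ι → V) (hf : ∀ a b, a ≠ b → B (f a) (f b) = 0)
    (S : Finset ι) (hS : ∀ a ∈ S, B (f a) (f a) = B (v a) (v a)) :
    ∃ f' : ι → V, (∀ a b, B (f' a) (f' b) = B (f a) (f b)) ∧ ∀ a ∈ S, f' a = v a := by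
  induction S using Finset.induction_on with
  | empty => exact ⟨f, fun _ _ => rfl, by simp⟩
  | insert m S hm ih =>
    obtain ⟨f', h1, h3⟩ := ih (fun a ha => hS a (Finset.mem_insert_of_mem ha))
    obtain ⟨T, hT, hTm, hTx⟩ := isom_move h2 B hB (f' m) (v m)
      (by rw [h1]; exact hS m (Finset.mem_insert_self _ _)) (hv0 m)
    refine ⟨fun a => T (f' a), fun a b => by rw [hT, h1], ?_⟩
    intro a ha
    rcases Finset.mem_insert.mp ha with rfl | ha2
    · exact hTm
    · have ham : a ≠ m := by rintro rfl; exact hm ha2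
      simp only
      rw [hTx, h3 a ha2]
      · rw [h1, hf a m ham]
      · rw [h3 a ha2, hv a m ham]

theorem witt_main [DecidableEq ι] [Fintype ι] [FiniteDimensional F V] (hcard : Fintype.card ι = Module.finrank F V)
    (h2 : (2 : F) ≠ 0) (B : V →ₗ[F] V →ₗ[F] F) (hB : ∀ x y, B x y = B y x)
    (v : ι → V) (hv : ∀ a b, a ≠ b → B (v a) (v b) = 0) (hv0 : ∀ a, B (v a) (v a) ≠ 0)
    (f : ι → V) (hf : ∀ a b, a ≠ b → B (f a) (f b) = 0) (i k : ι) (hik : i ≠ k)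
    (hS : ∀ a, a ≠ i → a ≠ k → B (f a) (f a) = B (v a) (v a)) :
    ∃ x y : F, B (f i) (f i) = x ^ 2 * B (v i) (v i) + y ^ 2 * B (v k) (v k) := by
  obtain ⟨f', h1, h3⟩ := witt_family h2 B hB v hv hv0 f hf (Finset.univ \ {i, k}) (by
    intro a ha
    simp at ha
    exact hS a ha.1 ha.2)
  have hli : LinearIndependent F v := by
    apply LinearMap.BilinForm.linearIndependent_of_iIsOrtho (B := B)
    · intro a b hab
      exact hv a b hab
    · intro a h
      exact hv0 a h
  cases isEmpty_or_nonempty ι with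
  | inl h => exact (h.false i).elim
  | inr h =>
  let b := basisOfLinearIndependentOfCardEqFinrank hli hcard
  have hb : ∀ a, b a = v a := fun a => by simp [b]
  have hsum : f' i = ∑ a, b.repr (f' i) a • v a := by
    conv_lhs => rw [← b.sum_repr (f' i)]
    simp [hb]
  set r := b.repr (f' i) with hr
  have hB1 : ∀ a, B (f' i) (v a) = r a * B (v a) (v a) := by
    intro a
    rw [hsum, map_sum, LinearMap.sum_apply, Finset.sum_eq_single a]
    · simp
    · intro b _ hb
      simp [hv b a hb]
    · simp
  have hr0 : ∀ a, a ≠ i → a ≠ k → r a = 0 := by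
    intro a ha hk
    have := hB1 a
    rw [← h3 a (by simp [ha, hk]), h1, hf i a ha.symm, h1, hS a ha hk] at this
    rcases mul_eq_zero.mp this.symm with h | h
    · exact h
    · exact absurd h (hv0 a)
  refine ⟨r i, r k, ?_⟩
  rw [← h1]
  have : f' i = r i • v i + r k • v k := by
    rw [hsum, ← Finset.sum_subset (Finset.subset_univ {i, k})]
    · rw [Finset.sum_pair hik]
    · intro a _ ha
      simp at ha
      rw [hr0 a ha.1 ha.2, zero_smul]
  rw [this]
  simp [hv i k hik, hv k i hik.symm]
  ring

/-- replace a pair -/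
def repl [DecidableEq ι] (v : ι → V) (i k : ι) (a b c d : F) : ι → V := fun l =>
  if l = i then a • v i + b • v k else if l = k then c • v i + d • v k else v l

theorem repl_i [DecidableEq ι] (v : ι → V) (i k : ι) (a b c d : F) : 
   repl v i k a b c d i = a • v i + b • v k := by simp [repl]
theorem repl_k [DecidableEq ι] (v : ι → V) (i k : ι) (hik : i ≠ k) (a b c d : F) : 
   repl v i k a b c d k = c • v i + d • v k := by simp [repl, hik.symm]
theorem repl_o [DecidableEq ι] (v : ι → V) (i k : ι) (a b c d : F) (l : ι) (h : l ≠ i) (h' : l ≠ k) : 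
   repl v i k a b c d l = v l := by simp [repl, h, h']

theorem repl_orth [DecidableEq ι] (B : V →ₗ[F] V →ₗ[F] F) (hB : ∀ x y, B x y = B y x)
    (v : ι → V) (hv : ∀ a b, a ≠ b → B (v a) (v b) = 0) (i k : ι) (hik : i ≠ k) (a b c d : F)
    (h : a * c * B (v i) (v i) + b * d * B (v k) (v k) = 0) :
    (∀ l m, l ≠ m → B (repl v i k a b c d l) (repl v i k a b c d m) = 0) ∧
    B (repl v i k a b c d i) (repl v i k a b c d i) = a ^ 2 * B (v i) (v i) + b ^ 2 * B (v k) (v k) ∧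
    B (repl v i k a b c d k) (repl v i k a b c d k) = c ^ 2 * B (v i) (v i) + d ^ 2 * B (v k) (v k) ∧
    ∀ l, l ≠ i → l ≠ k → B (repl v i k a b c d l) (repl v i k a b c d l) = B (v l) (v l) := by
  have e1 := hv i k hik
  have e2 := hv k i hik.symm
  refine ⟨?_, ?_, ?_, ?_⟩
  · intro l m hlm
    have key : ∀ m, m ≠ i → m ≠ k → B (repl v i k a b c d i) (repl v i k a b c d m) = 0 ∧
        B (repl v i k a b c d k) (repl v i k a b c d m) = 0 := by
      intro m h1 h2
      rw [repl_i, repl_k _ _ _ hik, repl_o _ _ _ _ _ _ _ m h1 h2]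
      simp [hv i m h1.symm, hv k m h2.symm]
    have key2 : B (repl v i k a b c d i) (repl v i k a b c d k) = 0 := by
      rw [repl_i, repl_k _ _ _ hik]
      simp [e1, e2]
      linear_combination h
    by_cases hl : l = i
    · subst hl
      by_cases hm : m = k
      · subst hm; exact key2
      · exact (key m hlm.symm hm).1
    · by_cases hl' : l = k
      · subst hl'
        by_cases hm : m = i
        · subst hm; rw [hB]; exact key2
        · exact (key m hm hlm.symm).2
      · by_cases hm : m = i
        · subst hm; rw [hB]; exact (key l hl hl').1
        · by_cases hm' : m = k
          · subst hm'; rw [hB]; exact (key l hl hl').2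
          · rw [repl_o _ _ _ _ _ _ _ m hm hm', repl_o _ _ _ _ _ _ _ l hl hl', hv l m hlm]
  · rw [repl_i]; simp [e1, e2]; ring
  · rw [repl_k _ _ _ hik]; simp [e1, e2]; ring
  · intro l h1 h2
    rw [repl_o _ _ _ _ _ _ _ l h1 h2]

/-- with three vectors we can find a good pair -/
theorem good_pair [DecidableEq ι] (h2 : (2 : F) ≠ 0) (e : F) (he : ¬ IsSquare e)
    (B : V →ₗ[F] V →ₗ[F] F) (hB : ∀ x y, B x y = B y x)
    (v : ι → V) (hv : ∀ a b, a ≠ b → B (v a) (v b) = 0) (hv0 : ∀ a, B (v a) (v a) ≠ 0)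
    (i k m : ι) (hik : i ≠ k) (him : i ≠ m) (hkm : k ≠ m) :
    ∃ v' : ι → V, (∀ a b, a ≠ b → B (v' a) (v' b) = 0) ∧ (∀ a, B (v' a) (v' a) ≠ 0) ∧
      ∃ a b, a ≠ b ∧ ¬ IsSquare (-(B (v' a) (v' a) * B (v' b) (v' b))) := by
  by_contra hcon
  have hc : ∀ a b, a ≠ b → IsSquare (-(B (v a) (v a) * B (v b) (v b))) := by
    intro a b hab
    by_contra h
    exact hcon ⟨v, hv, hv0, a, b, hab, h⟩
  have he0 : e ≠ 0 := fun h => he (h ▸ IsSquare.zero)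
  obtain ⟨s, hs⟩ := hc i k hik
  obtain ⟨t, ht⟩ := hc i m him
  obtain ⟨q, hq⟩ := hc k m hkm
  have hi := hv0 i
  have hk := hv0 k
  have hm := hv0 m
  set wi := B (v i) (v i) with hwi
  set wk := B (v k) (v k) with hwk
  set wm := B (v m) (v m) with hwm
  have hs0 : s ≠ 0 := by rintro rfl; simp [hi, hk] at hs
  have ht0 : t ≠ 0 := by rintro rfl; simp [hi, hm] at ht
  -- a^2 wi + b^2 wk = e wi , with wk = -s^2/wi
  set α := (1 + e) / 2 with hα
  set β := (1 - e) * wi / (2 * s) with hβ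
  have hwk' : wk = - (s * s) / wi := by
    rw [← hs]; field_simp
  have hval : α ^ 2 * wi + β ^ 2 * wk = e * wi := by
    rw [hwk', hα, hβ]; field_simp; ring
  obtain ⟨r1, r2, r3, r4⟩ := repl_orth B hB v hv i k hik α β (-β * wk) (α * wi)
    (by rw [← hwi, ← hwk]; ring)
  rw [← hwi, ← hwk] at r2 r3
  rw [hval] at r2
  have r3' : (-β * wk) ^ 2 * wi + (α * wi) ^ 2 * wk = e * wi * (wi * wk) := by
    rw [← hval]; ring
  rw [r3'] at r3
  refine hcon ⟨_, r1, ?_, i, m, him, ?_⟩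
  · intro a
    by_cases ha : a = i
    · subst ha; rw [r2]; exact mul_ne_zero he0 hi
    · by_cases ha' : a = k
      · subst ha'; rw [r3]; exact mul_ne_zero (mul_ne_zero he0 hi) (mul_ne_zero hi hk)
      · rw [r4 a ha ha']; exact hv0 a
  · rw [r2, r4 m him.symm hkm.symm, ← hwm]
    rintro ⟨z, hz⟩
    apply he
    refine ⟨z / t, ?_⟩
    field_simp
    linear_combination hz - e * ht

end witt

theorem gramv_apply {K : Type*} [Field K] {n : ℕ} (M : Matrix (Fin n) (Fin n) K) (v : Fin n → Fin n → K)
    (a b : Fin n) : ((Matrix.of v) * M * (Matrix.of v)ᵀ) a b = Matrix.toBilin' M (v a) (v b) := by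
  rw [Matrix.toBilin'_apply', Matrix.mul_assoc, Matrix.mul_apply]
  simp [dotProduct, Matrix.mulVec, Matrix.mul_apply]

section desc
variable {E : Type} [Field E] {n : ℕ}

theorem map_inv_of {σ : E →+* E} (g : Matrix (Fin n) (Fin n) E) (hg : g.det ≠ 0) :
    g.map σ * (g⁻¹).map σ = 1 ∧ (g⁻¹).map σ * g.map σ = 1 := by
  have h1 : g * g⁻¹ = 1 := Matrix.mul_nonsing_inv _ (isUnit_iff_ne_zero.mpr hg)
  have h2 : g⁻¹ * g = 1 := Matrix.nonsing_inv_mul _ (isUnit_iff_ne_zero.mpr hg)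
  constructor
  · rw [← Matrix.map_mul, h1]; simp
  · rw [← Matrix.map_mul, h2]; simp

theorem map_inv_eq {σ : E →+* E} (g : Matrix (Fin n) (Fin n) E) (hg : g.det ≠ 0) :
    (g.map σ)⁻¹ = (g⁻¹).map σ := Matrix.inv_eq_right_inv (map_inv_of g hg).1

open OrthPair in
theorem orbit_desc (σ : E →+* E) (hσσ : ∀ x, σ (σ x) = x)
    (j g0 D : Matrix (Fin n) (Fin n) E) (hj : j.map σ = j) (hD : D.map σ = D)
    (h0 : g0ᵀ * j * g0 = D) (hdet0 : g0.det ≠ 0) (hdet : σ g0.det = g0.det)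
    (horb : ∃ x₀, SXj ⇑σ j x₀ ∧ ∀ x, SXj ⇑σ j x → orbSG ⇑σ j x₀ x) :
    ∃ f : Matrix (Fin n) (Fin n) E, f.map σ = f ∧ fᵀ * j * f = D := by
  have hmm : ∀ M : Matrix (Fin n) (Fin n) E, (M.map σ).map σ = M := by
    intro M; ext a b; simp [hσσ]
  have hdm : ∀ M : Matrix (Fin n) (Fin n) E, (M.map σ).det = σ M.det := by
    intro M; exact (RingHom.map_det σ M).symm
  have hU : IsUnit g0.det := isUnit_iff_ne_zero.mpr hdet0
  have i1 : g0 * g0⁻¹ = 1 := Matrix.mul_nonsing_inv _ hU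
  have i2 : g0⁻¹ * g0 = 1 := Matrix.nonsing_inv_mul _ hU
  obtain ⟨i3, i4⟩ := map_inv_of (σ := σ) g0 hdet0
  have h0s : (g0.map σ)ᵀ * j * g0.map σ = D := by
    have := congrArg (fun M => Matrix.map M σ) h0
    simp only [Matrix.map_mul, hD, hj] at this
    rw [← this, Matrix.transpose_map]
  obtain ⟨x₀, hx₀, hall⟩ := horb
  have hone : SXj ⇑σ j 1 := by
    refine ⟨⟨⟨isUnit_one, by simp⟩, by simp⟩, by simp⟩
  set x := g0 * (g0⁻¹).map σ with hx
  have hxdet : x.det = 1 := by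
    rw [hx, Matrix.det_mul]
    have := congrArg Matrix.det i3
    rw [Matrix.det_mul, hdm g0, hdet] at this
    simpa using this
  have hxSX : SXj ⇑σ j x := by
    refine ⟨⟨⟨?_, ?_⟩, ?_⟩, hxdet⟩
    · rw [Matrix.isUnit_iff_isUnit_det, hxdet]; exact isUnit_one
    · calc xᵀ * j * x = ((g0⁻¹).map σ)ᵀ * (g0ᵀ * j * g0) * (g0⁻¹).map σ := by
            rw [hx, Matrix.transpose_mul]; simp only [Matrix.mul_assoc]
        _ = ((g0⁻¹).map σ)ᵀ * ((g0.map σ)ᵀ * j * g0.map σ) * (g0⁻¹).map σ := by rw [h0, h0s]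
        _ = (g0.map σ * (g0⁻¹).map σ)ᵀ * j * (g0.map σ * (g0⁻¹).map σ) := by
            rw [Matrix.transpose_mul]; simp only [Matrix.mul_assoc]
        _ = j := by rw [i3]; simp
    · rw [hx, Matrix.map_mul, hmm]
      calc g0 * (g0⁻¹).map σ * (g0.map σ * g0⁻¹) = g0 * ((g0⁻¹).map σ * g0.map σ) * g0⁻¹ := by
            simp only [Matrix.mul_assoc]
        _ = 1 := by rw [i4, Matrix.mul_one, i1]
  obtain ⟨g1, ⟨_, hg1⟩, hd1, e1⟩ := hall 1 hone
  obtain ⟨g2, ⟨_, hg2⟩, hd2, e2⟩ := hall x hxSX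
  have hg1' : g1.det ≠ 0 := by rw [hd1]; exact one_ne_zero
  have hg2' : g2.det ≠ 0 := by rw [hd2]; exact one_ne_zero
  rw [map_inv_eq g1 hg1'] at e1
  rw [map_inv_eq g2 hg2'] at e2
  have k1 : g2 * g2⁻¹ = 1 := Matrix.mul_nonsing_inv _ (isUnit_iff_ne_zero.mpr hg2')
  have k2 : g2⁻¹ * g2 = 1 := Matrix.nonsing_inv_mul _ (isUnit_iff_ne_zero.mpr hg2')
  have m1 : g1.map σ = g1 * x₀ := by
    calc g1.map σ = 1 * g1.map σ := by rw [Matrix.one_mul]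
      _ = g1 * x₀ * ((g1⁻¹).map σ * g1.map σ) := by rw [e1]; simp only [Matrix.mul_assoc]
      _ = g1 * x₀ := by rw [(map_inv_of g1 hg1').2, Matrix.mul_one]
  have m2 : x₀ * (g2⁻¹).map σ = g2⁻¹ * x := by
    rw [e2]
    calc x₀ * (g2⁻¹).map σ = (g2⁻¹ * g2) * (x₀ * (g2⁻¹).map σ) := by rw [k2, Matrix.one_mul]
      _ = _ := by simp only [Matrix.mul_assoc]
  refine ⟨g1 * (g2⁻¹ * g0), ?_, ?_⟩
  · rw [Matrix.map_mul, Matrix.map_mul, m1]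
    calc g1 * x₀ * ((g2⁻¹).map σ * g0.map σ) = g1 * (x₀ * (g2⁻¹).map σ) * g0.map σ := by
          simp only [Matrix.mul_assoc]
      _ = g1 * g2⁻¹ * g0 * ((g0⁻¹).map σ * g0.map σ) := by
          rw [m2, hx]; simp only [Matrix.mul_assoc]
      _ = _ := by rw [i4, Matrix.mul_one]; simp only [Matrix.mul_assoc]
  · have hg2i : (g2⁻¹)ᵀ * j * g2⁻¹ = j := by
      calc (g2⁻¹)ᵀ * j * g2⁻¹ = (g2⁻¹)ᵀ * (g2ᵀ * j * g2) * g2⁻¹ := by rw [hg2]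
        _ = (g2 * g2⁻¹)ᵀ * j * (g2 * g2⁻¹) := by
            rw [Matrix.transpose_mul]; simp only [Matrix.mul_assoc]
        _ = j := by rw [k1]; simp
    calc (g1 * (g2⁻¹ * g0))ᵀ * j * (g1 * (g2⁻¹ * g0)) 
        = (g2⁻¹ * g0)ᵀ * (g1ᵀ * j * g1) * (g2⁻¹ * g0) := by
            rw [Matrix.transpose_mul]; simp only [Matrix.mul_assoc]
      _ = g0ᵀ * ((g2⁻¹)ᵀ * j * g2⁻¹) * g0 := by
            rw [hg1, Matrix.transpose_mul]; simp only [Matrix.mul_assoc]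
      _ = D := by rw [hg2i, h0]
end desc

/-- existence of a good orthogonal family -/
theorem exists_good {F : Type*} [Field F] [CharZero F] (e : F) (he : ¬ IsSquare e) (n : ℕ) (hn : 2 ≤ n)
    (j : Matrix (Fin n) (Fin n) F) (hj : jᵀ = j) (hd : j.det ≠ 0)
    (h : n = 2 → ¬ IsSquare (-j.det)) :
    ∃ v : Fin n → Fin n → F, (∀ a b, a ≠ b → Matrix.toBilin' j (v a) (v b) = 0) ∧
      (∀ a, Matrix.toBilin' j (v a) (v a) ≠ 0) ∧ ∃ i k, i ≠ k ∧
      ¬ IsSquare (-(Matrix.toBilin' j (v i) (v i) * Matrix.toBilin' j (v k) (v k))) := by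
  have h2 : (2 : F) ≠ 0 := two_ne_zero
  have hB : ∀ x y, Matrix.toBilin' j x y = Matrix.toBilin' j y x := by
    intro x y
    rw [Matrix.toBilin'_apply', Matrix.toBilin'_apply', dotProduct_comm, ← Matrix.vecMul_transpose, hj,
      Matrix.dotProduct_mulVec]
  have : Invertible (2 : F) := invertibleOfNonzero h2
  obtain ⟨b, hb⟩ := LinearMap.BilinForm.exists_orthogonal_basis (B := Matrix.toBilin' j) ⟨fun x y => hB x y⟩
  have hnd := LinearMap.BilinForm.nondegenerate_toBilin'_of_det_ne_zero' j hd
  have hb0 := LinearMap.BilinForm.iIsOrtho.not_isOrtho_basis_self_of_nondegenerate hb hnd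
  have hr : Module.finrank F (Fin n → F) = n := by simp
  let v : Fin n → Fin n → F := fun l => b (Fin.cast hr.symm l)
  have hv : ∀ a b, a ≠ b → Matrix.toBilin' j (v a) (v b) = 0 := by
    intro x y hxy
    exact hb (fun h => hxy (by simpa using h))
  have hv0 : ∀ a, Matrix.toBilin' j (v a) (v a) ≠ 0 := fun a => hb0 _
  by_cases hn2 : n = 2
  · subst hn2
    refine ⟨v, hv, hv0, 0, 1, by simp, ?_⟩
    rintro ⟨z, hz⟩
    have hdet : (Matrix.of v).det ^ 2 * j.det = 
        Matrix.toBilin' j (v 0) (v 0) * Matrix.toBilin' j (v 1) (v 1) := by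
      have : ((Matrix.of v) * j * (Matrix.of v)ᵀ).det = (Matrix.of v).det ^ 2 * j.det := by
        rw [Matrix.det_mul, Matrix.det_mul, Matrix.det_transpose]; ring
      rw [← this, Matrix.det_fin_two, gramv_apply, gramv_apply, gramv_apply, gramv_apply, hv 0 1 (by simp)]
      ring
    have hP : (Matrix.of v).det ≠ 0 := by
      intro h0
      rw [h0] at hdet
      have := mul_ne_zero (hv0 0) (hv0 1)
      rw [← hdet] at this
      simp at this
    apply h rfl
    refine ⟨z / (Matrix.of v).det, ?_⟩
    field_simp
    linear_combination hz - hdet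
  · obtain ⟨v', h1, h3, i, k, h4⟩ := good_pair h2 e he (Matrix.toBilin' j) hB v hv hv0 ⟨0, by omega⟩ ⟨1, by omega⟩ ⟨2, by omega⟩
      (by simp) (by simp) (by simp)
    exact ⟨v', h1, h3, i, k, h4⟩

open OrthPair in
theorem forward_aux (p : ℕ) [Fact p.Prime] {F E : Type} [Field F] [Field E]
    [Algebra ℚ_[p] F] [FiniteDimensional ℚ_[p] F] (φ : F →+* E) (σ : E →+* E)
    (hσσ : ∀ x, σ (σ x) = x) (hφσ : ∀ y, σ (φ y) = φ y) (hfix : ∀ x, σ x = x → ∃ y, φ y = x)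
    (ι : E) (hι1 : σ ι ≠ ι) (hι2 : σ (ι * ι) = ι * ι)
    (n : ℕ) (hn : 2 ≤ n)
    (j : Matrix (Fin n) (Fin n) E)
    (hjF : ∀ a b, σ (j a b) = j a b) (hjU : IsUnit j) (hjsym : jᵀ = j)
    (horb : ∃ x₀, SXj ⇑σ j x₀ ∧ ∀ x, SXj ⇑σ j x → orbSG ⇑σ j x₀ x)
    (hnot : n = 2 → ¬ ∃ c, σ c = c ∧ c ≠ 0 ∧ j.det = -(c * c)) : False := by
  have hcF : CharZero F := charZero_of_injective_algebraMap (algebraMap ℚ_[p] F).injective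
  have hι : σ ι = -ι := by
    rw [map_mul] at hι2
    have : (σ ι - ι) * (σ ι + ι) = 0 := by linear_combination hι2
    rcases mul_eq_zero.mp this with h | h
    · exact absurd (sub_eq_zero.mp h) hι1
    · exact eq_neg_of_add_eq_zero_left h
  obtain ⟨e, he⟩ := hfix _ hι2
  have hesq : ¬ IsSquare e := by
    rintro ⟨z, rfl⟩
    rw [map_mul] at he
    have : (φ z - ι) * (φ z + ι) = 0 := by linear_combination he
    rcases mul_eq_zero.mp this with h | h
    · apply hι1
      rw [← sub_eq_zero.mp h, hφσ]
    · apply hι1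
      have : ι = φ (-z) := by rw [map_neg]; linear_combination h
      rw [this, hφσ]
  choose jF hjF' using fun a => fun b => hfix _ (hjF a b)
  set J : Matrix (Fin n) (Fin n) F := Matrix.of jF with hJ
  have hJm : J.map φ = j := by ext a b; exact hjF' a b
  have hJsym : Jᵀ = J := by
    ext a b
    apply φ.injective
    have := congrFun (congrFun hjsym a) b
    rw [← hJm] at this
    exact this
  have hJdet : φ J.det = j.det := by rw [← hJm]; exact RingHom.map_det φ J
  have hjd : j.det ≠ 0 := ((Matrix.isUnit_iff_isUnit_det _).mp hjU).ne_zero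
  have hJd : J.det ≠ 0 := by
    intro h; apply hjd; rw [← hJdet, h, map_zero]
  obtain ⟨v, hv, hv0, i, k, hik, hnsq⟩ := exists_good e hesq n hn J hJsym hJd (by
    rintro h2 ⟨z, hz⟩
    apply hnot h2
    refine ⟨φ z, hφσ z, ?_, ?_⟩
    · intro h
      rw [map_eq_zero] at h
      rw [h] at hz
      exact hJd (by simpa using hz)
    · rw [← hJdet, ← map_mul, ← hz, map_neg, neg_neg])
  set B := Matrix.toBilin' J with hBdef
  have hB : ∀ x y, B x y = B y x := by
    intro x y
    rw [hBdef, Matrix.toBilin'_apply', Matrix.toBilin'_apply', dotProduct_comm, ← Matrix.vecMul_transpose, hJsym,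
      Matrix.dotProduct_mulVec]
  have hBE : ∀ x y, Matrix.toBilin' j x y = Matrix.toBilin' j y x := by
    intro x y
    rw [Matrix.toBilin'_apply', Matrix.toBilin'_apply', dotProduct_comm, ← Matrix.vecMul_transpose, hjsym,
      Matrix.dotProduct_mulVec]
  set w : Fin n → F := fun l => B (v l) (v l) with hw
  have hw0 : ∀ l, w l ≠ 0 := hv0
  change ¬ IsSquare (-(w i * w k)) at hnsq
  have hδ : ¬ IsSquare (-(w k / w i)) := by
    rintro ⟨z, hz⟩
    apply hnsq
    refine ⟨w i * z, ?_⟩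
    have := hw0 i
    have h3 : w k = -(z * z) * w i := by rw [← hz]; field_simp
    rw [h3]; ring
  set δ := -(w k / w i) with hδdef
  have hδw : w k = -δ * w i := by
    have := hw0 i
    rw [hδdef]; field_simp
  obtain ⟨c, hc0, ⟨x, y, hcxy⟩, hcn⟩ := key_hilbert p hesq hδ
  let vE : Fin n → Fin n → E := fun l m => φ (v l m)
  have hvE : ∀ a b, Matrix.toBilin' j (vE a) (vE b) = φ (B (v a) (v b)) := by
    intro a b
    rw [hBdef, Matrix.toBilin'_apply, Matrix.toBilin'_apply, ← hJm]
    simp [map_sum, vE]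
  have hvEo : ∀ a b, a ≠ b → Matrix.toBilin' j (vE a) (vE b) = 0 := by
    intro a b hab
    rw [hvE, hv a b hab, map_zero]
  have hvEw : ∀ a, Matrix.toBilin' j (vE a) (vE a) = φ (w a) := fun a => hvE a a
  have hXY : (φ x) ^ 2 - φ δ * (ι * φ y) ^ 2 = φ c := by
    rw [hcxy]
    simp only [map_sub, map_mul, map_pow, he]
    ring
  obtain ⟨r1, r2, r3, r4⟩ := repl_orth (Matrix.toBilin' j) hBE vE hvEo i k hik
    (φ x) (ι * φ y) (φ δ * (ι * φ y)) (φ x) (by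
      rw [hvEw, hvEw, hδw]; simp only [map_mul, map_neg]; ring)
  set h := repl vE i k (φ x) (ι * φ y) (φ δ * (ι * φ y)) (φ x) with hh
  let q : Fin n → F := fun l => if l ∈ ({i, k} : Finset (Fin n)) then c else 1
  have hgram : ∀ l, Matrix.toBilin' j (h l) (h l) = φ (q l * w l) := by
    intro l
    by_cases hl : l = i
    · subst hl
      rw [r2, hvEw, hvEw, hδw]
      simp only [q, Finset.mem_insert, true_or, if_true, map_mul, map_neg]
      rw [← hXY]; ring
    · by_cases hl' : l = k
      · subst hl'
        rw [r3, hvEw, hvEw]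
        simp only [q, Finset.mem_insert, Finset.mem_singleton, or_true, if_true, map_mul]
        have hδφ : φ (w l) = -φ δ * φ (w i) := by rw [← map_neg, ← map_mul, ← hδw]
        linear_combination (φ δ * (ι * φ y) ^ 2) * hδφ + φ (w l) * hXY
      · rw [r4 l hl hl', hvEw]
        simp [q, hl, hl']
  set D : Matrix (Fin n) (Fin n) E := Matrix.diagonal (fun l => φ (q l * w l)) with hD
  have hgD : (Matrix.of h) * j * (Matrix.of h)ᵀ = D := by
    ext a b
    rw [gramv_apply, hD, Matrix.diagonal_apply]
    split_ifs with hab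
    · subst hab; exact hgram a
    · exact r1 a b hab
  have hgv : (Matrix.of v) * J * (Matrix.of v)ᵀ = Matrix.diagonal w := by
    ext a b
    rw [gramv_apply, Matrix.diagonal_apply]
    split_ifs with hab
    · subst hab; rfl
    · exact hv a b hab
  have hdv := congrArg Matrix.det hgv
  rw [Matrix.det_mul, Matrix.det_mul, Matrix.det_transpose, Matrix.det_diagonal] at hdv
  have hdg := congrArg Matrix.det hgD
  have hq : ∏ l, q l = c ^ 2 := by
    simp only [q]
    rw [Finset.prod_ite_mem, Finset.univ_inter, Finset.prod_const, Finset.card_pair hik]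
  rw [Matrix.det_mul, Matrix.det_mul, Matrix.det_transpose, hD, Matrix.det_diagonal, ← map_prod,
    Finset.prod_mul_distrib, hq, ← hdv, ← hJdet] at hdg
  have hPd : (Matrix.of v).det ≠ 0 := by
    intro h0
    rw [h0] at hdv
    simp at hdv
    exact (Finset.prod_ne_zero_iff.mpr fun a _ => hw0 a) hdv.symm
  have hsqd : (Matrix.of h).det ^ 2 = (φ (c * (Matrix.of v).det)) ^ 2 := by
    have h3 : φ J.det ≠ 0 := by rw [hJdet]; exact hjd
    apply mul_right_cancel₀ h3
    simp only [map_mul, map_pow] at hdg ⊢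
    linear_combination hdg
  have hdfix : ∃ z, z ≠ 0 ∧ (Matrix.of h).det = φ z := by
    rcases sq_eq_sq_iff_eq_or_eq_neg.mp hsqd with h3 | h3
    · exact ⟨_, mul_ne_zero hc0 hPd, h3⟩
    · exact ⟨-(c * (Matrix.of v).det), neg_ne_zero.mpr (mul_ne_zero hc0 hPd), by rw [h3, map_neg]⟩
  obtain ⟨z, hz0, hz⟩ := hdfix
  obtain ⟨f, hf1, hf2⟩ := orbit_desc σ hσσ j (Matrix.of h)ᵀ D (by ext a b; exact hjF a b)
    (by rw [hD, Matrix.diagonal_map (map_zero σ)]; congr 1; ext l; exact hφσ _)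
    (by rw [Matrix.transpose_transpose]; exact hgD)
    (by rw [Matrix.det_transpose, hz]; exact (map_ne_zero φ).mpr hz0)
    (by rw [Matrix.det_transpose, hz, hφσ]) horb
  choose fF hfF using fun a => fun b => hfix (f b a) (congrFun (congrFun hf1 b) a)
  have hfB : ∀ a b, φ (B (fF a) (fF b)) = D a b := by
    intro a b
    rw [← hf2]
    have : f = (Matrix.of (fun l m => φ (fF l m)))ᵀ := by
      ext a b; exact (hfF b a).symm
    rw [this, Matrix.transpose_transpose, gramv_apply, hBdef, Matrix.toBilin'_apply, Matrix.toBilin'_apply, ← hJm]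
    simp [map_sum]
  have hfd : ∀ a, B (fF a) (fF a) = q a * w a := by
    intro a
    apply φ.injective
    rw [hfB, hD, Matrix.diagonal_apply_eq]
  obtain ⟨x', y', hxy⟩ := witt_main (by simp) two_ne_zero B hB v hv hv0 fF (by
    intro a b hab
    apply φ.injective
    rw [hfB, hD, Matrix.diagonal_apply_ne _ hab, map_zero]) i k hik (by
    intro a h1 h3
    rw [hfd]
    simp [q, h1, h3, hw])
  apply hcn
  refine ⟨x', y', ?_⟩
  rw [hfd] at hxy
  change q i * w i = x' ^ 2 * w i + y' ^ 2 * w k at hxy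
  have hqi : q i = c := by simp [q]
  rw [hqi, hδw] at hxy
  apply mul_right_cancel₀ (hw0 i)
  linear_combination hxy

open OrthPair in
theorem forward_main (p : ℕ) [Fact p.Prime]
    (E : Type) [Field E] [Algebra ℚ_[p] E] [FiniteDimensional ℚ_[p] E]
    (σ : E ≃ₐ[ℚ_[p]] E) (hσ2 : σ * σ = 1)
    (ι : E) (hι1 : σ ι ≠ ι) (hι2 : σ (ι * ι) = ι * ι)
    (n : ℕ) (hn : 2 ≤ n)
    (j : Matrix (Fin n) (Fin n) E)
    (hjF : ∀ a b, σ (j a b) = j a b) (hjU : IsUnit j) (hjsym : jᵀ = j)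
    (horb : ∃ x₀, SXj ⇑σ j x₀ ∧ ∀ x, SXj ⇑σ j x → orbSG ⇑σ j x₀ x)
    (hnot : n = 2 → ¬ ∃ c, σ c = c ∧ c ≠ 0 ∧ j.det = -(c * c)) : False := by
  let F := IntermediateField.fixedField (Subgroup.zpowers σ)
  have hmem : ∀ x : E, x ∈ F ↔ σ x = x := by
    intro x
    rw [IntermediateField.mem_fixedField_iff]
    constructor
    · intro h
      exact h σ (Subgroup.mem_zpowers σ)
    · intro h f hf
      have : Subgroup.zpowers σ ≤ MulAction.stabilizer (E ≃ₐ[ℚ_[p]] E) x := by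
        rw [Subgroup.zpowers_le]; exact h
      exact this hf
  exact forward_aux p (F := F) (algebraMap F E) (σ : E →+* E)
    (fun x => by have := DFunLike.congr_fun hσ2 x; exact this)
    (fun y => (hmem _).mp y.2) (fun x hx => ⟨⟨x, (hmem x).mpr hx⟩, rfl⟩) ι hι1 hι2 n hn j hjF hjU hjsym horb hnot

open OrthPair in
theorem back_one {E : Type} [Field E] (σ : E →+* E) (j : Matrix (Fin 1) (Fin 1) E) :
    (∃ x₀, SXj ⇑σ j x₀ ∧ ∀ x, SXj ⇑σ j x → orbSG ⇑σ j x₀ x) := by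
  refine ⟨1, ⟨⟨⟨isUnit_one, by simp⟩, by simp⟩, by simp⟩, ?_⟩
  rintro x ⟨_, hx⟩
  refine ⟨1, ⟨isUnit_one, by simp⟩, by simp, ?_⟩
  ext a b
  rw [Matrix.det_fin_one] at hx
  fin_cases a; fin_cases b
  simpa using hx

open OrthPair in
theorem back_two {E : Type} [Field E] [CharZero E] (σ : E →+* E) 
    (hσσ : ∀ x, σ (σ x) = x) (ι : E) (hι1 : σ ι ≠ ι) (hι2 : σ (ι * ι) = ι * ι)
    (j : Matrix (Fin 2) (Fin 2) E)
    (hjF : ∀ a b, σ (j a b) = j a b) (hjsym : jᵀ = j)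
    (c : E) (hc : σ c = c) (hc0 : c ≠ 0) (hdet : j.det = -(c * c)) :
    (∃ x₀, SXj ⇑σ j x₀ ∧ ∀ x, SXj ⇑σ j x → orbSG ⇑σ j x₀ x) := by
  have hι : σ ι = -ι := by
    rw [map_mul] at hι2
    have : (σ ι - ι) * (σ ι + ι) = 0 := by linear_combination hι2
    rcases mul_eq_zero.mp this with h | h
    · exact absurd (sub_eq_zero.mp h) hι1
    · exact eq_neg_of_add_eq_zero_left h
  have hι0 : ι ≠ 0 := by rintro rfl; simp at hι1
  have h2 : (2 : E) ≠ 0 := two_ne_zero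
  refine ⟨1, ⟨⟨⟨isUnit_one, by simp⟩, by simp⟩, by simp⟩, ?_⟩
  rintro x ⟨⟨⟨_, hxj⟩, hxσ⟩, hx⟩
  have hsym : j 1 0 = j 0 1 := congrFun (congrFun hjsym 0) 1
  -- the generator
  set J : Matrix (Fin 2) (Fin 2) E := !![j 0 1 / c, j 1 1 / c; -(j 0 0 / c), -(j 0 1 / c)] with hJ
  rw [Matrix.det_fin_two, hsym] at hdet
  have hJJ : J * J = 1 := by
    ext a b
    fin_cases a <;> fin_cases b <;> simp [hJ] <;> field_simp <;> first | ring1 | linear_combination -hdet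
  have hJσ : J.map σ = J := by
    ext a b
    fin_cases a <;> fin_cases b <;> simp [hJ, hc, hjF]
  have hJd : ∀ a b : E, (a • (1 : Matrix (Fin 2) (Fin 2) E) + b • J).det = a ^ 2 - b ^ 2 := by
    intro a b
    rw [Matrix.det_fin_two]
    simp [hJ]
    field_simp
    linear_combination b ^ 2 * hdet
  have hJj : ∀ a b : E, (a • (1 : Matrix (Fin 2) (Fin 2) E) + b • J)ᵀ * j * (a • 1 + b • J) = (a ^ 2 - b ^ 2) • j := by
    intro a b
    have hJt : Jᵀ * j = -(j * J) := by
      ext k l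
      fin_cases k <;> fin_cases l <;> simp [hJ, Matrix.mul_apply, Fin.sum_univ_two, hsym] <;> ring
    have hjJJ : j * J * J = j := by rw [Matrix.mul_assoc, hJJ, Matrix.mul_one]
    simp only [Matrix.transpose_add, Matrix.transpose_smul, Matrix.transpose_one, Matrix.add_mul, Matrix.mul_add,
      Matrix.smul_mul, Matrix.mul_smul, Matrix.one_mul, Matrix.mul_one, hJt, Matrix.neg_mul, hjJJ]
    module
  have hform : ∃ a b : E, x = a • 1 + b • J := by
    have hadj : j * x = (x.adjugate)ᵀ * j := by
      have h3 : (x.adjugate)ᵀ * xᵀ = 1 := by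
        rw [← Matrix.transpose_mul, Matrix.mul_adjugate, hx]; simp
      calc j * x = ((x.adjugate)ᵀ * xᵀ) * (j * x) := by rw [h3, Matrix.one_mul]
        _ = (x.adjugate)ᵀ * (xᵀ * j * x) := by simp only [Matrix.mul_assoc]
        _ = _ := by rw [hxj]
    have q00 := congrFun (congrFun hadj 0) 0
    have q01 := congrFun (congrFun hadj 0) 1
    have q11 := congrFun (congrFun hadj 1) 1
    rw [Matrix.adjugate_fin_two] at q00 q01 q11
    simp [Matrix.mul_apply, Fin.sum_univ_two, hsym] at q00 q01 q11
    have hc2 : c * c = j 0 1 * j 0 1 - j 0 0 * j 1 1 := by linear_combination hdet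
    refine ⟨(x 0 0 + x 1 1) / 2, ((x 0 0 - x 1 1) / 2 * j 0 1 + x 1 0 * j 1 1) / c, ?_⟩
    have f1 : ((x 0 0 - x 1 1) / 2 * j 0 1 + x 1 0 * j 1 1) / c * (j 0 1 / c) = (x 0 0 - x 1 1) / 2 := by
      field_simp
      linear_combination (-(x 0 0 - x 1 1)) * hc2 + j 1 1 * q00
    have f2 : ((x 0 0 - x 1 1) / 2 * j 0 1 + x 1 0 * j 1 1) / c * (j 1 1 / c) = x 0 1 := by
      field_simp
      linear_combination (-2 * x 0 1) * hc2 - j 0 1 * q11 + 2 * j 1 1 * q01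
    have f3 : ((x 0 0 - x 1 1) / 2 * j 0 1 + x 1 0 * j 1 1) / c * (j 0 0 / c) = -x 1 0 := by
      field_simp
      linear_combination (2 * x 1 0) * hc2 + j 0 1 * q00
    ext k l
    fin_cases k <;> fin_cases l <;> simp [hJ]
    · rw [f1]; ring
    · rw [f2]
    · rw [f3]; ring
    · rw [f1]; ring
  obtain ⟨a, b, hab⟩ := hform
  have hd := hJd a b
  rw [← hab, hx] at hd
  have hmap : ∀ a b : E, (a • (1 : Matrix (Fin 2) (Fin 2) E) + b • J).map σ = σ a • 1 + σ b • J := by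
    intro a b
    rw [← hJσ]
    ext k l
    fin_cases k <;> fin_cases l <;> simp [Matrix.map_apply, hJ, hc, hjF]
  have hmul : ∀ a b c d : E, (a • (1 : Matrix (Fin 2) (Fin 2) E) + b • J) * (c • 1 + d • J) =
      (a * c + b * d) • 1 + (a * d + b * c) • J := by
    intro a b c d
    simp only [Matrix.add_mul, Matrix.mul_add, Matrix.smul_mul, Matrix.mul_smul, hJJ, Matrix.one_mul, Matrix.mul_one]
    module
  have hcoef : σ a = a ∧ σ b = -b := by
    have h3 : x * (a • 1 + (-b) • J) = 1 := by
      rw [hab, hmul]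
      have e1 : a * a + b * -b = 1 := by linear_combination -hd
      have e2 : a * -b + b * a = 0 := by ring
      rw [e1, e2]; simp
    have h4 : (a • 1 + (-b) • J) * x = 1 := by
      rw [hab, hmul]
      have e1 : a * a + -b * b = 1 := by linear_combination -hd
      have e2 : a * b + -b * a = 0 := by ring
      rw [e1, e2]; simp
    have h5 : x.map σ = a • 1 + (-b) • J := by
      calc x.map σ = (a • 1 + (-b) • J) * x * x.map σ := by rw [h4, Matrix.one_mul]
        _ = _ := by rw [Matrix.mul_assoc, hxσ, Matrix.mul_one]
    rw [hab, hmap] at h5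
    have z0 : (σ a - a) • (1 : Matrix (Fin 2) (Fin 2) E) + (σ b + b) • J = 0 := by
      have : (σ a - a) • (1 : Matrix (Fin 2) (Fin 2) E) + (σ b + b) • J =
        (σ a • 1 + σ b • J) - (a • 1 + (-b) • J) := by module
      rw [this, h5, sub_self]
    have z1 := congrFun (congrFun z0 0) 0
    have z2 := congrFun (congrFun z0 1) 1
    simp [hJ] at z1 z2
    have z3 : σ a - a = 0 := by
      have : 2 * (σ a - a) = 0 := by linear_combination z1 + z2
      simpa using this
    have z4 := hJd (σ a - a) (σ b + b)
    rw [z0, z3] at z4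
    have z5 : σ b + b = 0 := by
      have : (σ b + b) ^ 2 = 0 := by
        simp at z4
        rw [z4]; simp
      simpa using this
    exact ⟨sub_eq_zero.mp z3, eq_neg_of_add_eq_zero_left z5⟩
  obtain ⟨ha, hb⟩ := hcoef
  have ht : (a + b) * (a - b) = 1 := by linear_combination -hd
  have hst : ∃ s : E, s ≠ 0 ∧ s = (a + b) * σ s := by
    by_cases h : 1 + (a + b) = 0
    · refine ⟨ι, hι0, ?_⟩
      rw [hι]; linear_combination ι * h
    · refine ⟨1 + (a + b), h, ?_⟩
      rw [map_add, map_add, ha, hb, map_one]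
      linear_combination -ht
  obtain ⟨s, hs0, hs⟩ := hst
  have hss0 : σ s ≠ 0 := (map_ne_zero σ).mpr hs0
  set A := (s + s⁻¹) / 2 with hA
  set C := (s - s⁻¹) / 2 with hC
  have hAC : A ^ 2 - C ^ 2 = 1 := by
    rw [hA, hC]; field_simp; ring
  have hσA : σ A = (σ s + (σ s)⁻¹) / 2 := by rw [hA]; simp [map_ofNat σ 2]
  have hσC : σ C = (σ s - (σ s)⁻¹) / 2 := by rw [hC]; simp [map_ofNat σ 2]
  have hσAC : σ A ^ 2 - σ C ^ 2 = 1 := by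
    rw [hσA, hσC]; field_simp; ring
  have hgd := hJd A C
  rw [hAC] at hgd
  refine ⟨A • 1 + C • J, ⟨?_, ?_⟩, hgd, ?_⟩
  · rw [Matrix.isUnit_iff_isUnit_det, hgd]; exact isUnit_one
  · rw [hJj, hAC, one_smul]
  · have hinv : ((A • (1 : Matrix (Fin 2) (Fin 2) E) + C • J).map σ)⁻¹ = σ A • 1 + (-σ C) • J := by
      apply Matrix.inv_eq_right_inv
      rw [hmap, hmul]
      have e1 : σ A * σ A + σ C * -σ C = 1 := by linear_combination hσAC
      have e2 : σ A * -σ C + σ C * σ A = 0 := by ring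
      rw [e1, e2]; simp
    rw [hinv, Matrix.mul_one, hmul, hab]
    have hapb : a + b = s / σ s := by rw [eq_div_iff hss0]; exact hs.symm
    have hamb : a - b = σ s / s := by
      have : a + b ≠ 0 := left_ne_zero_of_mul_eq_one ht
      apply mul_left_cancel₀ this
      rw [ht, hapb]; field_simp
    have e1 : a = A * σ A + C * -σ C := by
      rw [hσA, hσC, hA, hC]
      have : a = (s / σ s + σ s / s) / 2 := by rw [← hapb, ← hamb]; ring
      rw [this]; field_simp; ring
    have e2 : b = A * -σ C + C * σ A := by
      rw [hσA, hσC, hA, hC]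
      have : b = (s / σ s - σ s / s) / 2 := by rw [← hapb, ← hamb]; ring
      rw [this]; field_simp; ring
    rw [← e1, ← e2]


/-- In the orthogonal case, `SX^j` is a single `SG^j(E)`-orbit if and
only if either `n = 1`, or `n = 2` and `det j ∈ -F^{×2}`.  (`F` is the fixed field of `σ`,
and `ι ∈ E \ F` satisfies `ι² ∈ F`.) -/
theorem stmt_11 (p : ℕ) [Fact p.Prime]
    (E : Type) [Field E] [Algebra ℚ_[p] E] [FiniteDimensional ℚ_[p] E]
    (σ : E ≃ₐ[ℚ_[p]] E) (hσ1 : σ ≠ 1) (hσ2 : σ * σ = 1)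
    (ι : E) (hι1 : σ ι ≠ ι) (hι2 : σ (ι * ι) = ι * ι)
    (n : ℕ) (hn : 1 ≤ n)
    (j : Matrix (Fin n) (Fin n) E)
    (hjF : ∀ a b, σ (j a b) = j a b) (hjU : IsUnit j) (hjsym : jᵀ = j) :
    (∃ x₀, SXj ⇑σ j x₀ ∧ ∀ x, SXj ⇑σ j x → orbSG ⇑σ j x₀ x) ↔
      (n = 1 ∨ (n = 2 ∧ ∃ c, σ c = c ∧ c ≠ 0 ∧ j.det = -(c * c))) := by
  constructor
  · intro horb
    by_contra hnot
    push Not at hnot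
    exact forward_main p E σ hσ2 ι hι1 hι2 n (by omega) j hjF hjU hjsym horb (by
      rintro h2 ⟨c, h3, h4, h5⟩
      exact hnot.2 h2 c h3 h4 h5)
  · have hchar : CharZero E := charZero_of_injective_algebraMap (algebraMap ℚ_[p] E).injective
    rintro (rfl | ⟨rfl, c, hc, hc0, hdet⟩)
    · exact back_one (σ : E →+* E) j
    · exact back_two (σ : E →+* E) (fun x => DFunLike.congr_fun hσ2 x) ι hι1 hι2 j hjF hjsym c hc hc0 hdet
end

section
/- In the orthogonal case, X^j \ SX^j is a single SG^j(E)-orbit if and only if either n = 1, or n = 2 and det j ∈ -ı²·F^{×2}. -/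
open Matrix

open OrthPair


theorem OPsq_units {O : Type*} [CommRing O] [IsDomain O] [IsLocalRing O] (t : O) (ht0 : t ≠ 0)
    (h20 : (2 : O) ≠ 0) (htm : ¬ IsUnit t)
    (hsol : ∀ y : O, ∃ x, x + 2 * t * (x * x) = y)
    (hfin : Finite (O ⧸ Ideal.span {4 * t})) :
    (powMonoidHom 2 : Oˣ →* Oˣ).range.index = 2 * Nat.card (O ⧸ Ideal.span {(2 : O)}) := by
  classical
  set f : Oˣ →* Oˣ := powMonoidHom 2 with hf
  set q : Oˣ →* (O ⧸ Ideal.span {4 * t})ˣ :=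
    Units.map (Ideal.Quotient.mk (Ideal.span {4 * t})).toMonoidHom with hq
  set V := q.ker with hV
  have h40 : (4 * t : O) ≠ 0 := by
    have : (4 : O) = 2 * 2 := by norm_num
    rw [this]; exact mul_ne_zero (mul_ne_zero h20 h20) ht0
  have hVmem : ∀ u : Oˣ, u ∈ V ↔ ∃ x : O, (u : O) = 1 + 4 * t * x := by
    intro u
    rw [hV, MonoidHom.mem_ker, Units.ext_iff]
    simp only [hq, Units.coe_map, RingHom.toMonoidHom_eq_coe, MonoidHom.coe_coe, Units.val_one]
    rw [← map_one (Ideal.Quotient.mk (Ideal.span {4 * t})), Ideal.Quotient.eq,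
      Ideal.mem_span_singleton]
    constructor
    · rintro ⟨x, hx⟩; exact ⟨x, by rw [← hx]; ring⟩
    · rintro ⟨x, hx⟩; exact ⟨x, by rw [hx]; ring⟩
  have hunit : ∀ x : O, IsUnit (1 + 4 * t * x) := by
    intro x
    have : (4 * t * x) ∈ IsLocalRing.maximalIdeal O := by
      have h1 : t ∈ IsLocalRing.maximalIdeal O := by
        rw [IsLocalRing.mem_maximalIdeal]; exact htm
      have := Ideal.mul_mem_left _ (4 * x) h1
      convert this using 1; ring
    have h2 := IsLocalRing.isUnit_one_sub_self_of_mem_nonunits (-(4*t*x))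
      ((IsLocalRing.mem_maximalIdeal _).1 ((Ideal.neg_mem_iff _).2 this))
    simpa using h2
  have hVfin : V.index ≠ 0 := by
    rw [hV, Subgroup.index_ker]
    exact Nat.card_pos.ne'
  have hV'mem : ∀ u : Oˣ, u ∈ V.map f ↔ ∃ x : O, (u : O) = 1 + 8 * t * x := by
    intro u
    rw [Subgroup.mem_map]
    constructor
    · rintro ⟨v, hv, rfl⟩
      obtain ⟨x, hx⟩ := (hVmem v).1 hv
      refine ⟨x + 2 * t * (x * x), ?_⟩
      simp only [hf, powMonoidHom_apply, Units.val_pow_eq_pow_val, hx]; ring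
    · rintro ⟨y, hy⟩
      obtain ⟨x, hx⟩ := hsol y
      refine ⟨(hunit x).unit, (hVmem _).2 ⟨x, rfl⟩, ?_⟩
      ext
      simp only [hf, powMonoidHom_apply, Units.val_pow_eq_pow_val, hy, ← hx, IsUnit.unit_spec]; ring
  -- kernel
  have hker : V.relIndex f.ker = 2 := by
    have hm1 : (-1 : Oˣ) ∉ V := by
      intro h
      obtain ⟨x, hx⟩ := (hVmem _).1 h
      apply htm
      have : (2 : O) * (1 + t * (2 * x)) = 0 := by
        have : (-1 : O) = 1 + 4 * t * x := by simpa using hx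
        linear_combination (-this)
      rcases mul_eq_zero.1 this with h | h
      · exact absurd h h20
      · exact IsUnit.of_mul_eq_one (-(2*x)) (by linear_combination -h)
    have hfk : ∀ u : Oˣ, u ∈ f.ker ↔ u = 1 ∨ u = -1 := by
      intro u
      rw [MonoidHom.mem_ker, hf, powMonoidHom_apply]
      constructor
      · intro h
        have h2 : (u : O) ^ 2 = 1 := by rw [← Units.val_pow_eq_pow_val, h]; rfl
        rcases mul_self_eq_one_iff.1 ((sq (u : O)).symm.trans h2) with h | h
        · left; ext; exact h
        · right; ext; simpa using h
      · rintro (rfl | rfl) <;> simp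
    have hne : (1 : Oˣ) ≠ -1 := by
      intro h
      exact hm1 (h ▸ V.one_mem)
    have hinf : V ⊓ f.ker = ⊥ := by
      rw [eq_bot_iff]
      rintro u ⟨h1, h2⟩
      rcases (hfk u).1 h2 with rfl | rfl
      · simp
      · exact absurd h1 hm1
    rw [← Subgroup.inf_relIndex_right, hinf, Subgroup.relIndex_bot_left]
    have : (f.ker : Set Oˣ) = {1, -1} := by ext u; simpa using hfk u
    change Nat.card (f.ker : Set Oˣ) = 2
    rw [Nat.card_coe_set_eq, this, Set.ncard_pair hne]
  -- relative index
  have hrel : (V.map f).relIndex V = Nat.card (O ⧸ Ideal.span {(2 : O)}) := by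
    choose c hc using fun v : V => (hVmem v.1).1 v.2
    let φ : V →* Multiplicative (O ⧸ Ideal.span {(2 : O)}) :=
      { toFun := fun v => Multiplicative.ofAdd (Ideal.Quotient.mk _ (c v))
        map_one' := by
          have h := hc 1
          have : 4 * t * c 1 = 0 := by
            have h' : (1 : O) = 1 + 4 * t * c 1 := by simpa using h
            linear_combination -h'
          rw [(mul_eq_zero.1 this).resolve_left h40]; simp
        map_mul' := by
          intro a b
          rw [← ofAdd_add, ← map_add]
          congr 1
          rw [Ideal.Quotient.eq, Ideal.mem_span_singleton]
          refine ⟨2 * t * (c a * c b), ?_⟩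
          have h := hc (a * b)
          have h1 : ((a : Oˣ) : O) * (b : Oˣ) = 1 + 4 * t * c (a * b) := by simpa using h
          rw [hc a, hc b] at h1
          apply mul_left_cancel₀ h40
          linear_combination -h1 }
    have hsurj : Function.Surjective φ := by
      intro y
      obtain ⟨x, hx⟩ := Ideal.Quotient.mk_surjective (Multiplicative.toAdd y)
      let v : V := ⟨(hunit x).unit, (hVmem _).2 ⟨x, rfl⟩⟩
      refine ⟨v, ?_⟩
      have h := hc v
      have h2 : (1 + 4 * t * x : O) = 1 + 4 * t * c v := h
      have h3 : c v = x := by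
        apply mul_left_cancel₀ h40
        linear_combination -h2
      change Multiplicative.ofAdd (Ideal.Quotient.mk _ (c v)) = y
      rw [h3, hx]; rfl
    have hkφ : φ.ker = (V.map f).subgroupOf V := by
      ext v
      rw [MonoidHom.mem_ker, Subgroup.mem_subgroupOf, hV'mem]
      change Multiplicative.ofAdd (Ideal.Quotient.mk _ (c v)) = 1 ↔ _
      rw [ofAdd_eq_one, Ideal.Quotient.eq_zero_iff_mem, Ideal.mem_span_singleton]
      constructor
      · rintro ⟨x, hx⟩; exact ⟨x, by rw [hc v, hx]; ring⟩
      · rintro ⟨x, hx⟩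
        refine ⟨x, ?_⟩
        apply mul_left_cancel₀ h40
        have := hc v
        rw [hx] at this
        linear_combination -this
    rw [Subgroup.relIndex, ← hkφ, Subgroup.index_ker, MonoidHom.range_eq_top.2 hsurj]
    simp [Nat.card_congr Multiplicative.toAdd]
  have hle : V.map f ≤ V := by
    intro u hu
    obtain ⟨x, hx⟩ := (hV'mem u).1 hu
    exact (hVmem u).2 ⟨2 * x, by rw [hx]; ring⟩
  have e1 := Subgroup.relIndex_mul_index hle
  have e2 := Subgroup.index_map V f
  have e3 := Subgroup.relIndex_mul_index (le_sup_left : V ≤ V ⊔ f.ker)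
  rw [Subgroup.relIndex_sup_left, hker] at e3
  rw [hrel, e2, ← e3] at e1
  have hpos : (V ⊔ f.ker).index ≠ 0 := by
    intro h; rw [h] at e3; exact hVfin (by simpa using e3.symm)
  apply mul_left_cancel₀ hpos
  rw [← e1]; ring

theorem OPsq_field {O K : Type*} [CommRing O] [IsDomain O] [IsDiscreteValuationRing O]
    [Field K] [Algebra O K] [IsFractionRing O K] :
    (powMonoidHom 2 : Kˣ →* Kˣ).range.index =
      2 * (powMonoidHom 2 : Oˣ →* Oˣ).range.index := by
  classical
  obtain ⟨ϖ, hϖ⟩ := IsDiscreteValuationRing.exists_irreducible O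
  have hinj := IsFractionRing.injective O K
  set i : Oˣ →* Kˣ := Units.map (algebraMap O K).toMonoidHom with hi
  have hival : ∀ u : Oˣ, ((i u : Kˣ) : K) = algebraMap O K u := fun u => rfl
  set S := (powMonoidHom 2 : Kˣ →* Kˣ).range with hS
  have hSmem : ∀ x : Kˣ, x ∈ S ↔ ∃ y, y ^ 2 = x := fun x => by rw [hS, MonoidHom.mem_range]; rfl
  have hπ0 : algebraMap O K ϖ ≠ 0 := by
    rw [Ne, map_eq_zero_iff _ hinj]; exact hϖ.ne_zero
  set π : Kˣ := Units.mk0 _ hπ0 with hπ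
  have hrep : ∀ x : Kˣ, ∃ (u : Oˣ) (n : ℤ), x = i u * π ^ n := by
    have h0 : ∀ a : O, a ≠ 0 → ∃ (u : Oˣ) (n : ℕ), algebraMap O K a = i u * π ^ n := by
      intro a ha
      obtain ⟨n, u, hu⟩ := IsDiscreteValuationRing.eq_unit_mul_pow_irreducible ha hϖ
      exact ⟨u, n, by rw [hu]; simp [hival, hπ]⟩
    intro x
    obtain ⟨a, b, hb, hab⟩ := IsFractionRing.div_surjective (A := O) (x : K)
    have hb0 : b ≠ 0 := nonZeroDivisors.ne_zero hb
    have ha0 : a ≠ 0 := by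
      rintro rfl
      apply x.ne_zero; rw [← hab]; simp
    obtain ⟨u, n, h1⟩ := h0 a ha0
    obtain ⟨v, m, h2⟩ := h0 b hb0
    refine ⟨u * v⁻¹, n - m, ?_⟩
    have h3 : x * (i v * π ^ m) = i u * π ^ n := by
      ext
      push_cast
      rw [← h1, ← h2, ← hab]
      rw [div_mul_cancel₀]
      rwa [Ne, map_eq_zero_iff _ hinj]
    rw [map_mul, map_inv, _root_.zpow_sub, zpow_natCast, zpow_natCast, ← mul_inv_eq_iff_eq_mul.2 h3.symm]
    simp only [mul_inv]
    ac_rfl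
  have hpow : ∀ (n : ℤ) (u : Oˣ), π ^ n = i u → n = 0 := by
    have key : ∀ (n : ℕ) (u : Oˣ), π ^ n = i u → n = 0 := by
      intro n u h
      have h1 : algebraMap O K (ϖ ^ n) = algebraMap O K u := by
        have := congrArg (Units.val) h
        simpa [hπ, hival] using this
      have h2 := hinj h1
      by_contra hn
      apply hϖ.not_isUnit
      have : IsUnit (ϖ ^ n) := h2 ▸ u.isUnit
      exact (isUnit_pow_iff hn).1 this
    intro n u h
    obtain ⟨m, rfl | rfl⟩ := Int.eq_nat_or_neg n
    · rw [zpow_natCast] at h; simp [key m u h]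
    · rw [_root_.zpow_neg, zpow_natCast, inv_eq_iff_eq_inv, ← map_inv] at h
      simp [key m _ h]
  have hcomap : S.comap i = (powMonoidHom 2 : Oˣ →* Oˣ).range := by
    ext u
    rw [Subgroup.mem_comap, hSmem, MonoidHom.mem_range]
    constructor
    · rintro ⟨y, hy⟩
      obtain ⟨v, n, rfl⟩ := hrep y
      have h1 : π ^ (2 * n) = i (u * (v ^ 2)⁻¹) := by
        rw [map_mul, map_inv, map_pow, ← hy, mul_pow, ← zpow_natCast (π ^ n), ← _root_.zpow_mul, mul_comm n]
        simp
      have h2 := hpow _ _ h1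
      have h3 : n = 0 := by omega
      refine ⟨v, ?_⟩
      have h4 : i (v ^ 2) = i u := by rw [← hy, h3]; simp
      ext
      have := congrArg Units.val h4
      rw [hival, hival] at this
      exact hinj this
    · rintro ⟨v, rfl⟩
      exact ⟨i v, by simp [powMonoidHom_apply]⟩
  have hsup : ∀ (u : Oˣ) (n : ℤ), i u * π ^ n ∈ S ⊔ i.range ↔ Even n := by
    intro u n
    rw [Subgroup.mem_sup]
    constructor
    · rintro ⟨y, hy, z, ⟨v, rfl⟩, h⟩
      obtain ⟨y, rfl⟩ := (hSmem y).1 hy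
      obtain ⟨w, m, rfl⟩ := hrep y
      have h1 : π ^ (n - 2 * m) = i (w ^ 2 * v * u⁻¹) := by
        rw [_root_.zpow_sub, map_mul, map_mul, map_inv, map_pow, eq_mul_inv_iff_mul_eq, mul_right_comm, mul_comm (π ^ n), ← h, mul_pow,
          ← zpow_natCast (π ^ m), ← _root_.zpow_mul, mul_comm m]
        push_cast
        rw [mul_inv_eq_iff_eq_mul]
        ac_rfl
      have := hpow _ _ h1
      exact ⟨m, by omega⟩
    · rintro ⟨m, rfl⟩
      refine ⟨(π ^ m) ^ 2, (hSmem _).2 ⟨_, rfl⟩, i u, ⟨u, rfl⟩, ?_⟩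
      rw [_root_.zpow_add, sq, mul_comm]
  have hidx : (S ⊔ i.range).index = 2 := by
    rw [Subgroup.index_eq_two_iff]
    refine ⟨π, fun b => ?_⟩
    obtain ⟨u, n, rfl⟩ := hrep b
    rw [mul_assoc, ← _root_.zpow_add_one, hsup, hsup, Int.even_add_one]
    by_cases h : Even n
    · right; exact ⟨h, by simpa using h⟩
    · left; exact ⟨h, h⟩
  rw [← Subgroup.relIndex_mul_index (le_sup_left : S ≤ S ⊔ i.range), Subgroup.relIndex_sup_left,
    hidx, ← Subgroup.index_comap, hcomap, mul_comm]


section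
variable (p : ℕ) [hp : Fact p.Prime] (K : Type*) [Field K] [Algebra ℚ_[p] K]
  [FiniteDimensional ℚ_[p] K] [Algebra ℤ_[p] K] [IsScalarTower ℤ_[p] ℚ_[p] K]

theorem OPintegral_iff (x : K) : IsIntegral ℤ_[p] x ↔ spectralNorm ℚ_[p] K x ≤ 1 := by
  have hx : IsIntegral ℚ_[p] x := Algebra.IsIntegral.isIntegral x
  rw [spectralNorm, spectralValue_le_one_iff (minpoly.monic hx)]
  constructor
  · intro h n
    rw [minpoly.isIntegrallyClosed_eq_field_fractions' ℚ_[p] h, Polynomial.coeff_map]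
    exact PadicInt.norm_le_one _
  · intro h
    have : minpoly ℚ_[p] x ∈ Polynomial.lifts (algebraMap ℤ_[p] ℚ_[p]) := by
      rw [Polynomial.lifts_iff_coeff_lifts]
      intro n
      exact ⟨⟨_, h n⟩, rfl⟩
    obtain ⟨q, hq1, hq2, hq3⟩ := Polynomial.lifts_and_natDegree_eq_and_monic this (minpoly.monic hx)
    refine ⟨q, hq3, ?_⟩
    have h1 : Polynomial.aeval x (q.map (algebraMap ℤ_[p] ℚ_[p])) = 0 := by
      rw [hq1]; exact minpoly.aeval _ _
    rw [Polynomial.aeval_map_algebraMap] at h1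
    exact h1

theorem OPsolve (y : integralClosure ℤ_[p] K) :
    ∃ x : integralClosure ℤ_[p] K, x + 2 * (p : integralClosure ℤ_[p] K) * (x * x) = y := by
  let _ := spectralNorm.normedField ℚ_[p] K
  have : CompleteSpace K := spectralNorm.completeSpace ℚ_[p] K
  have hna : ∀ a b : K, ‖a + b‖ ≤ max ‖a‖ ‖b‖ := isNonarchimedean_spectralNorm (K := ℚ_[p]) (L := K)
  have hint : ∀ x : K, IsIntegral ℤ_[p] x ↔ ‖x‖ ≤ 1 := OPintegral_iff p K
  have hp1 : ‖(p : K)‖ = (p : ℝ)⁻¹ := by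
    have h := spectralNorm_extends (K := ℚ_[p]) (L := K) (p : ℚ_[p])
    rw [map_natCast] at h
    rw [← Padic.norm_p (p := p)]
    exact h
  have h2 : ‖(2 : K)‖ ≤ 1 := (hint 2).1 (by
    have h := isIntegral_algebraMap (R := ℤ_[p]) (A := K) (x := 2)
    rwa [map_ofNat] at h)
  have hp2 : ‖(2 * p : K)‖ ≤ 1 / 2 := by
    rw [norm_mul, hp1]
    have : (p : ℝ)⁻¹ ≤ 1 / 2 := by
      rw [one_div]
      apply inv_anti₀ (by norm_num)
      exact_mod_cast hp.out.two_le
    have h0 : 0 ≤ (p : ℝ)⁻¹ := by positivity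
    nlinarith [norm_nonneg (2 : K)]
  set f : K → K := fun x => y - 2 * p * (x * x) with hf
  have hneg : ∀ a b : K, ‖a - b‖ ≤ max ‖a‖ ‖b‖ := fun a b => by
    rw [sub_eq_add_neg, ← norm_neg b]; exact hna _ _
  have hy : ‖(y : K)‖ ≤ 1 := (hint _).1 y.2
  have hmaps : Set.MapsTo f (Metric.closedBall 0 1) (Metric.closedBall 0 1) := by
    intro x hx
    rw [mem_closedBall_zero_iff] at hx ⊢
    refine (hneg _ _).trans (max_le hy ?_)
    rw [norm_mul, norm_mul x]
    nlinarith [norm_nonneg x, norm_nonneg (2 * p : K), mul_nonneg (norm_nonneg x) (norm_nonneg x)]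
  have hcontr : ContractingWith (1/2) (hmaps.restrict f _ _) := by
    refine ⟨by rw [← NNReal.coe_lt_coe]; norm_num, LipschitzWith.of_dist_le_mul ?_⟩
    rintro ⟨a, ha⟩ ⟨b, hb⟩
    rw [mem_closedBall_zero_iff] at ha hb
    rw [Subtype.dist_eq, Subtype.dist_eq, dist_eq_norm, dist_eq_norm]
    change ‖f a - f b‖ ≤ _ * ‖a - b‖
    have : f a - f b = (2 * p) * ((b + a) * (b - a)) := by simp only [hf]; ring
    rw [this, norm_mul, norm_mul (b + a), norm_sub_rev b a]
    have h3 : ‖b + a‖ ≤ 1 := (hna _ _).trans (max_le hb ha)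
    push_cast
    apply mul_le_mul hp2 _ (by positivity) (by norm_num)
    nlinarith [norm_nonneg (a - b)]
  obtain ⟨x, hx, hfx, -⟩ := hcontr.exists_fixedPoint' (Metric.isClosed_closedBall.isComplete) hmaps
    (Metric.mem_closedBall_self (by norm_num)) (edist_ne_top _ _)
  rw [mem_closedBall_zero_iff] at hx
  refine ⟨⟨x, (hint x).2 hx⟩, ?_⟩
  apply Subtype.ext
  have h4 : y - 2 * p * (x * x) = x := hfx
  change x + 2 * (p : K) * (x * x) = y
  linear_combination -h4

theorem OPunit_iff (x : integralClosure ℤ_[p] K) : IsUnit x ↔ spectralNorm ℚ_[p] K x = 1 := by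
  have hmul : ∀ a b : K, spectralNorm ℚ_[p] K (a * b) = spectralNorm ℚ_[p] K a * spectralNorm ℚ_[p] K b :=
    fun a b => map_mul (spectralMulAlgNorm ℚ_[p] K) a b
  have h1 : spectralNorm ℚ_[p] K 1 = 1 := map_one (spectralMulAlgNorm ℚ_[p] K)
  constructor
  · intro h
    obtain ⟨y, hy⟩ := h.exists_right_inv
    have h2 := hmul x y
    have h3 : (x : K) * y = 1 := congrArg Subtype.val hy
    rw [h3, h1] at h2
    have hx := (OPintegral_iff p K _).1 x.2
    have hy := (OPintegral_iff p K _).1 y.2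
    have hx0 := spectralNorm_nonneg (K := ℚ_[p]) (x : K)
    nlinarith
  · intro h
    have hx0 : (x : K) ≠ 0 := by
      intro h0; rw [h0, spectralNorm_zero] at h; norm_num at h
    have h2 := hmul x (x : K)⁻¹
    rw [mul_inv_cancel₀ hx0, h1, h, one_mul] at h2
    apply IsUnit.of_mul_eq_one ⟨(x : K)⁻¹, (OPintegral_iff p K _).2 h2.symm.le⟩
    apply Subtype.ext
    exact mul_inv_cancel₀ hx0

theorem OPlocal : IsLocalRing (integralClosure ℤ_[p] K) := by
  apply IsLocalRing.of_nonunits_add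
  intro a b ha hb
  rw [mem_nonunits_iff, OPunit_iff] at *
  have ha' := lt_of_le_of_ne ((OPintegral_iff p K _).1 a.2) ha
  have hb' := lt_of_le_of_ne ((OPintegral_iff p K _).1 b.2) hb
  have := isNonarchimedean_spectralNorm (K := ℚ_[p]) (L := K) (a : K) b
  exact (this.trans_lt (max_lt ha' hb')).ne

theorem OPp_not_unit : ¬ IsUnit (p : integralClosure ℤ_[p] K) := by
  rw [OPunit_iff]
  have h := spectralNorm_extends (K := ℚ_[p]) (L := K) (p : ℚ_[p])
  rw [map_natCast] at h
  push_cast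
  rw [h, Padic.norm_p]
  have : (1 : ℝ) < p := by exact_mod_cast hp.out.one_lt
  exact (inv_lt_one_of_one_lt₀ this).ne

theorem OPcard (a : ℤ_[p]) : Nat.card (integralClosure ℤ_[p] K ⧸
      Ideal.span {algebraMap ℤ_[p] (integralClosure ℤ_[p] K) a}) =
      Nat.card (ℤ_[p] ⧸ Ideal.span {a}) ^ Module.finrank ℚ_[p] K := by
  classical
  have hff : Module.Finite ℤ_[p] (integralClosure ℤ_[p] K) :=
    IsIntegralClosure.finite ℤ_[p] ℚ_[p] K _
  have : Module.IsTorsionFree ℤ_[p] K := by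
    rw [Module.isTorsionFree_iff_algebraMap_injective, IsScalarTower.algebraMap_eq ℤ_[p] ℚ_[p] K]
    exact (algebraMap ℚ_[p] K).injective.comp (IsFractionRing.injective ℤ_[p] ℚ_[p])
  have hfr : Module.Free ℤ_[p] (integralClosure ℤ_[p] K) :=
    IsIntegralClosure.module_free ℤ_[p] ℚ_[p] K _
  have hrk : Module.finrank ℤ_[p] (integralClosure ℤ_[p] K) = Module.finrank ℚ_[p] K :=
    IsIntegralClosure.rank ℤ_[p] ℚ_[p] K _
  let b := Module.finBasisOfFinrankEq ℤ_[p] (integralClosure ℤ_[p] K) hrk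
  let ψ : integralClosure ℤ_[p] K →ₗ[ℤ_[p]] (Fin (Module.finrank ℚ_[p] K) → ℤ_[p] ⧸ Ideal.span {a}) :=
    LinearMap.pi (fun i => (Submodule.mkQ (Ideal.span {a})).comp (b.coord i))
  have hψ : ∀ x i, ψ x i = Submodule.Quotient.mk (b.repr x i) := fun x i => rfl
  have hsurj : Function.Surjective ψ := by
    intro y
    choose z hz using fun i => Submodule.Quotient.mk_surjective _ (y i)
    refine ⟨b.equivFun.symm z, ?_⟩
    funext i
    rw [hψ, ← hz i, ← Module.Basis.equivFun_apply, LinearEquiv.apply_symm_apply]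
  have hker : LinearMap.ker ψ = (Ideal.span {algebraMap ℤ_[p] (integralClosure ℤ_[p] K) a}).restrictScalars ℤ_[p] := by
    ext x
    rw [LinearMap.mem_ker, Submodule.restrictScalars_mem, Ideal.mem_span_singleton]
    constructor
    · intro h
      have : ∀ i, ∃ c, b.repr x i = a * c := by
        intro i
        have h1 := congrFun h i
        rw [hψ, Pi.zero_apply, Submodule.Quotient.mk_eq_zero, Ideal.mem_span_singleton] at h1
        exact h1
      choose c hc using this
      refine ⟨b.equivFun.symm c, ?_⟩
      rw [← Algebra.smul_def]
      apply b.equivFun.injective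
      rw [map_smul, LinearEquiv.apply_symm_apply]
      funext i
      simp [hc]
    · rintro ⟨z, rfl⟩
      rw [← Algebra.smul_def]
      funext i
      rw [hψ, Pi.zero_apply, Submodule.Quotient.mk_eq_zero, Ideal.mem_span_singleton]
      exact ⟨b.repr z i, by simp⟩
  have e1 := Nat.card_congr (ψ.quotKerEquivOfSurjective hsurj).toEquiv
  have e2 := Nat.card_congr (Submodule.quotEquivOfEq _ _ hker).toEquiv
  have e3 := Nat.card_congr (Submodule.Quotient.restrictScalarsEquiv ℤ_[p] (Ideal.span {algebraMap ℤ_[p] (integralClosure ℤ_[p] K) a})).toEquiv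
  rw [← e3, ← e2, e1, Nat.card_fun]
  simp

theorem OPdvr : IsDiscreteValuationRing (integralClosure ℤ_[p] K) := by
  have := OPlocal p K
  have this : IsDedekindDomain (integralClosure ℤ_[p] K) :=
    integralClosure.isDedekindDomain ℤ_[p] ℚ_[p] K
  have hnf : ¬ IsField (integralClosure ℤ_[p] K) := by
    intro h
    apply OPp_not_unit p K
    have : CharZero K := charZero_of_injective_algebraMap (algebraMap ℚ_[p] K).injective
    have hp0 : (p : integralClosure ℤ_[p] K) ≠ 0 := by
      intro h0
      have := congrArg Subtype.val h0
      push_cast at this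
      exact hp.out.ne_zero (by exact_mod_cast this)
    obtain ⟨b, hb⟩ := h.mul_inv_cancel hp0
    exact IsUnit.of_mul_eq_one b hb
  have h := (IsDiscreteValuationRing.TFAE (integralClosure ℤ_[p] K) hnf).out 0 2
  exact h.2 this

theorem OPcardZp : Finite (ℤ_[p] ⧸ Ideal.span {(4 * p : ℤ_[p])}) := by
  have h0 : (4 * p : ℤ_[p]) ≠ 0 :=
    mul_ne_zero (by norm_num) (by exact_mod_cast hp.out.ne_zero)
  obtain ⟨n, hn⟩ := PadicInt.ideal_eq_span_pow_p (p := p) (s := Ideal.span {(4 * p : ℤ_[p])})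
    (by rw [Ne, Ideal.span_singleton_eq_bot]; exact h0)
  rw [hn, ← PadicInt.ker_toZModPow]
  have : NeZero (p ^ n) := ⟨pow_ne_zero _ hp.out.ne_zero⟩
  exact Finite.of_injective _ (RingHom.kerLift_injective (PadicInt.toZModPow (p := p) n))

theorem OPsq_index : (powMonoidHom 2 : Kˣ →* Kˣ).range.index =
    4 * Nat.card (ℤ_[p] ⧸ Ideal.span {(2 : ℤ_[p])}) ^ Module.finrank ℚ_[p] K := by
  have := OPlocal p K
  have := OPdvr p K
  have : CharZero K := charZero_of_injective_algebraMap (algebraMap ℚ_[p] K).injective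
  have : IsFractionRing (integralClosure ℤ_[p] K) K :=
    integralClosure.isFractionRing_of_finite_extension ℚ_[p] K
  have hp0 : (p : integralClosure ℤ_[p] K) ≠ 0 := by
    intro h0
    have := congrArg Subtype.val h0
    push_cast at this
    exact hp.out.ne_zero (by exact_mod_cast this)
  have h20 : (2 : integralClosure ℤ_[p] K) ≠ 0 := by
    intro h0
    have := congrArg Subtype.val h0
    exact two_ne_zero (α := K) this
  rw [OPsq_field (O := integralClosure ℤ_[p] K), OPsq_units (p : integralClosure ℤ_[p] K) hp0 h20
    (OPp_not_unit p K) (OPsolve p K)]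
  · have h := OPcard p K 2
    rw [map_ofNat] at h
    rw [h]; ring
  · have h := OPcard p K (4 * p)
    rw [map_mul, map_ofNat, map_natCast] at h
    apply Nat.finite_of_card_ne_zero
    rw [h]
    have := OPcardZp p
    exact pow_ne_zero _ Nat.card_pos.ne'

end


theorem OPnorm_index (p : ℕ) [hp : Fact p.Prime] (F : Type) [Field F] [Algebra ℚ_[p] F]
    [FiniteDimensional ℚ_[p] F] (a : F) (ha : ∀ r : F, r ^ 2 ≠ a) :
    ∃ H : Subgroup Fˣ, H.index = 2 ∧ ∀ b : Fˣ, b ∈ H ↔ ∃ x y : F, (b : F) = x * x - a * (y * y) := by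
  classical
  have : CharZero F := charZero_of_injective_algebraMap (algebraMap ℚ_[p] F).injective
  have hfact : Fact (∀ r : F, r ^ 2 ≠ a + 0 * r) := ⟨fun r => by simpa using ha r⟩
  have hKfin : Module.Finite F (QuadraticAlgebra F a 0) := inferInstance
  have hKrank : Module.finrank F (QuadraticAlgebra F a 0) = 2 := QuadraticAlgebra.finrank_eq_two a 0
  have hfin2 : FiniteDimensional ℚ_[p] (QuadraticAlgebra F a 0) := Module.Finite.trans F (QuadraticAlgebra F a 0)
  have hrank : Module.finrank ℚ_[p] (QuadraticAlgebra F a 0) = Module.finrank ℚ_[p] F * 2 := by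
    rw [← Module.finrank_mul_finrank ℚ_[p] F (QuadraticAlgebra F a 0), hKrank]
  let _ : Algebra ℤ_[p] F := Algebra.compHom F (algebraMap ℤ_[p] ℚ_[p])
  let _ : Algebra ℤ_[p] (QuadraticAlgebra F a 0) := Algebra.compHom (QuadraticAlgebra F a 0) (algebraMap ℤ_[p] ℚ_[p])
  have : IsScalarTower ℤ_[p] ℚ_[p] F := IsScalarTower.of_algebraMap_eq (fun x => rfl)
  have : IsScalarTower ℤ_[p] ℚ_[p] (QuadraticAlgebra F a 0) := IsScalarTower.of_algebraMap_eq (fun x => rfl)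
  have hf := OPsq_index p F
  have hk := OPsq_index p (QuadraticAlgebra F a 0)
  have hc0 : Nat.card (ℤ_[p] ⧸ Ideal.span {(2 : ℤ_[p])}) ≠ 0 := by
    obtain ⟨n, hn⟩ := PadicInt.ideal_eq_span_pow_p (p := p) (s := Ideal.span {(2 : ℤ_[p])})
      (by rw [Ne, Ideal.span_singleton_eq_bot]; norm_num)
    rw [hn, ← PadicInt.ker_toZModPow]
    have : NeZero (p ^ n) := ⟨pow_ne_zero _ hp.out.ne_zero⟩
    have : Finite (ℤ_[p] ⧸ RingHom.ker (PadicInt.toZModPow (p := p) n)) :=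
      Finite.of_injective _ (RingHom.kerLift_injective (PadicInt.toZModPow (p := p) n))
    exact Nat.card_pos.ne'
  set SF := (powMonoidHom 2 : Fˣ →* Fˣ).range with hSF
  set SK := (powMonoidHom 2 : (QuadraticAlgebra F a 0)ˣ →* (QuadraticAlgebra F a 0)ˣ).range with hSK
  have hSFmem : ∀ x : Fˣ, x ∈ SF ↔ ∃ y, y ^ 2 = x := fun x => by rw [hSF, MonoidHom.mem_range]; rfl
  have hSKmem : ∀ x : (QuadraticAlgebra F a 0)ˣ, x ∈ SK ↔ ∃ y, y ^ 2 = x := fun x => by rw [hSK, MonoidHom.mem_range]; rfl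
  set N : (QuadraticAlgebra F a 0)ˣ →* Fˣ := Units.map (QuadraticAlgebra.norm : (QuadraticAlgebra F a 0) →* F) with hN
  set i : Fˣ →* (QuadraticAlgebra F a 0)ˣ := Units.map (algebraMap F (QuadraticAlgebra F a 0)).toMonoidHom with hi
  have hNval : ∀ z : (QuadraticAlgebra F a 0)ˣ, (N z : F) = QuadraticAlgebra.norm (z : (QuadraticAlgebra F a 0)) := fun z => rfl
  have hival : ∀ z : Fˣ, (i z : (QuadraticAlgebra F a 0)) = algebraMap F (QuadraticAlgebra F a 0) z := fun z => rfl
  have hNi : ∀ z : Fˣ, N (i z) = z ^ 2 := by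
    intro z; ext; rw [hNval, hival, QuadraticAlgebra.norm_algebraMap]; rfl
  have ha0 : a ≠ 0 := fun h => ha 0 (by simp [h])
  have h1 : SF ≤ N.range := by
    intro x hx
    obtain ⟨y, rfl⟩ := (hSFmem x).1 hx
    exact ⟨i y, hNi y⟩
  have h2 : SF.comap N = SK ⊔ i.range := by
    ext z
    rw [Subgroup.mem_comap, hSFmem, Subgroup.mem_sup]
    constructor
    · rintro ⟨c, hc⟩
      by_cases hw : algebraMap F (QuadraticAlgebra F a 0) c + z = 0
      · refine ⟨1, SK.one_mem, i (-c), ⟨_, rfl⟩, ?_⟩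
        ext1
        rw [one_mul, hival, Units.val_neg, map_neg]
        exact (eq_neg_of_add_eq_zero_right hw).symm
      · set w : (QuadraticAlgebra F a 0)ˣ := Units.mk0 _ hw with hw'
        refine ⟨w ^ 2, (hSKmem _).2 ⟨w, rfl⟩, i (c * (N w)⁻¹), ⟨_, rfl⟩, ?_⟩
        rw [map_mul, map_inv, ← mul_assoc, mul_inv_eq_iff_eq_mul]
        ext1
        push_cast
        rw [hival, hival, hNval, QuadraticAlgebra.algebraMap_norm_eq_mul_star]
        have hz : algebraMap F (QuadraticAlgebra F a 0) (c ^ 2 : F) = z * star (z : (QuadraticAlgebra F a 0)) := by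
          rw [← QuadraticAlgebra.algebraMap_norm_eq_mul_star, ← hNval, ← hc]; simp
        have hwv : (w : (QuadraticAlgebra F a 0)) = algebraMap F (QuadraticAlgebra F a 0) c + z := rfl
        have hst : star (algebraMap F (QuadraticAlgebra F a 0) c) = algebraMap F (QuadraticAlgebra F a 0) c := by
          ext <;> simp
        rw [hwv, star_add, hst]
        rw [map_pow] at hz
        linear_combination (algebraMap F (QuadraticAlgebra F a 0) c + z) * hz
    · rintro ⟨y, hy, z, ⟨c, rfl⟩, rfl⟩
      obtain ⟨w, rfl⟩ := (hSKmem y).1 hy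
      exact ⟨N w * c, by rw [map_mul, map_pow, hNi, mul_pow]⟩
  have h3 : SF.relIndex (SK.comap i) = 2 := by
    have hmem : ∀ b : Fˣ, b ∈ SK.comap i ↔ (b ∈ SF ∨ b * Units.mk0 a ha0 ∈ SF) := by
      intro b
      rw [Subgroup.mem_comap, hSKmem, hSFmem, hSFmem]
      constructor
      · rintro ⟨y, hy⟩
        have hy' := congrArg Units.val hy
        rw [hival, Units.val_pow_eq_pow_val, sq] at hy'
        have hre := congrArg QuadraticAlgebra.re hy'
        have him := congrArg QuadraticAlgebra.im hy'
        simp at hre him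
        have : (y : (QuadraticAlgebra F a 0)).re * (y : (QuadraticAlgebra F a 0)).im = 0 := by
          have : 2 * ((y : (QuadraticAlgebra F a 0)).re * (y : (QuadraticAlgebra F a 0)).im) = 0 := by linear_combination him
          simpa using this
        rcases mul_eq_zero.1 this with h | h
        · right
          rw [h] at hre
          have hb : (y : (QuadraticAlgebra F a 0)).im ≠ 0 := by
            intro h0; apply b.ne_zero; rw [← hre, h0]; simp
          refine ⟨Units.mk0 _ hb * Units.mk0 a ha0, ?_⟩
          ext; push_cast; simp only [Units.val_mk0]
          rw [← hre]; ring
        · left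
          rw [h] at hre
          have hb : (y : (QuadraticAlgebra F a 0)).re ≠ 0 := by
            intro h0; apply b.ne_zero; rw [← hre, h0]; simp
          refine ⟨Units.mk0 _ hb, ?_⟩
          ext; push_cast; simp only [Units.val_mk0]
          rw [← hre]; ring
      · rintro (⟨y, rfl⟩ | ⟨y, hy⟩)
        · exact ⟨i y, by simp⟩
        · have hne : (QuadraticAlgebra.omega : (QuadraticAlgebra F a 0)) ≠ 0 := by
            intro h
            have := congrArg QuadraticAlgebra.im h
            simp at this
          have hb : (b : F) = y ^ 2 * a⁻¹ := by
            have := congrArg Units.val hy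
            push_cast at this
            rw [this]; simp [ha0]
          refine ⟨i (y * (Units.mk0 a ha0)⁻¹) * Units.mk0 _ hne, ?_⟩
          ext1
          rw [Units.val_pow_eq_pow_val, Units.val_mul, hival, hival, hb, mul_pow, Units.val_mk0,
            sq QuadraticAlgebra.omega, QuadraticAlgebra.omega_mul_omega_eq_algebraMap]
          rw [map_zero, zero_mul, add_zero, ← map_pow, ← map_mul]
          congr 1
          push_cast
          simp only [Units.val_mk0]
          field_simp
    rw [Subgroup.relIndex_eq_two_iff_exists_notMem_and]
    refine ⟨Units.mk0 a ha0, (hmem _).2 (Or.inr ?_), ?_, ?_⟩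
    · exact (hSFmem _).2 ⟨Units.mk0 a ha0, sq _⟩
    · rintro h
      obtain ⟨y, hy⟩ := (hSFmem _).1 h
      exact ha y (by simpa using congrArg Units.val hy)
    · intro b hb
      exact ((hmem b).1 hb).symm
  have hT : SF ≤ SK.comap i := by
    intro x hx
    obtain ⟨y, rfl⟩ := (hSFmem x).1 hx
    exact (hSKmem _).2 ⟨i y, by simp⟩
  have e1 := Subgroup.relIndex_mul_index hT
  have e2 := Subgroup.relIndex_mul_index (H := SK) (K := SK ⊔ i.range) le_sup_left
  rw [Subgroup.relIndex_sup_left, ← Subgroup.index_comap, ← h2, Subgroup.index_comap SF] at e2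
  have e3 := Subgroup.relIndex_mul_index h1
  rw [h3] at e1
  rw [hk, hrank, pow_mul] at e2
  rw [hf] at e1 e3
  refine ⟨N.range, ?_, ?_⟩
  · generalize Nat.card (ℤ_[p] ⧸ Ideal.span {(2 : ℤ_[p])}) = q at *
    have hq : q ^ Module.finrank ℚ_[p] F ≠ 0 := pow_ne_zero _ hc0
    generalize q ^ Module.finrank ℚ_[p] F = Q at *
    generalize (SK.comap i).index = t at *
    generalize SF.relIndex N.range = m at *
    generalize N.range.index = r at *
    have ht : t = 2 * Q := by omega
    subst ht
    have hm : m = 2 * Q := by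
      have : (2 * Q) * m = (2 * Q) * (2 * Q) := by rw [e2]; ring
      exact Nat.eq_of_mul_eq_mul_left (by omega) this
    subst hm
    have : (2 * Q) * r = (2 * Q) * 2 := by rw [e3]; ring
    exact Nat.eq_of_mul_eq_mul_left (by omega) this
  · intro b
    rw [MonoidHom.mem_range]
    constructor
    · rintro ⟨z, rfl⟩
      refine ⟨(z : QuadraticAlgebra F a 0).re, (z : QuadraticAlgebra F a 0).im, ?_⟩
      rw [hNval, QuadraticAlgebra.norm_def]; ring
    · rintro ⟨x, y, hxy⟩
      have hn : QuadraticAlgebra.norm (⟨x, y⟩ : QuadraticAlgebra F a 0) = b := by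
        rw [hxy, QuadraticAlgebra.norm_def]; ring
      have hz : (⟨x, y⟩ : QuadraticAlgebra F a 0) ≠ 0 := by
        intro h0; rw [h0, QuadraticAlgebra.norm_zero] at hn; exact b.ne_zero hn.symm
      refine ⟨Units.mk0 _ hz, ?_⟩
      ext
      rw [hNval, Units.val_mk0, hn]


theorem OPnorm_symm {F : Type} [Field F] {a b : F} (hb : ∀ r : F, r ^ 2 ≠ b)
    (h : ∃ x y : F, b = x * x - a * (y * y)) : ∃ x y : F, a = x * x - b * (y * y) := by
  obtain ⟨x, y, h⟩ := h
  have hy : y ≠ 0 := by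
    rintro rfl
    exact hb x (by rw [h]; ring)
  refine ⟨x / y, 1 / y, ?_⟩
  rw [h]; field_simp; ring

theorem OPlemA (p : ℕ) [hp : Fact p.Prime] (F : Type) [Field F] [Algebra ℚ_[p] F]
    [FiniteDimensional ℚ_[p] F] (E : Type) [Field E] [Algebra F E]
    (e : F) (he : ∀ r : F, r ^ 2 ≠ e) (ι : E) (hι : ι * ι = algebraMap F E e)
    (δ : F) (hδ : ∀ r : F, r ^ 2 ≠ δ) :
    ∃ b : F, b ≠ 0 ∧ (¬ ∃ x y : F, b = x * x - δ * (y * y)) ∧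
      ∃ x y : E, algebraMap F E b = x * x - algebraMap F E δ * (y * y) := by
  have : CharZero F := charZero_of_injective_algebraMap (algebraMap ℚ_[p] F).injective
  have : CharZero E := charZero_of_injective_algebraMap (algebraMap F E).injective
  have he0 : e ≠ 0 := fun h => he 0 (by simp [h])
  have hδ0 : δ ≠ 0 := fun h => hδ 0 (by simp [h])
  obtain ⟨Hδ, iδ, mδ⟩ := OPnorm_index p F δ hδ
  by_cases hs : ∃ r : F, r ^ 2 = δ * e
  · obtain ⟨r, hr⟩ := hs
    have : ∃ b : Fˣ, b ∉ Hδ := by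
      by_contra hc
      push Not at hc
      have : Hδ = ⊤ := by ext x; simp [hc x]
      rw [this] at iδ; simp at iδ
    obtain ⟨b, hb⟩ := this
    rw [mδ] at hb
    refine ⟨b, b.ne_zero, hb, ?_⟩
    have hι0 : ι ≠ 0 := by
      rintro rfl
      apply he0
      apply (algebraMap F E).injective
      rw [← hι]; simp
    have hr0 : algebraMap F E r ≠ 0 := by
      rw [Ne, map_eq_zero]; rintro rfl
      exact mul_ne_zero hδ0 he0 (by rw [← hr]; simp)
    have hrE := congrArg (algebraMap F E) hr
    rw [map_pow, map_mul, ← hι] at hrE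
    have hd : algebraMap F E δ = (algebraMap F E r / ι) ^ 2 := by
      rw [div_pow, hrE]; field_simp
    refine ⟨(algebraMap F E b + 1) / 2, (algebraMap F E b - 1) / (2 * (algebraMap F E r / ι)), ?_⟩
    rw [hd]; field_simp; ring
  · push Not at hs
    obtain ⟨H2, i2, m2⟩ := OPnorm_index p F (δ * e) hs
    by_cases hex : ∃ b : Fˣ, b ∈ H2 ∧ b ∉ Hδ
    · obtain ⟨b, hb2, hb⟩ := hex
      rw [mδ] at hb
      obtain ⟨x, y, hxy⟩ := (m2 b).1 hb2
      refine ⟨b, b.ne_zero, hb, algebraMap F E x, ι * algebraMap F E y, ?_⟩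
      rw [hxy]; simp only [map_sub, map_mul, ← hι]; ring
    · exfalso
      push Not at hex
      have hle : H2 ≤ Hδ := fun b hb => hex b hb
      have hr := Subgroup.relIndex_mul_index hle
      rw [i2, iδ] at hr
      have hle' : Hδ ≤ H2 := Subgroup.relIndex_eq_one.1 (by omega)
      obtain ⟨He, ie, me⟩ := OPnorm_index p F e he
      have : He = ⊤ := by
        ext b
        simp only [Subgroup.mem_top, iff_true]
        rw [me]
        by_cases hb : ∃ r : F, r ^ 2 = b
        · obtain ⟨r, hr⟩ := hb
          exact ⟨r, 0, by rw [← hr]; ring⟩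
        · push Not at hb
          obtain ⟨Hb, ib, mb⟩ := OPnorm_index p F b hb
          have q1 : Units.mk0 δ hδ0 ∈ Hb ↔ b ∈ Hδ := by
            rw [mb, mδ]; exact ⟨OPnorm_symm hδ, OPnorm_symm hb⟩
          have q2 : Units.mk0 δ hδ0 * Units.mk0 e he0 ∈ Hb ↔ b ∈ H2 := by
            rw [mb, m2]; push_cast; exact ⟨OPnorm_symm hs, OPnorm_symm hb⟩
          have q3 : b ∈ Hδ ↔ b ∈ H2 := ⟨fun h => hle' h, fun h => hle h⟩
          have q4 := Subgroup.mul_mem_iff_of_index_two ib (a := Units.mk0 δ hδ0)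
            (b := Units.mk0 e he0)
          have q5 : Units.mk0 e he0 ∈ Hb := by tauto
          rw [mb] at q5
          exact OPnorm_symm he q5
      rw [this] at ie; simp at ie


theorem OPwitt_step {F : Type} [Field F] (h2 : (2 : F) ≠ 0) {n : ℕ} (s : Finset (Fin n)) (i : Fin n)
    (hi : i ∈ s) (a a' : Fin n → F) (hai : a i = a' i) (ha0 : a i ≠ 0)
    (L : (Fin n → F) → (Fin n → F)) (hadd : ∀ x y, L (x + y) = L x + L y)
    (hL : ∀ x, ∑ k ∈ s, a' k * (L x k * L x k) = ∑ k ∈ s, a k * (x k * x k)) :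
    ∃ L' : (Fin n → F) → (Fin n → F), (∀ x y, L' (x + y) = L' x + L' y) ∧
      ∀ x, ∑ k ∈ s.erase i, a' k * (L' x k * L' x k) = ∑ k ∈ s.erase i, a k * (x k * x k) := by
  classical
  set B : (Fin n → F) → (Fin n → F) → F := fun x y => ∑ k ∈ s, a' k * (x k * y k) with hB
  have Badd : ∀ x y z, B (x + y) z = B x z + B y z := by
    intro x y z; simp only [hB, ← Finset.sum_add_distrib]
    exact Finset.sum_congr rfl fun k _ => by simp only [Pi.add_apply]; ring
  have Bsub : ∀ x y z, B (x - y) z = B x z - B y z := by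
    intro x y z; simp only [hB, ← Finset.sum_sub_distrib]
    exact Finset.sum_congr rfl fun k _ => by simp only [Pi.sub_apply]; ring
  have Bsmul : ∀ (c : F) x z, B (c • x) z = c * B x z := by
    intro c x z; simp only [hB, Finset.mul_sum]
    exact Finset.sum_congr rfl fun k _ => by simp only [Pi.smul_apply, smul_eq_mul]; ring
  have Bsymm : ∀ x y, B x y = B y x := by
    intro x y; simp only [hB]
    exact Finset.sum_congr rfl fun k _ => by ring
  set w : Fin n → F := Pi.single i 1 with hw
  have hBw : ∀ x, B x w = a i * x i := by
    intro x
    simp only [hB, hw]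
    rw [Finset.sum_eq_single i]
    · simp [hai]
    · intro k _ hk; simp [Pi.single_eq_of_ne hk]
    · exact fun h => absurd hi h
  have hLB : ∀ x, B (L x) (L x) = ∑ k ∈ s, a k * (x k * x k) := hL
  have hpol : ∀ x y, B (L x) (L y) = ∑ k ∈ s, a k * (x k * y k) := by
    intro x y
    have e1 := hLB (x + y)
    rw [hadd, Badd, Bsymm _ (L x + L y), Bsymm _ (L x + L y), Badd, Badd, hLB, hLB,
      Bsymm (L y) (L x)] at e1
    have e2 : ∑ k ∈ s, a k * ((x + y) k * (x + y) k) = ∑ k ∈ s, a k * (x k * x k) +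
        ∑ k ∈ s, a k * (y k * y k) + 2 * ∑ k ∈ s, a k * (x k * y k) := by
      rw [Finset.mul_sum, ← Finset.sum_add_distrib, ← Finset.sum_add_distrib]
      exact Finset.sum_congr rfl fun k _ => by simp only [Pi.add_apply]; ring
    rw [e2] at e1
    apply mul_left_cancel₀ h2
    linear_combination e1
  set v := L w with hv
  have hvx : ∀ x, B (L x) v = a i * x i := by
    intro x
    rw [hv, hpol, Finset.sum_eq_single i]
    · simp [hw]
    · intro k _ hk; simp [hw, Pi.single_eq_of_ne hk]
    · exact fun h => absurd hi h
  have hvv : B v v = a i := by rw [hv, ← hv, hvx]; simp [hw]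
  have hww : B w w = a i := by rw [hBw]; simp [hw]
  have key : ∃ ε : F, ε * ε = 1 ∧ B (v - ε • w) (v - ε • w) ≠ 0 := by
    have ex : ∀ ε : F, ε * ε = 1 → B (v - ε • w) (v - ε • w) = 2 * a i - 2 * ε * B v w := by
      intro ε hε
      rw [Bsub, Bsymm v, Bsymm (ε • w), Bsub, Bsub, Bsymm v (ε • w), Bsmul, Bsmul,
        Bsymm w v, Bsymm w (ε • w), Bsmul, hvv, hww]
      linear_combination a i * hε
    by_contra hc
    push Not at hc
    have c1 := hc 1 (by ring)
    have c2 := hc (-1) (by ring)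
    rw [ex _ (by ring)] at c1 c2
    have : 2 * (2 * a i) = 0 := by linear_combination c1 + c2
    exact mul_ne_zero h2 (mul_ne_zero h2 ha0) this
  obtain ⟨ε, hε, hu⟩ := key
  have hε0 : ε ≠ 0 := by rintro rfl; simp at hε
  set u := v - ε • w with hudef
  set R : (Fin n → F) → (Fin n → F) := fun x => x - (2 * B x u / B u u) • u with hR
  have hRB : ∀ x y, B (R x) (R y) = B x y := by
    intro x y
    have gen : ∀ (c d : F) (z : Fin n → F), B (x - c • z) (y - d • z) =
        B x y - d * B x z - c * B y z + c * d * B z z := by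
      intro c d z
      rw [Bsub, Bsymm x, Bsmul, Bsub, Bsymm z, Bsub, Bsmul, Bsmul, Bsymm z x, Bsymm y x]
      ring
    simp only [hR]
    rw [gen]
    field_simp; ring
  have hRadd : ∀ x y, R (x + y) = R x + R y := by
    intro x y
    simp only [hR, Badd]
    ext k
    simp only [Pi.sub_apply, Pi.add_apply, Pi.smul_apply, smul_eq_mul]
    ring
  have hRv : R v = ε • w := by
    have e1 : 2 * B v u = B u u := by
      have q1 : B v u = a i - ε * B v w := by
        rw [hudef, Bsymm, Bsub, Bsmul, hvv, Bsymm w v]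
      have q2 : B u u = B v u - ε * B w u := by
        conv_lhs => rw [hudef]
        rw [← hudef, Bsub, Bsmul]
      have q3 : B w u = B v w - ε * a i := by
        rw [hudef, Bsymm, Bsub, Bsmul, hww]
      rw [q2, q1, q3]; linear_combination - a i * hε
    simp only [hR]
    rw [e1, div_self hu, one_smul, hudef]; simp
  refine ⟨fun x => R (L x), fun x y => by simp only [hadd, hRadd], fun x => ?_⟩
  have hi1 : R (L x) i = ε * x i := by
    have e1 := hRB (L x) v
    rw [hRv, hvx, Bsymm, Bsmul, Bsymm, hBw] at e1
    apply mul_left_cancel₀ ha0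
    apply mul_left_cancel₀ hε0
    linear_combination e1 - a i * x i * hε
  have e2 : B (R (L x)) (R (L x)) = ∑ k ∈ s, a k * (x k * x k) := by rw [hRB, hLB]
  simp only [hB] at e2
  rw [← Finset.add_sum_erase _ _ hi, ← Finset.add_sum_erase s (fun k => a k * (x k * x k)) hi,
    hi1, ← hai] at e2
  linear_combination e2 - a i * (x i * x i) * hε

theorem OPwitt {F : Type} [Field F] (h2 : (2 : F) ≠ 0) {n : ℕ} (t : Finset (Fin n))
    (a a' : Fin n → F) (hai : ∀ i ∉ t, a i = a' i) (ha0 : ∀ i, a i ≠ 0)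
    (L : (Fin n → F) → (Fin n → F)) (hadd : ∀ x y, L (x + y) = L x + L y)
    (hL : ∀ x, ∑ k, a' k * (L x k * L x k) = ∑ k, a k * (x k * x k)) :
    ∃ L' : (Fin n → F) → (Fin n → F), 
      ∀ x, ∑ k ∈ t, a' k * (L' x k * L' x k) = ∑ k ∈ t, a k * (x k * x k) := by
  classical
  have main : ∀ d : Finset (Fin n), (∀ i ∈ d, i ∉ t) → 
      ∃ L' : (Fin n → F) → (Fin n → F), (∀ x y, L' (x + y) = L' x + L' y) ∧
      ∀ x, ∑ k ∈ Finset.univ \ d, a' k * (L' x k * L' x k) =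
        ∑ k ∈ Finset.univ \ d, a k * (x k * x k) := by
    intro d
    induction d using Finset.induction_on with
    | empty => intro _; exact ⟨L, hadd, by simpa using hL⟩
    | insert i d hid ih =>
      intro hd
      obtain ⟨L1, h1, h1'⟩ := ih fun k hk => hd k (Finset.mem_insert_of_mem hk)
      have hit := hd i (Finset.mem_insert_self _ _)
      obtain ⟨L2, h2, h2'⟩ := OPwitt_step h2 (Finset.univ \ d) i (by simp [hid]) a a' (hai i hit)
        (ha0 i) L1 h1 h1'
      refine ⟨L2, h2, ?_⟩
      rw [Finset.sdiff_insert]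
      exact h2'
  obtain ⟨L', _, h⟩ := main (Finset.univ \ t) (by simp)
  refine ⟨L', ?_⟩
  simpa using h

theorem OPscale {F : Type} [Field F] {n : ℕ} (a : Fin n → F) (i1 i2 : Fin n) (hne : i1 ≠ i2)
    (δ b x y : F) (hδ : a i1 * δ = - a i2) (hb : b = x * x - δ * (y * y)) :
    ∃ g : Matrix (Fin n) (Fin n) F, g.transpose * Matrix.diagonal a * g =
      Matrix.diagonal (fun k => if k = i1 ∨ k = i2 then a k * b else a k) := by
  classical
  have aux : ∀ (x y : F) (h : Fin n → F), ∑ k, (if k = i1 then x else if k = i2 then y else 0) * h k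
      = x * h i1 + y * h i2 := by
    intro x y h
    have : ∀ k, (if k = i1 then x else if k = i2 then y else 0) * h k =
        (if k = i1 then x * h k else 0) + (if k = i2 then y * h k else 0) := by
      intro k
      by_cases h1 : k = i1
      · subst h1; simp [hne]
      · by_cases h2 : k = i2
        · subst h2; simp [h1]
        · simp [h1, h2]
    simp only [this, Finset.sum_add_distrib, Finset.sum_ite_eq', Finset.mem_univ, if_true]
  have aux2 : ∀ (l : Fin n) (h : Fin n → F), ∑ k, (if k = l then (1:F) else 0) * h k = h l := by
    intro l h; simp
  set g : Matrix (Fin n) (Fin n) F := Matrix.of fun k l =>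
    if l = i1 then (if k = i1 then x else if k = i2 then y else 0)
    else if l = i2 then (if k = i1 then δ * y else if k = i2 then x else 0)
    else if k = l then 1 else 0 with hg
  have g1 : ∀ k, g k i1 = if k = i1 then x else if k = i2 then y else 0 := by intro k; simp [hg]
  have g2 : ∀ k, g k i2 = if k = i1 then δ * y else if k = i2 then x else 0 := by
    intro k; simp [hg, hne.symm]
  have g3 : ∀ k l, l ≠ i1 → l ≠ i2 → g k l = if k = l then 1 else 0 := by
    intro k l h h'; simp [hg, h, h']
  refine ⟨g, ?_⟩
  have hent : ∀ l m, (g.transpose * Matrix.diagonal a * g) l m = ∑ k, g k l * (a k * g k m) := by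
    intro l m
    rw [Matrix.mul_assoc, Matrix.mul_apply]
    simp [Matrix.diagonal_mul]
  ext l m
  rw [hent]
  have hne' := hne.symm
  by_cases hl1 : l = i1
  · subst hl1
    simp only [g1 , aux]
    by_cases hm1 : m = l
    · subst hm1; simp [g1, hne']; rw [hb]; linear_combination (y * y) * hδ
    · by_cases hm2 : m = i2
      · subst hm2; simp [g2, hne, hne']; linear_combination (x * y) * hδ
      · simp [g3 _ m hm1 hm2, Ne.symm hm1, Ne.symm hm2, Matrix.diagonal_apply]
  · by_cases hl2 : l = i2
    · subst hl2
      simp only [g2 , aux]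
      by_cases hm1 : m = i1
      · subst hm1; simp [g1, hne']; linear_combination (x * y) * hδ
      · by_cases hm2 : m = l
        · subst hm2; simp [g2, hne']; rw [hb]; linear_combination (y * y * δ) * hδ
        · simp [g3 _ m hm1 hm2, Ne.symm hm1, Ne.symm hm2, Matrix.diagonal_apply]
    · simp only [g3 _ l hl1 hl2, aux2]
      by_cases hm1 : m = i1
      · subst hm1; simp [g1, hl1, hl2]
      · by_cases hm2 : m = i2
        · subst hm2; simp [g2, hl1, hl2]
        · rw [g3 _ m hm1 hm2]; by_cases h : l = m
          · subst h; simp [hl1, hl2]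
          · simp [h]

theorem OPdiag {F : Type} [Field F] (h2 : (2 : F) ≠ 0) {n : ℕ} (J : Matrix (Fin n) (Fin n) F)
    (hJ : J.transpose = J) : ∃ (P : Matrix (Fin n) (Fin n) F) (a : Fin n → F), IsUnit P ∧
      P.transpose * J * P = Matrix.diagonal a := by
  classical
  have : Invertible (2 : F) := invertibleOfNonzero h2
  set B := Matrix.toBilin' J with hB
  have hsym : LinearMap.IsSymm B := by
    constructor
    intro x y
    simp only [hB, Matrix.toBilin'_apply', RingHom.id_apply]
    rw [Matrix.dotProduct_mulVec, ← Matrix.mulVec_transpose, hJ, dotProduct_comm]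
  obtain ⟨v, hv⟩ := LinearMap.BilinForm.exists_orthogonal_basis hsym
  have hfr : Module.finrank F (Fin n → F) = n := by simp
  set w := v.reindex (finCongr hfr) with hw
  have hort : ∀ i k, i ≠ k → B (w i) (w k) = 0 := by
    intro i k hik
    simp only [hw, Module.Basis.reindex_apply]
    apply hv
    simpa using hik
  refine ⟨(Pi.basisFun F (Fin n)).toMatrix w, fun i => B (w i) (w i), ?_, ?_⟩
  · have := (Pi.basisFun F (Fin n)).invertibleToMatrix w
    exact isUnit_of_invertible _
  · ext i k
    have : ((Pi.basisFun F (Fin n)).toMatrix w).transpose * J * ((Pi.basisFun F (Fin n)).toMatrix w) =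
      Matrix.of fun i k => B (w i) (w k) := by
      ext i k
      rw [Matrix.of_apply, hB, Matrix.toBilin'_apply', Matrix.mul_assoc]
      rfl
    rw [this, Matrix.of_apply, Matrix.diagonal_apply]
    split_ifs with h
    · rw [h]
    · exact hort i k h


theorem OPdiag2 {F : Type} [Field F] [CharZero F] (e : F) (he : ∀ r : F, r ^ 2 ≠ e) {n : ℕ}
    (hn2 : 2 ≤ n) (J : Matrix (Fin n) (Fin n) F) (hJ : J.transpose = J) (hJU : J.det ≠ 0)
    (hn : 3 ≤ n ∨ ∀ r : F, r ^ 2 ≠ - J.det) :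
    ∃ (P : Matrix (Fin n) (Fin n) F) (a : Fin n → F) (i1 i2 : Fin n), P.det ≠ 0 ∧ (∀ i, a i ≠ 0) ∧
      P.transpose * J * P = Matrix.diagonal a ∧ i1 ≠ i2 ∧ ∀ r : F, r ^ 2 ≠ - a i2 / a i1 := by
  classical
  obtain ⟨P, a, hP, hPa⟩ := OPdiag (two_ne_zero) J hJ
  have hPd : P.det ≠ 0 := ((Matrix.isUnit_iff_isUnit_det P).1 hP).ne_zero
  have hgen : ∀ (P : Matrix (Fin n) (Fin n) F) (a : Fin n → F),
      P.transpose * J * P = Matrix.diagonal a → P.det * J.det * P.det = ∏ i, a i := by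
    intro P a h
    rw [← Matrix.det_diagonal, ← h, Matrix.det_mul, Matrix.det_mul, Matrix.det_transpose]
  have hprod := hgen P a hPa
  have ha0 : ∀ i, a i ≠ 0 := by
    intro i hi
    have : ∏ i, a i = 0 := Finset.prod_eq_zero (Finset.mem_univ i) hi
    rw [this] at hprod
    exact mul_ne_zero (mul_ne_zero hPd hJU) hPd hprod
  have he0 : e ≠ 0 := fun h => he 0 (by simp [h])
  have h01 : (⟨0, by omega⟩ : Fin n) ≠ ⟨1, by omega⟩ := by simp
  by_cases h1 : ∀ r : F, r ^ 2 ≠ - a ⟨1, by omega⟩ / a ⟨0, by omega⟩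
  · exact ⟨P, a, _, _, hPd, ha0, hPa, h01, h1⟩
  push Not at h1
  obtain ⟨t, ht⟩ := h1
  have h3 : 3 ≤ n := by
    rcases hn with h | h
    · exact h
    · by_contra hc
      obtain rfl : n = 2 := by omega
      rw [Fin.prod_univ_two] at hprod
      have ht' : t ^ 2 = - a 1 / a 0 := ht
      apply h (t * a 0 / P.det)
      have : a 1 = - t ^ 2 * a 0 := by rw [ht']; field_simp [ha0 0]
      rw [this] at hprod
      field_simp
      linear_combination hprod
  set i0 : Fin n := ⟨0, by omega⟩
  set i1 : Fin n := ⟨1, by omega⟩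
  set i2 : Fin n := ⟨2, by omega⟩
  have ht0 : t ≠ 0 := by
    rintro rfl
    have : -a i1 / a i0 ≠ 0 := div_ne_zero (neg_ne_zero.2 (ha0 _)) (ha0 _)
    exact this (by rw [← ht]; simp)
  set b := - e * a i2 / a i0 with hb
  have hb0 : b ≠ 0 := div_ne_zero (mul_ne_zero (neg_ne_zero.2 he0) (ha0 _)) (ha0 _)
  obtain ⟨g, hg⟩ := OPscale a i0 i1 h01 (t ^ 2) b ((b + 1) / 2) ((b - 1) / (2 * t))
    (by rw [ht]; field_simp [ha0 i0]) (by field_simp; ring)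
  have hPg : (P * g).transpose * J * (P * g) =
      Matrix.diagonal (fun k => if k = i0 ∨ k = i1 then a k * b else a k) := by
    rw [Matrix.transpose_mul, ← hg, ← hPa]; simp only [Matrix.mul_assoc]
  have ha0' : ∀ k, (if k = i0 ∨ k = i1 then a k * b else a k) ≠ 0 := by
    intro k; split_ifs
    · exact mul_ne_zero (ha0 _) hb0
    · exact ha0 _
  have n20 : i2 ≠ i0 := by simp [i2, i0]
  have n21 : i2 ≠ i1 := by simp [i2, i1]
  refine ⟨P * g, _, i0, i2, ?_, ha0', hPg, n20.symm, ?_⟩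
  · intro h0
    have := hgen _ _ hPg
    rw [h0] at this
    exact Finset.prod_ne_zero_iff.2 (fun i _ => ha0' i) (by rw [← this]; simp)
  · intro r hr
    simp only [n20, n21, or_self, if_false, true_or, if_true] at hr
    apply he (1 / r)
    have hai := ha0 i2
    have hai0 := ha0 i0
    have : r ^ 2 = 1 / e := by
      rw [hr, hb]; field_simp
    rw [div_pow, this]; simp

theorem OPforms (p : ℕ) [hp : Fact p.Prime] (F : Type) [Field F] [Algebra ℚ_[p] F]
    [FiniteDimensional ℚ_[p] F] (E : Type) [Field E] [Algebra F E]
    (e : F) (he : ∀ r : F, r ^ 2 ≠ e) (ι : E) (hι : ι * ι = algebraMap F E e) {n : ℕ}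
    (hn2 : 2 ≤ n) (J : Matrix (Fin n) (Fin n) F) (hJ : J.transpose = J) (hJU : J.det ≠ 0)
    (hn : 3 ≤ n ∨ ∀ r : F, r ^ 2 ≠ - J.det) :
    ∃ (K : Matrix (Fin n) (Fin n) F) (g : Matrix (Fin n) (Fin n) E) (s : F), s ≠ 0 ∧
      K.transpose = K ∧ K.det = J.det * (s * s) ∧
      g.transpose * J.map (algebraMap F E) * g = K.map (algebraMap F E) ∧
      ¬ ∃ r : Matrix (Fin n) (Fin n) F, r.transpose * K * r = J := by
  classical
  have : CharZero F := charZero_of_injective_algebraMap (algebraMap ℚ_[p] F).injective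
  obtain ⟨P, a, i1, i2, hPd, ha0, hPa, hne, hδ⟩ := OPdiag2 e he hn2 J hJ hJU hn
  obtain ⟨b, hb0, hbF, x, y, hbE⟩ := OPlemA p F E e he ι hι (- a i2 / a i1) hδ
  have h1 := ha0 i1
  obtain ⟨g, hg⟩ := OPscale (fun k => algebraMap F E (a k)) i1 i2 hne (algebraMap F E (- a i2 / a i1))
    (algebraMap F E b) x y (by rw [← map_mul, ← map_neg, mul_div_cancel₀ _ h1]) hbE
  set a' : Fin n → F := fun k => if k = i1 ∨ k = i2 then a k * b else a k with ha'
  have hmapd : ∀ c : Fin n → F, (Matrix.diagonal c).map (algebraMap F E) =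
      Matrix.diagonal fun k => algebraMap F E (c k) := by
    intro c; rw [Matrix.diagonal_map (map_zero _)]
  refine ⟨Matrix.diagonal a', P.map (algebraMap F E) * g, P.det * b, mul_ne_zero hPd hb0,
    Matrix.diagonal_transpose _, ?_, ?_, ?_⟩
  · rw [Matrix.det_diagonal]
    have e1 : P.det * J.det * P.det = ∏ i, a i := by
      rw [← Matrix.det_diagonal, ← hPa, Matrix.det_mul, Matrix.det_mul, Matrix.det_transpose]
    have e2 : ∏ i, a' i = (∏ i, a i) * (b * b) := by
      have : ∀ i, a' i = a i * ((if i = i1 then b else 1) * (if i = i2 then b else 1)) := by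
        intro i
        simp only [ha']
        by_cases q1 : i = i1
        · subst q1; simp [hne]
        · by_cases q2 : i = i2
          · subst q2; simp [q1]
          · simp [q1, q2]
      simp only [this, Finset.prod_mul_distrib, Finset.prod_ite_eq', Finset.mem_univ, if_true]
    rw [e2, ← e1]; ring
  · have e3 : (P.map (algebraMap F E)).transpose * J.map (algebraMap F E) * P.map (algebraMap F E) =
        Matrix.diagonal fun k => algebraMap F E (a k) := by
      rw [← hmapd, ← hPa, Matrix.map_mul, Matrix.map_mul, Matrix.transpose_map]
    rw [hmapd, Matrix.transpose_mul]
    have e4 : (fun k => algebraMap F E (a' k)) = fun k => if k = i1 ∨ k = i2 then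
        algebraMap F E (a k) * algebraMap F E b else algebraMap F E (a k) := by
      funext k
      simp only [ha']; split_ifs <;> simp
    rw [e4, ← hg, ← e3]
    simp only [Matrix.mul_assoc]
  · rintro ⟨r, hr⟩
    have hrP : (r * P).transpose * Matrix.diagonal a' * (r * P) = Matrix.diagonal a := by
      rw [← hPa, ← hr, Matrix.transpose_mul]; simp only [Matrix.mul_assoc]
    have hq : ∀ (c : Fin n → F) (x : Fin n → F), dotProduct x ((Matrix.diagonal c).mulVec x) =
        ∑ k, c k * (x k * x k) := by
      intro c x
      simp only [dotProduct, Matrix.mulVec_diagonal]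
      exact Finset.sum_congr rfl fun k _ => by ring
    obtain ⟨L, hL⟩ := OPwitt (two_ne_zero) {i1, i2} a a' (by
        intro i hi
        simp only [Finset.mem_insert, Finset.mem_singleton] at hi
        simp only [ha', hi, if_false]) ha0 (fun x => (r * P).mulVec x)
      (fun x y => Matrix.mulVec_add _ _ _) (by
        intro x
        rw [← hq, ← hq, ← hrP]
        generalize r * P = M
        rw [← Matrix.mulVec_mulVec, ← Matrix.mulVec_mulVec,
          Matrix.dotProduct_mulVec x, Matrix.vecMul_transpose])
    have hL1 := hL (Pi.single i1 1)
    rw [Finset.sum_pair hne, Finset.sum_pair hne] at hL1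
    simp only [ha', true_or, or_true, if_true, Pi.single_eq_same, Pi.single_eq_of_ne hne.symm] at hL1
    set X := L (Pi.single i1 1) i1
    set Y := L (Pi.single i1 1) i2
    apply hbF
    refine ⟨b * X, b * Y, ?_⟩
    field_simp
    linear_combination - hL1



theorem OPh90 {E : Type} [Field E] [CharZero E] (σ : E ≃+* E) (ι : E)
    (hι : σ ι = - ι) (hι0 : ι ≠ 0) {n : ℕ} (x : Matrix (Fin n) (Fin n) E)
    (hx : x * x.map σ = 1) : ∃ h : Matrix (Fin n) (Fin n) E, h.det ≠ 0 ∧ x * h.map σ = h := by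
  classical
  set M : Matrix (Fin n) (Fin n) (Polynomial E) :=
    Matrix.of fun a b => Polynomial.X * Polynomial.C ((1 + x) a b) + Polynomial.C (ι * (1 - x) a b) with hM
  have hev : ∀ c : E, M.det.eval c = (c • (1 + x) + ι • (1 - x)).det := by
    intro c
    rw [← Polynomial.coe_evalRingHom, RingHom.map_det]
    congr 1
    ext a b
    simp [hM, Matrix.add_apply, Matrix.sub_apply]
    ring
  have hM0 : M.det ≠ 0 := by
    intro h0
    have h1 := hev ι
    rw [h0, Polynomial.eval_zero, ← smul_add] at h1
    have : (1 + x + (1 - x)) = (2 : E) • (1 : Matrix (Fin n) (Fin n) E) := by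
      rw [two_smul]; abel
    rw [this, smul_smul, Matrix.det_smul, Matrix.det_one, mul_one] at h1
    exact pow_ne_zero _ (mul_ne_zero hι0 two_ne_zero) h1.symm
  have hc : ∃ c : ℕ, M.det.eval (c : E) ≠ 0 := by
    by_contra hcon
    push Not at hcon
    apply hM0
    apply Polynomial.eq_zero_of_infinite_isRoot
    exact (Set.infinite_range_of_injective (Nat.cast_injective (R := E))).mono
      (by rintro _ ⟨c, rfl⟩; exact hcon c)
  obtain ⟨c, hc⟩ := hc
  rw [hev] at hc
  refine ⟨_, hc, ?_⟩
  have e1 : ((c : E) • (1 + x) + ι • (1 - x)).map σ =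
      (c : E) • (1 + x.map σ) - ι • (1 - x.map σ) := by
    ext a b
    simp only [Matrix.map_apply, Matrix.add_apply, Matrix.sub_apply, Matrix.smul_apply, smul_eq_mul,
      map_add, map_mul, map_sub, map_natCast, hι, Matrix.one_apply]
    split_ifs <;> simp <;> ring
  rw [e1, mul_sub, mul_smul_comm, mul_smul_comm, mul_sub, mul_add, hx, mul_one]
  rw [show (1 - x : Matrix (Fin n) (Fin n) E) = -(x - 1) by abel, smul_neg, add_comm x 1]
  abel

theorem OPforward (p : ℕ) [Fact p.Prime]
    (E : Type) [Field E] [Algebra ℚ_[p] E] [FiniteDimensional ℚ_[p] E]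
    (σ : E ≃ₐ[ℚ_[p]] E) (hσ2 : σ * σ = 1)
    (ι : E) (hι1 : σ ι ≠ ι) (hι2 : σ (ι * ι) = ι * ι)
    (n : ℕ) (hn : 1 ≤ n)
    (j : Matrix (Fin n) (Fin n) E)
    (hjF : ∀ a b, σ (j a b) = j a b) (hjU : IsUnit j) (hjsym : jᵀ = j)
    (hyp : ∃ x₀, (Xj ⇑σ j x₀ ∧ x₀.det ≠ 1) ∧
        ∀ x, Xj ⇑σ j x → x.det ≠ 1 → orbSG ⇑σ j x₀ x) :
      (n = 1 ∨ (n = 2 ∧ ∃ c, σ c = c ∧ c ≠ 0 ∧ j.det = -(ι * ι * (c * c)))) := by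
  classical
  have hchar : CharZero E := charZero_of_injective_algebraMap (algebraMap ℚ_[p] E).injective
  have hs : ∀ x, σ (σ x) = x := fun x => by
    rw [← AlgEquiv.mul_apply, hσ2]; rfl
  have hι : σ ι = - ι := by
    rw [map_mul] at hι2
    rcases mul_self_eq_mul_self_iff.1 hι2 with h | h
    · exact absurd h hι1
    · exact h
  have hι0 : ι ≠ 0 := by rintro rfl; simp at hι1
  set F : IntermediateField ℚ_[p] E :=
    (AlgHom.equalizer (σ : E →ₐ[ℚ_[p]] E) (AlgHom.id ℚ_[p] E)).toIntermediateField (by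
      intro x hx
      have hx' : σ x = x := hx
      change σ x⁻¹ = x⁻¹
      rw [map_inv₀, hx']) with hF
  have hFm : ∀ x, σ x = x → x ∈ F := fun x hx => hx
  have hFs : ∀ x : F, σ (x : E) = x := fun x => x.2
  have hmm : ∀ (A B : Matrix (Fin n) (Fin n) E), (A * B).map σ = A.map σ * B.map σ := by
    intro A B; exact Matrix.map_mul
  have hmσ : ∀ (A : Matrix (Fin n) (Fin n) E), (A.map σ).map σ = A := by
    intro A; ext a b; simp [hs]
  have hmt : ∀ (A : Matrix (Fin n) (Fin n) E), (A.map σ)ᵀ = Aᵀ.map σ := fun A => rfl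
  have hm1 : (1 : Matrix (Fin n) (Fin n) E).map σ = 1 := Matrix.map_one _ (map_zero σ) (map_one σ)
  have hdet : ∀ (A : Matrix (Fin n) (Fin n) E), (A.map σ).det = σ A.det := by
    intro A; exact (AlgEquiv.map_det σ A).symm
  have hjm : j.map σ = j := by ext a b; exact hjF a b
  have hjd : j.det ≠ 0 := ((Matrix.isUnit_iff_isUnit_det j).1 hjU).ne_zero
  obtain ⟨x₀, ⟨⟨⟨hx0u, hx0j⟩, hx0s⟩, hx0d⟩, horb⟩ := hyp
  have hd0 : x₀.det = -1 := by
    have h1 := congrArg Matrix.det hx0j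
    rw [Matrix.det_mul, Matrix.det_mul, Matrix.det_transpose] at h1
    have h2 : x₀.det * x₀.det = 1 := by
      apply mul_right_cancel₀ hjd; linear_combination h1
    rcases mul_self_eq_one_iff.1 h2 with h | h
    · exact absurd h hx0d
    · exact h
  obtain ⟨h₀, hh0, hh0x⟩ := OPh90 (σ : E ≃+* E) ι hι hι0 x₀ hx0s
  replace hh0x : x₀ * h₀.map σ = h₀ := hh0x
  have hdh0 : σ h₀.det = - h₀.det := by
    have := congrArg Matrix.det hh0x
    rw [Matrix.det_mul, hd0, hdet] at this
    linear_combination - this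
  set j' := h₀ᵀ * j * h₀ with hj'
  have hj's : j'.map σ = j' := by
    have : j' = (h₀.map σ)ᵀ * (x₀ᵀ * j * x₀) * h₀.map σ := by
      conv_lhs => rw [hj', ← hh0x]
      simp only [Matrix.transpose_mul, Matrix.mul_assoc]
    rw [this, hx0j, hmm, hmm, hmσ, hjm, hmt, hmσ, ← hmt]
    rw [hx0j] at this
    exact this
  have hlift : ∀ A : Matrix (Fin n) (Fin n) E, A.map σ = A →
      ∃ B : Matrix (Fin n) (Fin n) F, B.map (algebraMap F E) = A := by
    intro A hA
    refine ⟨Matrix.of fun a b => ⟨A a b, hFm _ (by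
      have := congrFun (congrFun hA a) b; exact this)⟩, ?_⟩
    ext a b; rfl
  have hinj : ∀ A B : Matrix (Fin n) (Fin n) F,
      A.map (algebraMap F E) = B.map (algebraMap F E) → A = B :=
    fun A B h => Matrix.map_injective (algebraMap F E).injective h
  have hmapF : ∀ A : Matrix (Fin n) (Fin n) F,
      (A.map (algebraMap F E)).map σ = A.map (algebraMap F E) := by
    intro A; ext a b; exact hFs (A a b)
  obtain ⟨J, hJ⟩ := hlift j' hj's
  have hJd : (J.det : E) = j'.det := by
    rw [← hJ]; exact RingHom.map_det (algebraMap F E) J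
  have hj'd : j'.det = h₀.det * h₀.det * j.det := by
    rw [hj', Matrix.det_mul, Matrix.det_mul, Matrix.det_transpose]; ring
  have hJ0 : J.det ≠ 0 := by
    intro h
    rw [h, hj'd] at hJd
    exact mul_ne_zero (mul_ne_zero hh0 hh0) hjd hJd.symm
  have hJt : J.transpose = J := by
    apply hinj
    rw [Matrix.transpose_map, hJ, hj']
    simp only [Matrix.transpose_mul, Matrix.transpose_transpose, hjsym, Matrix.mul_assoc]
  by_contra hcon
  push Not at hcon
  obtain ⟨hc1, hc2⟩ := hcon
  have hn3 : 3 ≤ n ∨ ∀ r : F, r ^ 2 ≠ - J.det := by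
    by_cases h3 : 3 ≤ n
    · exact Or.inl h3
    right
    intro r hr
    have hr' : (r : E) ^ 2 = - j'.det := by
      rw [← hJd, ← SubmonoidClass.coe_pow, hr]; rfl
    have hr0 : (r : E) ≠ 0 := by
      intro h; rw [h, hj'd] at hr'
      apply mul_ne_zero (mul_ne_zero hh0 hh0) hjd
      linear_combination hr'
    refine hc2 (by omega) (r / (ι * h₀.det)) ?_ ?_ ?_
    · rw [map_div₀, map_mul, hι, hdh0, hFs]; simp
    · exact div_ne_zero hr0 (mul_ne_zero hι0 hh0)
    · rw [hj'd] at hr'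
      field_simp
      linear_combination hr'
  have he : ∀ r : F, r ^ 2 ≠ (⟨ι * ι, hFm _ hι2⟩ : F) := by
    intro r hr
    have h1 : (r : E) * r = ι * ι := by
      have := congrArg (fun z : F => (z : E)) hr
      simpa [sq] using this
    rcases mul_self_eq_mul_self_iff.1 h1 with h | h
    · exact hι1 (by rw [← h]; exact hFs r)
    · apply hι1
      have : ι = ((-r : F) : E) := by push_cast; rw [h]; simp
      rw [this]; exact hFs _
  obtain ⟨K, g, s, hs0, hKt, hKd, hgK, hnot⟩ := OPforms p F E ⟨ι * ι, hFm _ hι2⟩ he ι rfl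
    (by omega) J hJt hJ0 hn3
  apply hnot
  rw [hJ] at hgK
  have hgd : g.det * g.det = (s : E) * s := by
    have h1 := congrArg Matrix.det hgK
    have h2 : (K.map (algebraMap F E)).det = (K.det : E) := (RingHom.map_det (algebraMap F E) K).symm
    rw [h2, hKd, Matrix.det_mul, Matrix.det_mul, Matrix.det_transpose] at h1
    push_cast at h1
    rw [hJd] at h1
    have : j'.det ≠ 0 := by
      rw [hj'd]; exact mul_ne_zero (mul_ne_zero hh0 hh0) hjd
    apply mul_left_cancel₀ this
    linear_combination h1
  have hgs : σ g.det = g.det := by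
    rcases mul_self_eq_mul_self_iff.1 hgd with h | h
    · rw [h]; exact hFs s
    · rw [h, map_neg, hFs]
  have hg0 : g.det ≠ 0 := by
    intro h; rw [h] at hgd
    have : (s : E) ≠ 0 := by simpa using hs0
    exact mul_ne_zero this this (by rw [← hgd]; simp)
  obtain ⟨h, hh⟩ : ∃ h, h = h₀ * g := ⟨_, rfl⟩
  have hhd : h.det ≠ 0 := by rw [hh, Matrix.det_mul]; exact mul_ne_zero hh0 hg0
  have hhs : σ h.det = - h.det := by rw [hh, Matrix.det_mul, map_mul, hdh0, hgs]; ring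
  have hhK : hᵀ * j * h = K.map (algebraMap F E) := by
    rw [← hgK, hj', hh, Matrix.transpose_mul]; simp only [Matrix.mul_assoc]
  have hi1 : h * h⁻¹ = 1 := Matrix.mul_nonsing_inv _ (Ne.isUnit hhd)
  have hi2 : h⁻¹ * h = 1 := Matrix.nonsing_inv_mul _ (Ne.isUnit hhd)
  have hi1s : h.map σ * h⁻¹.map σ = 1 := by rw [← hmm, hi1, hm1]
  have hi2s : h⁻¹.map σ * h.map σ = 1 := by rw [← hmm, hi2, hm1]
  have hhKs : (h.map σ)ᵀ * j * h.map σ = hᵀ * j * h := by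
    rw [hhK, ← hmapF K, ← hhK, hmm, hmm, hjm, hmt]
  set x := h * h⁻¹.map σ with hx
  have hxh : x * h.map σ = h := by rw [hx, Matrix.mul_assoc, hi2s, mul_one]
  have hxd : x.det ≠ 1 := by
    intro h1
    have := congrArg Matrix.det hxh
    rw [Matrix.det_mul, h1, hdet, hhs] at this
    apply hhd
    have h2 : 2 * h.det = 0 := by linear_combination - this
    simpa using h2
  have hxs : x * x.map σ = 1 := by
    rw [hx, hmm, hmσ, Matrix.mul_assoc, ← Matrix.mul_assoc (h⁻¹.map σ), hi2s, one_mul, hi1]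
  have hxj : xᵀ * j * x = j := by
    have : xᵀ * j * x = (h⁻¹.map σ)ᵀ * (hᵀ * j * h) * h⁻¹.map σ := by
      rw [hx, Matrix.transpose_mul]; simp only [Matrix.mul_assoc]
    rw [this, ← hhKs]
    have h3 : (h⁻¹.map σ)ᵀ * (h.map σ)ᵀ = 1 := by rw [← Matrix.transpose_mul, hi1s, Matrix.transpose_one]
    calc (h⁻¹.map σ)ᵀ * ((h.map σ)ᵀ * j * h.map σ) * h⁻¹.map σ
        = ((h⁻¹.map σ)ᵀ * (h.map σ)ᵀ) * j * (h.map σ * h⁻¹.map σ) := by simp only [Matrix.mul_assoc]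
      _ = j := by rw [h3, hi1s, one_mul, mul_one]
  obtain ⟨γ, ⟨hγu, hγj⟩, hγd, hγx⟩ := horb x ⟨⟨IsUnit.of_mul_eq_one _ hxs, hxj⟩, hxs⟩ hxd
  have hγx' : x * γ.map σ = γ * x₀ := by
    have : IsUnit (γ.map σ).det := by rw [hdet, hγd, map_one]; exact isUnit_one
    rw [hγx, Matrix.mul_assoc, Matrix.nonsing_inv_mul _ this, mul_one]
  obtain ⟨r, hr⟩ : ∃ r, r = h⁻¹ * γ * h₀ := ⟨_, rfl⟩
  have hrs : r.map σ = r := by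
    have h4 : h * r.map σ = γ * h₀ := by
      rw [hr, hmm, hmm, ← Matrix.mul_assoc, ← Matrix.mul_assoc, ← hx, hγx', Matrix.mul_assoc, hh0x]
    calc r.map σ = h⁻¹ * (h * r.map σ) := by rw [← Matrix.mul_assoc, hi2, one_mul]
      _ = r := by rw [h4, hr, Matrix.mul_assoc]
  have hhr : h * r = γ * h₀ := by rw [hr, ← Matrix.mul_assoc, ← Matrix.mul_assoc, hi1, one_mul]
  obtain ⟨R, hR⟩ := hlift r hrs
  refine ⟨R, hinj _ _ ?_⟩
  rw [Matrix.map_mul, Matrix.map_mul, Matrix.transpose_map, hR, hJ, ← hhK]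
  calc rᵀ * (hᵀ * j * h) * r = (h * r)ᵀ * j * (h * r) := by
        rw [Matrix.transpose_mul]; simp only [Matrix.mul_assoc]
    _ = h₀ᵀ * (γᵀ * j * γ) * h₀ := by rw [hhr, Matrix.transpose_mul]; simp only [Matrix.mul_assoc]
    _ = j' := by rw [hγj]

theorem OPback1 {E : Type} [Field E] [CharZero E] (σ : E ≃+* E)
    (j : Matrix (Fin 1) (Fin 1) E) (hjd : j.det ≠ 0) :
    (∃ x₀, (Xj ⇑σ j x₀ ∧ x₀.det ≠ 1) ∧
        ∀ x, Xj ⇑σ j x → x.det ≠ 1 → orbSG ⇑σ j x₀ x) := by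
  have hne : (-1 : E) ≠ 1 := by
    intro h
    have : (2 : E) = 0 := by linear_combination - h
    exact two_ne_zero this
  have hm : (1 : Matrix (Fin 1) (Fin 1) E).map σ = 1 := Matrix.map_one _ (map_zero σ) (map_one σ)
  refine ⟨-1, ⟨⟨⟨isUnit_one.neg, by simp⟩, ?_⟩, ?_⟩, ?_⟩
  · ext a b; fin_cases a; fin_cases b; simp [Matrix.mul_apply]
  · simpa using hne
  · rintro x ⟨⟨_, hx⟩, _⟩ hd
    refine ⟨1, ⟨isUnit_one, by simp⟩, by simp, ?_⟩
    have h1 := congrArg Matrix.det hx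
    rw [Matrix.det_mul, Matrix.det_mul, Matrix.det_transpose] at h1
    have h2 : x.det * x.det = 1 := by
      apply mul_right_cancel₀ hjd; linear_combination h1
    have h3 : x.det = -1 := by
      rcases mul_self_eq_one_iff.1 h2 with h | h
      · exact absurd h hd
      · exact h
    rw [hm]
    rw [Matrix.det_fin_one] at h3
    ext a b; fin_cases a; fin_cases b; simpa using h3

theorem OPback2 {E : Type} [Field E] [CharZero E] (σ : E ≃+* E) (hs : ∀ x, σ (σ x) = x)
    (ι : E) (hι : σ ι = - ι) (hι0 : ι ≠ 0) (s : E) (hσs : σ s = - s) (hs0 : s ≠ 0)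
    (j : Matrix (Fin 2) (Fin 2) E) (hjF : ∀ a b, σ (j a b) = j a b) (hjsym : jᵀ = j)
    (hjd : j.det = - (s * s)) :
    (∃ x₀, (Xj ⇑σ j x₀ ∧ x₀.det ≠ 1) ∧
        ∀ x, Xj ⇑σ j x → x.det ≠ 1 → orbSG ⇑σ j x₀ x) := by
  have h2 : (2 : E) ≠ 0 := two_ne_zero
  have hne : (-1 : E) ≠ 1 := by
    intro h
    have : (2 : E) = 0 := by linear_combination - h
    exact two_ne_zero this
  have h10 : j 1 0 = j 0 1 := congrFun (congrFun hjsym 0) 1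
  have hdet := hjd
  rw [Matrix.det_fin_two, h10] at hdet
  have ha : j 0 0 ≠ 0 := by
    intro h0
    rw [h0] at hdet
    have h3 : j 0 1 * j 0 1 = s * s := by linear_combination - hdet
    have h4 := hjF 0 1
    rcases mul_self_eq_mul_self_iff.1 h3 with h | h
    · rw [h, hσs] at h4
      exact mul_ne_zero h2 hs0 (by linear_combination - h4)
    · rw [h, map_neg, hσs] at h4
      exact mul_ne_zero h2 hs0 (by linear_combination h4)
  have hmm : ∀ (A B : Matrix (Fin 2) (Fin 2) E), (A * B).map σ = A.map σ * B.map σ := by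
    intro A B; exact Matrix.map_mul
  have hm1 : (1 : Matrix (Fin 2) (Fin 2) E).map σ = 1 := Matrix.map_one _ (map_zero σ) (map_one σ)
  obtain ⟨w, hw⟩ : ∃ w : Matrix (Fin 2) (Fin 2) E, w = !![0, 1; 1, 0] := ⟨_, rfl⟩
  have hww : w * w = 1 := by rw [hw, Matrix.one_fin_two]; simp
  have hwσ : w.map σ = w := by rw [hw]; ext a b; fin_cases a <;> fin_cases b <;> simp
  obtain ⟨P, hP⟩ : ∃ P : Matrix (Fin 2) (Fin 2) E,
    P = !![s - j 0 1, - s - j 0 1; j 0 0, j 0 0] := ⟨_, rfl⟩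
  have hPd : P.det ≠ 0 := by
    rw [hP, Matrix.det_fin_two_of]
    intro h
    exact mul_ne_zero (mul_ne_zero h2 hs0) ha (by linear_combination h)
  have hPσ : P.map σ = P * w := by
    rw [hP, hw]
    ext a b; fin_cases a <;> fin_cases b <;> simp [hσs, hjF]
  obtain ⟨m, hm⟩ : ∃ m : E, m = - 2 * j 0 0 * (s * s) := ⟨_, rfl⟩
  have hm0 : m ≠ 0 := by
    rw [hm]; exact mul_ne_zero (mul_ne_zero (neg_ne_zero.2 h2) ha) (mul_ne_zero hs0 hs0)
  have hPj : Pᵀ * j * P = m • w := by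
    rw [hP, hw, hm, Matrix.eta_fin_two j, h10]
    ext a b; fin_cases a <;> fin_cases b <;> simp [Matrix.mul_apply, Fin.sum_univ_two]
    · linear_combination (j 0 0) * hdet
    · linear_combination (j 0 0) * hdet
    · linear_combination (j 0 0) * hdet
    · linear_combination (j 0 0) * hdet
  obtain ⟨Q, hQ⟩ : ∃ Q, Q = P⁻¹ := ⟨_, rfl⟩
  have hPQ : P * Q = 1 := by rw [hQ]; exact Matrix.mul_nonsing_inv _ (Ne.isUnit hPd)
  have hQP : Q * P = 1 := by rw [hQ]; exact Matrix.nonsing_inv_mul _ (Ne.isUnit hPd)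
  have hPQt : Qᵀ * Pᵀ = 1 := by rw [← Matrix.transpose_mul, hPQ, Matrix.transpose_one]
  have hQσ : Q.map σ = w * Q := by
    have h3 : Q.map σ * (P * w) = 1 := by rw [← hPσ, ← hmm, hQP, hm1]
    calc Q.map σ = Q.map σ * (P * (w * w) * Q) := by rw [hww, mul_one, hPQ, mul_one]
      _ = (Q.map σ * (P * w)) * (w * Q) := by simp only [Matrix.mul_assoc]
      _ = w * Q := by rw [h3, one_mul]
  have hjQ : j = Qᵀ * (m • w) * Q := by
    rw [← hPj]
    calc j = (Qᵀ * Pᵀ) * j * (P * Q) := by rw [hPQt, hPQ, one_mul, mul_one]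
      _ = _ := by simp only [Matrix.mul_assoc]
  have hG : ∀ y : Matrix (Fin 2) (Fin 2) E, yᵀ * w * y = w →
      (P * y * Q)ᵀ * j * (P * y * Q) = j := by
    intro y hy
    calc (P * y * Q)ᵀ * j * (P * y * Q) = Qᵀ * (yᵀ * (Pᵀ * j * P) * y) * Q := by
          simp only [Matrix.transpose_mul, Matrix.mul_assoc]
      _ = Qᵀ * (m • (yᵀ * w * y)) * Q := by
          rw [hPj, Matrix.mul_smul, Matrix.smul_mul]
      _ = j := by rw [hy, ← hjQ]
  have hdd : ∀ y : Matrix (Fin 2) (Fin 2) E, (P * y * Q).det = y.det := by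
    intro y
    rw [Matrix.det_mul, Matrix.det_mul]
    have := congrArg Matrix.det hPQ
    rw [Matrix.det_mul, Matrix.det_one] at this
    linear_combination y.det * this
  have hmapy : ∀ y : Matrix (Fin 2) (Fin 2) E, (P * y * Q).map σ = P * (w * y.map σ * w) * Q := by
    intro y
    rw [hmm, hmm, hPσ, hQσ]; simp only [Matrix.mul_assoc]
  have hprod : ∀ y z : Matrix (Fin 2) (Fin 2) E, (P * y * Q) * (P * z * Q) = P * (y * z) * Q := by
    intro y z
    calc _ = P * y * (Q * P) * z * Q := by simp only [Matrix.mul_assoc]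
      _ = _ := by rw [hQP, mul_one]; simp only [Matrix.mul_assoc]
  have hwt : wᵀ = w := by rw [hw]; ext a b; fin_cases a <;> fin_cases b <;> simp
  have hwd : w.det = -1 := by rw [hw, Matrix.det_fin_two_of]; ring
  have hx0 : (P * w * Q) * (P * w * Q).map σ = 1 := by
    rw [hmapy, hprod, hwσ, hww, one_mul, hww, mul_one, hPQ]
  refine ⟨P * w * Q, ⟨⟨⟨IsUnit.of_mul_eq_one _ hx0, hG w ?_⟩, hx0⟩, ?_⟩, ?_⟩
  · rw [hwt, hww, one_mul]
  · rw [hdd, hwd]; exact hne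
  · rintro x ⟨⟨_, hx⟩, hxs⟩ hd
    have h1 := congrArg Matrix.det hx
    rw [Matrix.det_mul, Matrix.det_mul, Matrix.det_transpose] at h1
    have hjd0 : j.det ≠ 0 := by rw [hjd]; exact neg_ne_zero.2 (mul_ne_zero hs0 hs0)
    have h3 : x.det * x.det = 1 := by
      apply mul_right_cancel₀ hjd0; linear_combination h1
    have h4 : x.det = -1 := by
      rcases mul_self_eq_one_iff.1 h3 with h | h
      · exact absurd h hd
      · exact h
    obtain ⟨y, hy⟩ : ∃ y, y = Q * x * P := ⟨_, rfl⟩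
    have hxy : x = P * y * Q := by
      rw [hy]
      calc x = (P * Q) * x * (P * Q) := by rw [hPQ, one_mul, mul_one]
        _ = _ := by simp only [Matrix.mul_assoc]
    have hyd : y.det = -1 := by rw [← hdd, ← hxy, h4]
    have hyw : yᵀ * w * y = w := by
      have h5 : m • (yᵀ * w * y) = m • w := by
        calc m • (yᵀ * w * y) = yᵀ * (m • w) * y := by rw [Matrix.mul_smul, Matrix.smul_mul]
          _ = Pᵀ * (xᵀ * (Qᵀ * (m • w) * Q) * x) * P := by
            rw [hy]; simp only [Matrix.transpose_mul, Matrix.mul_assoc]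
          _ = m • w := by rw [← hjQ, hx, hPj]
      exact smul_right_injective _ hm0 h5
    have hyσ : y * (w * y.map σ * w) = 1 := by
      rw [hxy, hmapy, hprod] at hxs
      generalize y * (w * y.map σ * w) = z at hxs
      calc z = (Q * P) * z * (Q * P) := by rw [hQP, one_mul, mul_one]
        _ = Q * (P * z * Q) * P := by simp only [Matrix.mul_assoc]
        _ = 1 := by rw [hxs, mul_one, hQP]
    have e00 := congrFun (congrFun hyw 0) 0
    have e01 := congrFun (congrFun hyw 0) 1
    have e11 := congrFun (congrFun hyw 1) 1
    simp [hw, Matrix.mul_apply, Fin.sum_univ_two] at e00 e01 e11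
    rw [Matrix.det_fin_two] at hyd
    have hqr : y 0 1 * y 1 0 = 1 := by
      apply mul_left_cancel₀ h2
      linear_combination e01 - hyd
    have hq0 : y 0 1 ≠ 0 := left_ne_zero_of_mul_eq_one hqr
    have hr0 : y 1 0 ≠ 0 := right_ne_zero_of_mul_eq_one hqr
    have hp : y 0 0 = 0 := by
      apply mul_right_cancel₀ (mul_ne_zero h2 hr0)
      linear_combination e00
    have ht : y 1 1 = 0 := by
      apply mul_right_cancel₀ (mul_ne_zero h2 hq0)
      linear_combination e11
    have hZ : w * y.map σ * w = !![σ (y 1 1), σ (y 1 0); σ (y 0 1), σ (y 0 0)] := by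
      rw [hw, Matrix.eta_fin_two (y.map σ)]
      ext a b; fin_cases a <;> fin_cases b <;> simp [Matrix.mul_apply, Fin.sum_univ_two]
    have f00 := congrFun (congrFun hyσ 0) 0
    rw [hZ, Matrix.mul_apply, Fin.sum_univ_two] at f00
    simp [hp] at f00
    have hu : ∃ u : E, u ≠ 0 ∧ y 0 1 * σ u = u := by
      by_cases hq : y 0 1 = -1
      · exact ⟨ι, hι0, by rw [hq, hι]; ring⟩
      · refine ⟨1 + y 0 1, fun h => hq (by linear_combination h), ?_⟩
        rw [map_add, map_one]; linear_combination f00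
    obtain ⟨u, hu0, hu⟩ := hu
    have hσu : σ u ≠ 0 := by simpa using hu0
    obtain ⟨D, hD⟩ : ∃ D : Matrix (Fin 2) (Fin 2) E, D = !![u, 0; 0, u⁻¹] := ⟨_, rfl⟩
    have hDd : D.det = 1 := by rw [hD, Matrix.det_fin_two_of]; field_simp; ring
    have hγd : (P * D * Q).det = 1 := by rw [hdd, hDd]
    refine ⟨P * D * Q, ⟨?_, hG D ?_⟩, hγd, ?_⟩
    · rw [Matrix.isUnit_iff_isUnit_det, hγd]; exact isUnit_one
    · rw [hD, hw]; ext a b; fin_cases a <;> fin_cases b <;> simp [Matrix.mul_apply, Fin.sum_univ_two, hu0]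
    · have hγσ : IsUnit ((P * D * Q).map σ).det := by
        have : ((P * D * Q).map σ).det = σ (P * D * Q).det := (RingEquiv.map_det σ _).symm
        rw [this, hγd, map_one]; exact isUnit_one
      have hkey : y * (w * D.map σ * w) = D * w := by
        have h6 : y * w * D.map σ = D := by
          have hDσ : D.map σ = !![σ u, 0; 0, (σ u)⁻¹] := by
            rw [hD]; ext a b; fin_cases a <;> fin_cases b <;> simp
          have h7 : y 1 0 * (σ u)⁻¹ = u⁻¹ := by
            field_simp
            linear_combination (- y 1 0) * hu + σ u * hqr
          rw [Matrix.eta_fin_two y, hp, ht, hw, hDσ, hD]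
          ext a b; fin_cases a <;> fin_cases b <;>
            simp [Matrix.mul_apply, Fin.sum_univ_two, hu, h7]
        calc y * (w * D.map σ * w) = (y * w * D.map σ) * w := by simp only [Matrix.mul_assoc]
          _ = _ := by rw [h6]
      have hx' : x * (P * D * Q).map σ = (P * D * Q) * (P * w * Q) := by
        rw [hxy, hmapy, hprod, hprod, hkey]
      rw [← hx', Matrix.mul_assoc, Matrix.mul_nonsing_inv _ hγσ, mul_one]

/-- In the orthogonal case, `X^j \ SX^j` is a single `SG^j(E)`-orbit if
and only if either `n = 1`, or `n = 2` and `det j ∈ -ι²·F^{×2}`.  (`F` is the fixed field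
of `σ`, and `ι ∈ E \ F` satisfies `ι² ∈ F`.) -/
theorem stmt_12 (p : ℕ) [Fact p.Prime]
    (E : Type) [Field E] [Algebra ℚ_[p] E] [FiniteDimensional ℚ_[p] E]
    (σ : E ≃ₐ[ℚ_[p]] E) (hσ1 : σ ≠ 1) (hσ2 : σ * σ = 1)
    (ι : E) (hι1 : σ ι ≠ ι) (hι2 : σ (ι * ι) = ι * ι)
    (n : ℕ) (hn : 1 ≤ n)
    (j : Matrix (Fin n) (Fin n) E)
    (hjF : ∀ a b, σ (j a b) = j a b) (hjU : IsUnit j) (hjsym : jᵀ = j) :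
    (∃ x₀, (Xj ⇑σ j x₀ ∧ x₀.det ≠ 1) ∧
        ∀ x, Xj ⇑σ j x → x.det ≠ 1 → orbSG ⇑σ j x₀ x) ↔
      (n = 1 ∨ (n = 2 ∧ ∃ c, σ c = c ∧ c ≠ 0 ∧ j.det = -(ι * ι * (c * c)))) := by
  constructor
  · exact OPforward p E σ hσ2 ι hι1 hι2 n hn j hjF hjU hjsym
  · have hchar : CharZero E := charZero_of_injective_algebraMap (algebraMap ℚ_[p] E).injective
    have hs : ∀ x, σ (σ x) = x := fun x => by
      rw [← AlgEquiv.mul_apply, hσ2]; rfl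
    have hι : σ ι = - ι := by
      rw [map_mul] at hι2
      rcases mul_self_eq_mul_self_iff.1 hι2 with h | h
      · exact absurd h hι1
      · exact h
    have hι0 : ι ≠ 0 := by rintro rfl; simp at hι1
    have hjd : j.det ≠ 0 := ((Matrix.isUnit_iff_isUnit_det j).1 hjU).ne_zero
    rintro (rfl | ⟨rfl, c, hc, hc0, hd⟩)
    · exact OPback1 (σ : E ≃+* E) j hjd
    · exact OPback2 (σ : E ≃+* E) hs ι hι hι0 (ι * c)
        (by change σ (ι * c) = _; rw [map_mul, hι, hc]; ring) (mul_ne_zero hι0 hc0) j hjF hjsym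
        (by rw [hd]; ring)
end
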